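/- arXiv:1405.1000 — 3 statements merged into one kernel-verified Lean document; each statement's English description precedes it below -/
import Mathlib

section
/- Let S be a compact connected surface and f ∈ Homeo₀(S). If f is a distortion element of the group Homeo₀(S), then f is non-spreading, i.e. diam(f̃ⁿ(D))/n → 0 as n → +∞. -/
open Filter Topology Set

/-- `f` is isotopic to the identity through homeomorphisms. -/
def IsotopicToId {X : Type*} [TopologicalSpace X] (f : X ≃ₜ X) : Prop :=
  ∃ F : unitInterval → X ≃ₜ X,
    Continuous (fun p : unitInterval × X => F p.1 p.2) ∧
    F 0 = Homeomorph.refl X ∧ F 1 = f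

/-- The group of homeomorphisms of `X`, with `f * g = f ∘ g`. -/
noncomputable instance {X : Type*} [TopologicalSpace X] : Group (X ≃ₜ X) where
  mul f g := g.trans f
  one := Homeomorph.refl X
  inv := Homeomorph.symm
  mul_assoc f g h := rfl
  one_mul f := Homeomorph.ext fun _ => rfl
  mul_one f := Homeomorph.ext fun _ => rfl
  inv_mul_cancel f := Homeomorph.ext fun x => f.symm_apply_apply x

/-- The word length of `g` with respect to `S`. -/
noncomputable def wordLength {G : Type*} [Group G] (S : Set G) (g : G) : ℕ :=
  sInf {n | ∃ l : List G, l.length = n ∧ (∀ x ∈ l, x ∈ S ∨ x⁻¹ ∈ S) ∧ l.prod = g}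

/-- `g` is a distortion element of the subgroup of `G` whose carrier is the subset `H`. -/
def IsDistortionElementIn {G : Type*} [Group G] (H : Set G) (g : G) : Prop :=
  ∃ S : Finset G, (S : Set G) ⊆ H ∧ g ∈ Subgroup.closure (S : Set G) ∧
    Tendsto (fun n : ℕ => (wordLength (S : Set G) (g ^ n) : ℝ) / n) atTop (nhds 0)

/-- `γ` is a deck transformation of the covering `p : Scov → S`. -/
def IsDeck {S Scov : Type*} [TopologicalSpace S] [TopologicalSpace Scov]
    (p : Scov → S) (γ : Scov ≃ₜ Scov) : Prop :=
  p ∘ γ = p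

/-- `D` is a fundamental domain for the action of the deck transformation group of
`p : Scov → S`: a compact connected set projecting onto `S`, whose interior is disjoint
from the interior of each of its translates under a nontrivial deck transformation. -/
def IsFundDomain {S Scov : Type*} [TopologicalSpace S] [TopologicalSpace Scov]
    (p : Scov → S) (D : Set Scov) : Prop :=
  IsCompact D ∧ IsConnected D ∧ p '' D = univ ∧
    ∀ γ : Scov ≃ₜ Scov, IsDeck p γ → γ ≠ Homeomorph.refl Scov →
      interior D ∩ interior (γ '' D) = ∅

/-- `ft` is the distinguished lift of `f` to the universal cover: a lift which commutes
with every deck transformation (this characterizes the time-one map of the lift, starting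
at the identity, of an isotopy from the identity to `f`). -/
def IsGoodLift {S Scov : Type*} [TopologicalSpace S] [TopologicalSpace Scov]
    (p : Scov → S) (f : S ≃ₜ S) (ft : Scov ≃ₜ Scov) : Prop :=
  p ∘ ft = f ∘ p ∧ ∀ γ : Scov ≃ₜ Scov, IsDeck p γ → (γ : Scov → Scov) ∘ ft = ft ∘ γ

theorem aux_lpc {S Scov : Type*} [TopologicalSpace S] [TopologicalSpace Scov]
    [LocallyPathConnectedSpace S] (p : Scov → S) (hp : IsCoveringMap p) :
    LocallyPathConnectedSpace Scov := by
  have h := hp.isLocalHomeomorph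
  choose e he _ using h
  letI : ChartedSpace S Scov :=
    { atlas := Set.range e
      chartAt := e
      mem_chart_source := he
      chart_mem_atlas := fun x => ⟨x, rfl⟩ }
  exact ChartedSpace.locallyPathConnectedSpace S Scov

theorem aux_lift_id {S Scov : Type*} [TopologicalSpace S] [TopologicalSpace Scov]
    [LocallyPathConnectedSpace Scov] [SimplyConnectedSpace Scov]
    (p : Scov → S) (hp : IsCoveringMap p) (x y : Scov) (hxy : p y = p x) :
    ∃ g : C(Scov, Scov), g x = y ∧ p ∘ g = p :=
  (hp.existsUnique_continuousMap_lifts ⟨p, hp.continuous⟩ x y hxy).exists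

/-- a continuous lift of the identity is a deck transformation -/
theorem aux_deck {S Scov : Type*} [TopologicalSpace S] [TopologicalSpace Scov]
    [LocallyPathConnectedSpace Scov] [SimplyConnectedSpace Scov]
    (p : Scov → S) (hp : IsCoveringMap p) (g : Scov → Scov) (hg : Continuous g)
    (hpg : p ∘ g = p) : ∃ γ : Scov ≃ₜ Scov, IsDeck p γ ∧ ∀ x, γ x = g x := by
  obtain ⟨x0⟩ : Nonempty Scov := inferInstance
  obtain ⟨k, hk, hpk⟩ := aux_lift_id p hp (g x0) x0 (congrFun hpg x0).symm
  have h1 : (k : Scov → Scov) ∘ g = id := by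
    refine hp.eq_of_comp_eq (k.continuous.comp hg) continuous_id ?_ x0 hk
    rw [← Function.comp_assoc, hpk, hpg]; rfl
  have h2 : g ∘ (k : Scov → Scov) = id := by
    refine hp.eq_of_comp_eq (hg.comp k.continuous) continuous_id ?_ (g x0) ?_
    · rw [← Function.comp_assoc, hpg, hpk]; rfl
    · simp [hk]
  exact ⟨{ toFun := g, invFun := k, left_inv := congrFun h1, right_inv := congrFun h2,
           continuous_toFun := hg, continuous_invFun := k.continuous }, hpg, fun _ => rfl⟩

theorem aux_trans {S Scov : Type*} [TopologicalSpace S] [TopologicalSpace Scov]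
    [LocallyPathConnectedSpace Scov] [SimplyConnectedSpace Scov]
    (p : Scov → S) (hp : IsCoveringMap p) (x y : Scov) (hxy : p y = p x) :
    ∃ γ : Scov ≃ₜ Scov, IsDeck p γ ∧ γ x = y := by
  obtain ⟨g, hg, hpg⟩ := aux_lift_id p hp x y hxy
  obtain ⟨γ, h1, h2⟩ := aux_deck p hp g g.continuous hpg
  exact ⟨γ, h1, by rw [h2, hg]⟩

/-- continuous lifts at bounded distance from the identity -/
def AuxLift {S Scov : Type*} [TopologicalSpace S] [MetricSpace Scov]
    (p : Scov → S) (h : S ≃ₜ S) (C : ℝ) : Prop :=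
  ∃ g : Scov → Scov, Continuous g ∧ (∀ x, p (g x) = h (p x)) ∧ ∀ x, dist (g x) x ≤ C

theorem aux_inv {X : Type*} [TopologicalSpace X] (h : X ≃ₜ X) (hh : IsotopicToId h) :
    IsotopicToId h⁻¹ := by
  obtain ⟨F, hF, h0, h1⟩ := hh
  refine ⟨fun t => F (unitInterval.symm t) * h⁻¹, ?_, ?_, ?_⟩
  · have : Continuous (fun q : unitInterval × X => (unitInterval.symm q.1, h.symm q.2)) := by
      fun_prop
    exact hF.comp this
  · simp only [unitInterval.symm_zero, h1, mul_inv_cancel]; rfl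
  · simp only [unitInterval.symm_one, h0]; exact one_mul (h⁻¹)

theorem aux_exists {S Scov : Type*} [TopologicalSpace S] [MetricSpace Scov]
    [LocallyPathConnectedSpace Scov] [SimplyConnectedSpace Scov]
    (p : Scov → S) (hp : IsCoveringMap p)
    (hinv : ∀ γ : Scov ≃ₜ Scov, IsDeck p γ → Isometry γ)
    (D : Set Scov) (hD : IsCompact D) (hDp : p '' D = univ)
    (h : S ≃ₜ S) (hh : IsotopicToId h) : ∃ C : ℝ, AuxLift p h C := by
  obtain ⟨F, hF, h0, h1⟩ := hh
  let H : C(unitInterval × Scov, S) :=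
    ⟨fun q => F q.1 (p q.2), hF.comp (continuous_fst.prodMk (hp.continuous.comp continuous_snd))⟩
  have H0 : ∀ a, H (0, a) = p (ContinuousMap.id Scov a) := by
    intro a
    change F 0 (p a) = p a
    rw [h0]; rfl
  let L := hp.liftHomotopy H (ContinuousMap.id Scov) H0
  have hL : ∀ t a, p (L (t, a)) = F t (p a) := fun t a =>
    congrFun (hp.liftHomotopy_lifts H (ContinuousMap.id Scov) H0) (t, a)
  have hL0 : ∀ a, L (0, a) = a := fun a =>
    hp.liftHomotopy_zero H (ContinuousMap.id Scov) H0 a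
  have hc : ∀ γ : Scov ≃ₜ Scov, IsDeck p γ → ∀ a, L (1, γ a) = γ (L (1, a)) := by
    intro γ hγ a
    have hγ' : ∀ x, p (γ x) = p x := congrFun hγ
    have := hp.eq_of_comp_eq (A := unitInterval) (g₁ := fun t => L (t, γ a))
      (g₂ := fun t => γ (L (t, a))) (by fun_prop) (by fun_prop)
      (by ext t; simp only [Function.comp_apply, hL, hγ']) 0 (by simp only [hL0])
    exact congrFun this 1
  have hcont : Continuous (fun x => L (1, x)) := by fun_prop
  have hcd : Continuous (fun x => dist (L (1, x)) x) := hcont.dist continuous_id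
  obtain ⟨C, hC⟩ := (hD.image hcd).bddAbove
  refine ⟨C, fun x => L (1, x), hcont, fun x => by rw [hL, h1], fun x => ?_⟩
  obtain ⟨d, hd, hdx⟩ : p x ∈ p '' D := hDp ▸ mem_univ _
  obtain ⟨γ, hγ, rfl⟩ := aux_trans p hp d x hdx.symm
  simp only [hc γ hγ]
  rw [(hinv γ hγ).dist_eq]
  exact hC ⟨d, hd, rfl⟩

theorem aux_list {S Scov : Type*} [TopologicalSpace S] [MetricSpace Scov]
    (p : Scov → S) (M : ℝ) (l : List (S ≃ₜ S)) (hl : ∀ h ∈ l, AuxLift p h M) :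
    AuxLift p l.prod (l.length * M) := by
  induction l with
  | nil => exact ⟨id, continuous_id, fun x => rfl, fun x => by simp⟩
  | cons a l ih =>
    obtain ⟨g, hg, hg1, hg2⟩ := ih fun h hh => hl h (List.mem_cons_of_mem _ hh)
    obtain ⟨k, hk, hk1, hk2⟩ := hl a List.mem_cons_self
    refine ⟨k ∘ g, hk.comp hg, fun x => ?_, fun x => ?_⟩
    · rw [List.prod_cons, Function.comp_apply, hk1, hg1]; rfl
    · have := dist_triangle (k (g x)) (g x) x
      have := hk2 (g x)
      have := hg2 x
      simp only [Function.comp_apply, List.length_cons]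
      push_cast
      linarith

theorem aux_word {G : Type*} [Group G] (S : Set G) (g : G) (hg : g ∈ Subgroup.closure S) :
    ∃ l : List G, l.length = wordLength S g ∧ (∀ x ∈ l, x ∈ S ∨ x⁻¹ ∈ S) ∧ l.prod = g := by
  have hne : {n | ∃ l : List G, l.length = n ∧ (∀ x ∈ l, x ∈ S ∨ x⁻¹ ∈ S) ∧
      l.prod = g}.Nonempty := by
    rw [← Subgroup.mem_toSubmonoid, Subgroup.closure_toSubmonoid] at hg
    obtain ⟨l, h1, h2⟩ := Submonoid.exists_list_of_mem_closure hg
    exact ⟨l.length, l, rfl, fun x hx => by simpa using h1 x hx, h2⟩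
  exact Nat.sInf_mem hne

/-- **Proposition.** On a compact connected surface `S`, any distortion element of
`Homeo₀(S)` is non-spreading: `diam(f̃ⁿ(D))/n → 0`. -/
theorem nonspreading_of_distortion
    {S Scov : Type*} [TopologicalSpace S] [CompactSpace S] [ConnectedSpace S]
    [ChartedSpace (EuclideanHalfSpace 2) S]
    [MetricSpace Scov] [SimplyConnectedSpace Scov]
    (p : Scov → S) (hp : IsCoveringMap p)
    (hinv : ∀ γ : Scov ≃ₜ Scov, IsDeck p γ → Isometry γ)
    (D : Set Scov) (hD : IsFundDomain p D)
    (f : S ≃ₜ S) (hf : IsotopicToId f)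
    (ft : Scov ≃ₜ Scov) (hft : IsGoodLift p f ft)
    (hdist : IsDistortionElementIn {h : S ≃ₜ S | IsotopicToId h} f) :
    Tendsto (fun n : ℕ => Metric.diam ((⇑ft)^[n] '' D) / n) atTop (nhds 0) := by
  obtain ⟨T, hTH, hfT, hlim⟩ := hdist
  obtain ⟨hDc, -, hDp, -⟩ := hD
  haveI : LocallyPathConnectedSpace S :=
    ChartedSpace.locallyPathConnectedSpace (EuclideanHalfSpace 2) S
  haveI : LocallyPathConnectedSpace Scov := aux_lpc p hp
  have hex : ∀ h : S ≃ₜ S, ∃ C : ℝ, IsotopicToId h → AuxLift p h C := by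
    intro h
    by_cases hh : IsotopicToId h
    · obtain ⟨C, hC⟩ := aux_exists p hp hinv D hDc hDp h hh
      exact ⟨C, fun _ => hC⟩
    · exact ⟨0, fun h' => absurd h' hh⟩
  choose C hC using hex
  have hmono : ∀ (h : S ≃ₜ S) (a b : ℝ), a ≤ b → AuxLift p h a → AuxLift p h b := by
    rintro h a b hab ⟨g, h1, h2, h3⟩
    exact ⟨g, h1, h2, fun x => (h3 x).trans hab⟩
  let M : ℝ := ∑ s ∈ T, (|C s| + |C s⁻¹|)
  have hM0 : 0 ≤ M := Finset.sum_nonneg fun s _ => by positivity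
  have hMs : ∀ s ∈ T, |C s| + |C s⁻¹| ≤ M := fun s hs =>
    Finset.single_le_sum (f := fun s => |C s| + |C s⁻¹|) (fun s _ => by positivity) hs
  have hgen : ∀ h : S ≃ₜ S, (h ∈ (T : Set (S ≃ₜ S)) ∨ h⁻¹ ∈ (T : Set (S ≃ₜ S))) →
      AuxLift p h M := by
    rintro h (hh | hh)
    · refine hmono h (C h) M ?_ (hC h (hTH hh))
      have := hMs h hh
      linarith [le_abs_self (C h), abs_nonneg (C h⁻¹)]
    · have hi : IsotopicToId h := by simpa using aux_inv _ (hTH hh)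
      refine hmono h (C h) M ?_ (hC h hi)
      have := hMs _ hh
      rw [inv_inv] at this
      linarith [le_abs_self (C h), abs_nonneg (C h⁻¹)]
  have hiter : ∀ n : ℕ, ∀ x, p (ft^[n] x) = (f ^ n) (p x) := by
    intro n
    induction n with
    | zero => intro x; rfl
    | succ n ih =>
      intro x
      rw [Function.iterate_succ_apply, ih, pow_succ]
      have := congrFun hft.1 x
      simp only [Function.comp_apply] at this
      rw [this]; rfl
  have hbound : ∀ n : ℕ, Metric.diam (ft^[n] '' D) ≤
      Metric.diam D + 2 * M * wordLength (T : Set (S ≃ₜ S)) (f ^ n) := by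
    intro n
    obtain ⟨l, hl1, hl2, hl3⟩ := aux_word (T : Set (S ≃ₜ S)) (f ^ n) (Subgroup.pow_mem _ hfT n)
    obtain ⟨g, hg, hg1, hg2⟩ := aux_list p M l fun h hh => hgen h (hl2 h hh)
    rw [hl3] at hg1
    rw [hl1] at hg2
    have hright : ∀ y, ft^[n] (ft.symm^[n] y) = y :=
      Function.RightInverse.iterate (fun y => ft.apply_symm_apply y) n
    have hleft : ∀ y, ft.symm^[n] (ft^[n] y) = y :=
      Function.LeftInverse.iterate (fun y => ft.symm_apply_apply y) n
    obtain ⟨γ, hγ, hγ'⟩ := aux_deck p hp (g ∘ ft.symm^[n])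
      (hg.comp (ft.symm.continuous.iterate n)) (by
        ext x
        simp only [Function.comp_apply]
        rw [hg1, ← hiter, hright])
    have hd : ∀ x y, dist (ft^[n] x) (ft^[n] y) = dist (g x) (g y) := by
      intro x y
      rw [← (hinv γ hγ).dist_eq, hγ', hγ']
      simp only [Function.comp_apply, hleft]
    have h0 : 0 ≤ 2 * M * wordLength (T : Set (S ≃ₜ S)) (f ^ n) := by positivity
    refine Metric.diam_le_of_forall_dist_le (add_nonneg Metric.diam_nonneg h0) ?_
    rintro _ ⟨x, hx, rfl⟩ _ ⟨y, hy, rfl⟩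
    rw [hd]
    have h1 := dist_triangle4 (g x) x y (g y)
    have h2 := Metric.dist_le_diam_of_mem hDc.isBounded hx hy
    have h3 := hg2 x
    have h4 := hg2 y
    rw [dist_comm] at h4
    linarith
  have hup : Tendsto (fun n : ℕ => Metric.diam D / (n : ℝ) +
      2 * M * ((wordLength (T : Set (S ≃ₜ S)) (f ^ n) : ℝ) / n)) atTop (nhds 0) := by
    simpa using (tendsto_const_div_atTop_nhds_zero_nat (Metric.diam D)).add
      (hlim.const_mul (2 * M))
  refine squeeze_zero (fun n => div_nonneg Metric.diam_nonneg n.cast_nonneg) (fun n => ?_) hup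
  rw [← mul_div_assoc, ← add_div]
  exact div_le_div_of_nonneg_right (hbound n) n.cast_nonneg
end

section
/- Let (f_n)_{n ≥ 1} be a sequence of homeomorphisms of ℝ^d, each supported in the closed unit ball. Then there exists a finite set 𝒢 of compactly supported homeomorphisms of ℝ^d such that: (1) #𝒢 ≤ 5; (2) every f_n belongs to the subgroup generated by 𝒢; (3) for every n ≥ 1, l_𝒢(f_n) ≤ 14·log(n) + 14, where l_𝒢(h) is the minimal number of factors needed to write h as a product of elements of 𝒢 ∪ 𝒢⁻¹. The same statement holds for homeomorphisms of the half-space H^d = {x ∈ ℝ^d : x₁ ≥ 0} supported in the unit half-ball, with 𝒢 a finite set of compactly supported homeomorphisms of H^d. -/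
open Filter Topology Set

/-- The support of a homeomorphism: the closure of the set of non-fixed points. -/
def homeoSupport {X : Type*} [TopologicalSpace X] (g : X ≃ₜ X) : Set X :=
  closure {x | g x ≠ x}

/-- The half-space `H^d = {x ∈ ℝ^d | x₁ ≥ 0}`. -/
abbrev HalfSpace (d : ℕ) [NeZero d] : Type :=
  {x : EuclideanSpace ℝ (Fin d) // 0 ≤ x 0}


section WLsec
variable {G : Type*} [Group G]

def WL (S : Set G) (N : ℕ) (g : G) : Prop :=
  ∃ l : List G, l.length ≤ N ∧ (∀ x ∈ l, x ∈ S ∨ x⁻¹ ∈ S) ∧ l.prod = g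

theorem WL.mul {S : Set G} {N M : ℕ} {g g' : G} (h : WL S N g) (h' : WL S M g') :
    WL S (N + M) (g * g') := by
  obtain ⟨l, h1, h2, h3⟩ := h
  obtain ⟨l', h1', h2', h3'⟩ := h'
  refine ⟨l ++ l', by simp; omega, ?_, by simp [h3, h3']⟩
  intro x hx
  rcases List.mem_append.1 hx with hx | hx
  · exact h2 x hx
  · exact h2' x hx

theorem WL.inv {S : Set G} {N : ℕ} {g : G} (h : WL S N g) : WL S N g⁻¹ := by
  obtain ⟨l, h1, h2, h3⟩ := h
  refine ⟨(l.map (·⁻¹)).reverse, by simpa using h1, ?_, by rw [← h3, List.prod_inv_reverse]⟩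
  intro x hx
  simp only [List.mem_reverse, List.mem_map] at hx
  obtain ⟨y, hy, rfl⟩ := hx
  rw [inv_inv]
  exact (h2 y hy).symm

theorem WL.gen {S : Set G} {g : G} (h : g ∈ S) : WL S 1 g :=
  ⟨[g], by simp, by simp [h], by simp⟩

theorem WL.one {S : Set G} : WL S 0 1 := ⟨[], by simp, by simp, by simp⟩

theorem WL.mono {S : Set G} {N M : ℕ} {g : G} (h : WL S N g) (hNM : N ≤ M) : WL S M g := by
  obtain ⟨l, h1, h2, h3⟩ := h
  exact ⟨l, h1.trans hNM, h2, h3⟩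

theorem WL.pow {S : Set G} {g : G} (h : g ∈ S) (m : ℕ) : WL S m (g ^ m) := by
  induction m with
  | zero => simpa using WL.one
  | succ k ih => rw [pow_succ]; exact ih.mul (WL.gen h)

theorem WL.map {G' : Type*} [Group G'] {S : Set G} {N : ℕ} {g : G} (ρ : G →* G')
    (h : WL S N g) : WL (ρ '' S) N (ρ g) := by
  obtain ⟨l, h1, h2, h3⟩ := h
  refine ⟨l.map ρ, by simpa using h1, ?_, by rw [← h3, map_list_prod]⟩
  intro x hx
  obtain ⟨y, hy, rfl⟩ := List.mem_map.1 hx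
  rcases h2 y hy with h | h
  · exact Or.inl ⟨y, h, rfl⟩
  · exact Or.inr ⟨y⁻¹, h, map_inv ρ y⟩

theorem WL.wordLength_le {S : Set G} {N : ℕ} {g : G} (h : WL S N g) : wordLength S g ≤ N := by
  obtain ⟨l, h1, h2, h3⟩ := h
  exact le_trans (Nat.sInf_le ⟨l, rfl, h2, h3⟩) h1

theorem WL.mem_closure {S : Set G} {N : ℕ} {g : G} (h : WL S N g) :
    g ∈ Subgroup.closure S := by
  obtain ⟨l, h1, h2, h3⟩ := h
  rw [← h3]
  apply Subgroup.list_prod_mem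
  intro x hx
  rcases h2 x hx with h | h
  · exact Subgroup.subset_closure h
  · exact (Subgroup.inv_mem_iff _).1 (Subgroup.subset_closure h)

def Wd (a b : G) (n : ℕ) : G :=
  if _h : n ≤ 1 then 1 else (if n % 2 = 0 then a else b) * Wd a b (n / 2)
termination_by n
decreasing_by omega

theorem Wd_one (a b : G) : Wd a b 1 = 1 := by rw [Wd]; simp

theorem Wd_step (a b : G) {n : ℕ} (h : 2 ≤ n) :
    Wd a b n = (if n % 2 = 0 then a else b) * Wd a b (n / 2) := by
  rw [Wd, dif_neg (by omega)]

theorem Wd_WL {S : Set G} {a b : G} (ha : a ∈ S) (hb : b ∈ S) (n : ℕ) :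
    WL S (Nat.log 2 n) (Wd a b n) := by
  induction n using Nat.strong_induction_on with
  | _ n ih =>
    by_cases h : n ≤ 1
    · rw [Wd, dif_pos h]; exact WL.one.mono (by omega)
    · rw [Wd_step a b (by omega), Nat.log_of_one_lt_of_le (by norm_num) (by omega), add_comm]
      refine WL.mul ?_ (ih (n / 2) (by omega))
      split_ifs
      · exact WL.gen ha
      · exact WL.gen hb

variable {X : Type*} (ρ : G →* Equiv.Perm X)

theorem rho_mul (x y : G) (z : X) : ρ (x * y) z = ρ x (ρ y z) := by
  rw [map_mul, Equiv.Perm.mul_apply]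

theorem rho_one (z : X) : ρ 1 z = z := by simp

theorem rho_inv_self (x : G) (z : X) : ρ x⁻¹ (ρ x z) = z := by
  rw [← rho_mul]; simp

theorem rho_self_inv (x : G) (z : X) : ρ x (ρ x⁻¹ z) = z := by
  rw [← rho_mul]; simp

/-- if an element fixes everything off `K` it preserves `K`. -/
theorem rho_pres {K : Set X} {g : G} (h : ∀ x, x ∉ K → ρ g x = x) (x : X) :
    ρ g x ∈ K ↔ x ∈ K := by
  constructor
  · intro h1
    by_contra h2
    rw [h x h2] at h1; exact h2 h1
  · intro h1
    by_contra h2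
    have := (ρ g).injective (h _ h2)
    rw [this] at h2; exact h2 h1

theorem rho_fix_inv {g : G} {x : X} (h : ρ g x = x) : ρ g⁻¹ x = x := by
  conv_lhs => rw [← h]
  exact rho_inv_self ρ g x

theorem Wd_mem {a b : G} {D E : Set X} (hDE : D ⊆ E)
    (haE : ∀ x ∈ E, ρ a x ∈ E ∧ ρ a x ∉ D) (hbE : ∀ x ∈ E, ρ b x ∈ E ∧ ρ b x ∉ D) (n : ℕ)
    {x : X} (hx : x ∈ D) : ρ (Wd a b n) x ∈ E := by
  induction n using Nat.strong_induction_on with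
  | _ n ih =>
    by_cases h : n ≤ 1
    · rw [Wd, dif_pos h, rho_one]; exact hDE hx
    · rw [Wd_step a b (by omega), rho_mul]
      have := ih (n / 2) (by omega)
      split_ifs
      · exact (haE _ this).1
      · exact (hbE _ this).1

theorem Wd_disj {a b : G} {D E : Set X} (hDE : D ⊆ E)
    (haE : ∀ x ∈ E, ρ a x ∈ E ∧ ρ a x ∉ D) (hbE : ∀ x ∈ E, ρ b x ∈ E ∧ ρ b x ∉ D)
    (hab : ∀ x ∈ E, ∀ y ∈ E, ρ a x ≠ ρ b y) (n : ℕ) (hn : 1 ≤ n) :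
    ∀ m : ℕ, 1 ≤ m → m ≠ n → ∀ x ∈ D, ∀ y ∈ D, ρ (Wd a b n) x ≠ ρ (Wd a b m) y := by
  have key : ∀ m : ℕ, 2 ≤ m → ∀ x ∈ D, ρ (Wd a b m) x ∉ D := by
    intro m hm x hx
    rw [Wd_step a b hm, rho_mul]
    have := Wd_mem ρ hDE haE hbE (m / 2) hx
    split_ifs
    · exact (haE _ this).2
    · exact (hbE _ this).2
  induction n using Nat.strong_induction_on with
  | _ n ih =>
    intro m hm hmn x hx y hy heq
    by_cases h1 : n = 1
    · subst h1
      rw [Wd_one, rho_one] at heq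
      exact key m (by omega) y hy (heq ▸ hx)
    by_cases h2 : m = 1
    · subst h2
      rw [Wd_one, rho_one] at heq
      exact key n (by omega) x hx (heq.symm ▸ hy)
    have e1 := Wd_mem ρ hDE haE hbE (n / 2) hx
    have e2 := Wd_mem ρ hDE haE hbE (m / 2) hy
    rw [Wd_step a b (show 2 ≤ n by omega), Wd_step a b (show 2 ≤ m by omega),
      rho_mul, rho_mul] at heq
    split_ifs at heq with p1 p2 p2
    · exact ih (n / 2) (by omega) (by omega) (m / 2) (by omega) (by omega) x hx y hy
        ((ρ a).injective heq)
    · exact hab _ e1 _ e2 heq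
    · exact hab _ e2 _ e1 heq.symm
    · exact ih (n / 2) (by omega) (by omega) (m / 2) (by omega) (by omega) x hx y hy
        ((ρ b).injective heq)

theorem core (hρ : Function.Injective ρ) (Sm : (ℕ → Set X) → Prop)
    (hglue : ∀ (K : ℕ → Set X) (φ : ℕ → G), (∀ i j x, x ∈ K i → x ∈ K j → i = j) → Sm K →
      (∀ i x, x ∉ K i → ρ (φ i) x = x) →
      ∃ F : G, (∀ i, ∀ x ∈ K i, ρ F x = ρ (φ i) x) ∧ (∀ x, (∀ i, x ∉ K i) → ρ F x = x))
    (a b s : G) (B D E : Set X) (hBD : B ⊆ D) (hDE : D ⊆ E)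
    (hs : ∀ x, x ∉ D → ρ s x = x)
    (haE : ∀ x ∈ E, ρ a x ∈ E ∧ ρ a x ∉ D) (hbE : ∀ x ∈ E, ρ b x ∈ E ∧ ρ b x ∉ D)
    (hab : ∀ x ∈ E, ∀ y ∈ E, ρ a x ≠ ρ b y)
    (hsB : ∀ j : ℕ, ∀ x ∈ B, ρ (s ^ (j + 1)) x ∉ B)
    (S1 : Sm fun j => {x | ρ (s ^ j)⁻¹ x ∈ B})
    (S2 : Sm fun n => {x | ρ (Wd a b (n + 1))⁻¹ x ∈ D})
    (h : ℕ → G) (hh : ∀ n x, x ∉ B → ρ (h n) x = x) :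
    ∃ F : G, (∀ x, x ∉ E → ρ F x = x) ∧ ∀ n,
      h n = ((Wd a b (n + 1))⁻¹ * F * Wd a b (n + 1)) * s *
        ((Wd a b (n + 1))⁻¹ * F * Wd a b (n + 1))⁻¹ * s⁻¹ := by
  have hsD : ∀ j x, ρ (s ^ j)⁻¹ x ∈ D → x ∈ D := by
    intro j x hx
    have h1 : ∀ j x, x ∈ D → ρ (s ^ j) x ∈ D := by
      intro j
      induction j with
      | zero => intro x hx; simpa using hx
      | succ k ih =>
        intro x hx
        rw [pow_succ', rho_mul]
        exact (rho_pres ρ hs _).2 (ih x hx)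
    have := h1 j _ hx
    rwa [rho_self_inv] at this
  have step1 : ∀ n, ∃ H : G, (∀ x, x ∉ D → ρ H x = x) ∧
      ∀ y, ρ H (ρ s y) = ρ (h n) (ρ s (ρ H y)) := by
    intro n
    obtain ⟨H, H1, H2⟩ := hglue (fun j => {x | ρ (s ^ j)⁻¹ x ∈ B})
      (fun j => s ^ j * h n * (s ^ j)⁻¹) (by
        have aux : ∀ i k x, ρ (s ^ i)⁻¹ x ∈ B → ρ (s ^ (i + k + 1))⁻¹ x ∈ B → False := by
          intro i k x hx hy
          apply hsB k _ hy
          rw [← rho_mul]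
          have : s ^ (k + 1) * (s ^ (i + k + 1))⁻¹ = (s ^ i)⁻¹ := by
            rw [show i + k + 1 = i + (k + 1) by ring, pow_add]; group
          rwa [this]
        intro i j x hi hj
        rcases lt_trichotomy i j with hij | hij | hij
        · obtain ⟨k, rfl⟩ := Nat.exists_eq_add_of_lt hij
          exact (aux i k x hi hj).elim
        · exact hij
        · obtain ⟨k, rfl⟩ := Nat.exists_eq_add_of_lt hij
          exact (aux j k x hj hi).elim) S1 (by
        intro i x hx
        simp only [Set.mem_ofPred_eq] at hx
        rw [rho_mul, rho_mul, hh n _ hx, rho_self_inv])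
    refine ⟨H, ?_, ?_⟩
    · intro x hx
      apply H2
      intro i hi
      exact hx (hsD i x (hBD hi))
    · intro y
      by_cases hy : ∃ j, ρ (s ^ j)⁻¹ y ∈ B
      · obtain ⟨j, hj⟩ := hy
        have e1 : ρ (s ^ (j + 1))⁻¹ (ρ s y) ∈ B := by
          rw [← rho_mul]
          have : (s ^ (j + 1))⁻¹ * s = (s ^ j)⁻¹ := by rw [pow_succ']; group
          rwa [this]
        rw [H1 (j + 1) _ e1, H1 j _ hj]
        simp only [rho_mul]
        have e2 : ρ (s ^ (j + 1))⁻¹ (ρ s y) = ρ (s ^ j)⁻¹ y := by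
          rw [← rho_mul]
          have : (s ^ (j + 1))⁻¹ * s = (s ^ j)⁻¹ := by rw [pow_succ']; group
          rw [this]
        rw [e2]
        have e3 : ρ s (ρ (s ^ j) (ρ (h n) (ρ (s ^ j)⁻¹ y))) =
            ρ (s ^ (j + 1)) (ρ (h n) (ρ (s ^ j)⁻¹ y)) := by
          rw [← rho_mul, ← pow_succ']
        rw [e3, hh n _ (hsB j _ ((rho_pres ρ (hh n) _).2 hj))]
      · push Not at hy
        rw [H2 y hy]
        by_cases hsy : ρ s y ∈ B
        · rw [H1 0 (ρ s y) (by simpa using hsy)]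
          simp
        · rw [hh n _ hsy]
          apply H2
          intro i
          cases i with
          | zero => simpa using hsy
          | succ i =>
            simp only [Set.mem_ofPred_eq]
            rw [← rho_mul]
            have : (s ^ (i + 1))⁻¹ * s = (s ^ i)⁻¹ := by rw [pow_succ']; group
            rw [this]
            exact hy i
  choose H HD Hc using step1
  obtain ⟨F, F1, F2⟩ := hglue (fun n => {x | ρ (Wd a b (n + 1))⁻¹ x ∈ D})
    (fun n => Wd a b (n + 1) * H n * (Wd a b (n + 1))⁻¹) (by
      intro i j x hi hj
      by_contra hij
      refine Wd_disj ρ hDE haE hbE hab (i + 1) (by omega) (j + 1) (by omega) (by omega) _ hi _ hj ?_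
      rw [rho_self_inv, rho_self_inv]) S2 (by
      intro i x hx
      simp only [Set.mem_ofPred_eq] at hx
      rw [rho_mul, rho_mul, HD i _ hx, rho_self_inv])
  refine ⟨F, ?_, ?_⟩
  · intro x hx
    apply F2
    intro i hi
    apply hx
    have := Wd_mem ρ hDE haE hbE (i + 1) hi
    rwa [rho_self_inv] at this
  · intro n
    set w := Wd a b (n + 1) with hw
    set u := w⁻¹ * F * w with hu
    have uD : ∀ x ∈ D, ρ u x = ρ (H n) x := by
      intro x hx
      rw [hu, rho_mul, rho_mul, F1 n (ρ w x) (by simpa [← hw, rho_inv_self] using hx)]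
      simp only [rho_mul, ← hw, rho_inv_self]
    have uD' : ∀ x, x ∉ D → ρ u x ∉ D := by
      intro x hx hux
      have h1 : ρ (H n)⁻¹ (ρ u x) ∈ D := by
        rw [← rho_pres ρ (HD n), rho_self_inv]; exact hux
      have h2 : ρ u (ρ (H n)⁻¹ (ρ u x)) = ρ u x := by
        rw [uD _ h1, rho_self_inv]
      have h3 := (ρ u).injective h2
      rw [h3] at h1
      exact hx h1
    have main : u * s = h n * s * u := by
      apply hρ
      ext x
      simp only [rho_mul]
      by_cases hx : x ∈ D
      · rw [uD x hx, uD _ ((rho_pres ρ hs _).2 hx), Hc]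
      · rw [hs x hx, hs _ (uD' x hx), hh n _ (fun hB => uD' x hx (hBD hB))]
    rw [main]; group

end WLsec

theorem glue_perm {X : Type*} (K : ℕ → Set X) (φ : ℕ → Equiv.Perm X)
    (hK : ∀ i j x, x ∈ K i → x ∈ K j → i = j) (hφ : ∀ i x, x ∉ K i → φ i x = x) :
    ∃ F : Equiv.Perm X, (∀ i, ∀ x ∈ K i, F x = φ i x) ∧ (∀ x, (∀ i, x ∉ K i) → F x = x) ∧
      (∀ i, ∀ x ∈ K i, F.symm x = (φ i).symm x) ∧ (∀ x, (∀ i, x ∉ K i) → F.symm x = x) := by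
  classical
  have mk : ∀ ψ : ℕ → Equiv.Perm X, ∃ f : X → X, (∀ i, ∀ x ∈ K i, f x = ψ i x) ∧
      (∀ x, (∀ i, x ∉ K i) → f x = x) := by
    intro ψ
    refine ⟨fun x => if h : ∃ i, x ∈ K i then ψ h.choose x else x, ?_, ?_⟩
    · intro i x hx
      have h : ∃ i, x ∈ K i := ⟨i, hx⟩
      simp only [dif_pos h]
      rw [hK _ _ x h.choose_spec hx]
    · intro x hx
      exact dif_neg (by push Not; exact hx)
  have pres : ∀ i x, x ∈ K i → φ i x ∈ K i := by
    intro i x hx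
    by_contra h2
    have := (φ i).injective (hφ i _ h2)
    rw [this] at h2; exact h2 hx
  have pres' : ∀ i x, x ∈ K i → (φ i).symm x ∈ K i := by
    intro i x hx
    by_contra h2
    have := hφ i _ h2
    rw [Equiv.apply_symm_apply] at this
    rw [← this] at h2; exact h2 hx
  obtain ⟨f, f1, f2⟩ := mk φ
  obtain ⟨g, g1, g2⟩ := mk fun i => (φ i).symm
  refine ⟨⟨f, g, ?_, ?_⟩, f1, f2, g1, g2⟩
  · intro x
    by_cases h : ∃ i, x ∈ K i
    · obtain ⟨i, hi⟩ := h
      rw [f1 i x hi, g1 i _ (pres i x hi), Equiv.symm_apply_apply]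
    · push Not at h
      rw [f2 x h, g2 x h]
  · intro x
    by_cases h : ∃ i, x ∈ K i
    · obtain ⟨i, hi⟩ := h
      rw [g1 i x hi, f1 i _ (pres' i x hi), Equiv.apply_symm_apply]
    · push Not at h
      rw [g2 x h, f2 x h]

/-- permutation representation of order automorphisms of the line -/
def rhoO : (ℝ ≃o ℝ) →* Equiv.Perm ℝ where
  toFun g := g.toEquiv
  map_one' := rfl
  map_mul' _ _ := rfl

theorem rhoO_apply (g : ℝ ≃o ℝ) (x : ℝ) : rhoO g x = g x := rfl

theorem rhoO_inj : Function.Injective rhoO := by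
  intro f g h
  ext x
  exact congrArg (fun e : Equiv.Perm ℝ => e x) h

theorem glue_order (K : ℕ → Set ℝ) (φ : ℕ → ℝ ≃o ℝ)
    (hK : ∀ i j x, x ∈ K i → x ∈ K j → i = j)
    (hφ : ∀ i x, x ∉ K i → rhoO (φ i) x = x) :
    ∃ F : ℝ ≃o ℝ, (∀ i, ∀ x ∈ K i, rhoO F x = rhoO (φ i) x) ∧
      (∀ x, (∀ i, x ∉ K i) → rhoO F x = x) := by
  obtain ⟨F, F1, F2, -, -⟩ := glue_perm K (fun i => rhoO (φ i)) hK hφ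
  have mono : StrictMono F := by
    intro x y hxy
    by_cases hx : ∃ i, x ∈ K i
    · obtain ⟨i, hi⟩ := hx
      have hFx := F1 i x hi
      have hi' : rhoO (φ i) x ∈ K i := (rho_pres rhoO (hφ i) x).2 hi
      rw [hFx]
      by_cases hyi : y ∈ K i
      · rw [F1 i y hyi]
        exact (φ i).strictMono hxy
      have h1 : rhoO (φ i) x < y := by
        have := (φ i).strictMono hxy
        rw [← rhoO_apply, ← rhoO_apply, hφ i y hyi] at this
        exact this
      by_cases hy : ∃ j, y ∈ K j
      · obtain ⟨j, hj⟩ := hy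
        rw [F1 j y hj]
        have h2 := (φ j).strictMono h1
        rw [← rhoO_apply (φ j), ← rhoO_apply (φ j), hφ j (rhoO (φ i) x)] at h2
        · exact h2
        · intro h3
          have := hK _ _ _ hi' h3
          subst this; exact hyi hj
      · push Not at hy
        rw [F2 y hy]; exact h1
    · push Not at hx
      rw [F2 x hx]
      by_cases hy : ∃ j, y ∈ K j
      · obtain ⟨j, hj⟩ := hy
        rw [F1 j y hj]
        have h2 := (φ j).strictMono hxy
        rw [← rhoO_apply (φ j), ← rhoO_apply (φ j), hφ j _ (hx j)] at h2
        exact h2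
      · push Not at hy
        rw [F2 y hy]; exact hxy
  exact ⟨mono.orderIsoOfSurjective F F.surjective, F1, F2⟩

noncomputable def interp (P : ℕ → ℝ) (y : ℝ) : ℝ :=
  if y < 0 then P 0 + y else P ⌊y⌋₊ + (y - ⌊y⌋₊) * (P (⌊y⌋₊ + 1) - P ⌊y⌋₊)

theorem interp_of {P : ℕ → ℝ} {y : ℝ} {i : ℕ} (h1 : (i : ℝ) ≤ y) (h2 : y < i + 1) :
    interp P y = P i + (y - i) * (P (i + 1) - P i) := by
  have h0 : 0 ≤ y := le_trans (Nat.cast_nonneg i) h1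
  have : ⌊y⌋₊ = i := (Nat.floor_eq_iff h0).2 ⟨h1, h2⟩
  rw [interp, if_neg (not_lt.2 h0), this]

theorem interp_nat (P : ℕ → ℝ) (i : ℕ) : interp P i = P i := by
  rw [interp_of (i := i) le_rfl (by linarith)]; simp

theorem interp_mono {P : ℕ → ℝ} (hP : StrictMono P) : StrictMono (interp P) := by
  have lo : ∀ y : ℝ, 0 ≤ y → P ⌊y⌋₊ ≤ interp P y := by
    intro y hy
    rw [interp, if_neg (not_lt.2 hy)]
    have h1 := Nat.floor_le hy
    have h2 := hP (Nat.lt_succ_self ⌊y⌋₊)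
    nlinarith [mul_nonneg (sub_nonneg.2 h1) (sub_nonneg.2 h2.le)]
  have hi : ∀ y : ℝ, 0 ≤ y → interp P y < P (⌊y⌋₊ + 1) := by
    intro y hy
    rw [interp, if_neg (not_lt.2 hy)]
    have h1 := Nat.lt_floor_add_one y
    have h2 := hP (Nat.lt_succ_self ⌊y⌋₊)
    nlinarith [mul_pos (sub_pos.2 h1) (sub_pos.2 h2)]
  intro x y hxy
  by_cases hx : x < 0
  · by_cases hy : y < 0
    · simp only [interp, if_pos hx, if_pos hy]; linarith
    · have h1 := lo y (not_lt.1 hy)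
      have h2 : P 0 ≤ P ⌊y⌋₊ := hP.monotone (Nat.zero_le _)
      have h3 : interp P x < P 0 := by simp only [interp, if_pos hx]; linarith
      linarith
  · have hx := not_lt.1 hx
    have hy := hx.trans hxy.le
    rcases eq_or_lt_of_le (Nat.floor_le_floor hxy.le) with h | h
    · simp only [interp, if_neg (not_lt.2 hx), if_neg (not_lt.2 hy), ← h]
      have h2 := hP (Nat.lt_succ_self ⌊x⌋₊)
      nlinarith [mul_pos (sub_pos.2 hxy) (sub_pos.2 h2)]
    · have h1 := lo y hy
      have h2 := hi x hx
      have h3 : P (⌊x⌋₊ + 1) ≤ P ⌊y⌋₊ := hP.monotone h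
      linarith

theorem interp_surj {P : ℕ → ℝ} (hP : StrictMono P) (hu : ∀ t, ∃ k, t < P k) :
    Function.Surjective (interp P) := by
  intro t
  by_cases h0 : t < P 0
  · refine ⟨t - P 0, ?_⟩
    rw [interp, if_pos (by linarith)]; ring
  · classical
    have hk := Nat.find_spec (hu t)
    have hk' := fun m => Nat.find_min (hu t) (m := m)
    obtain ⟨i, hi⟩ : ∃ i, Nat.find (hu t) = i + 1 := by
      refine ⟨Nat.find (hu t) - 1, ?_⟩
      have : Nat.find (hu t) ≠ 0 := by intro h; rw [h] at hk; exact h0 hk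
      omega
    rw [hi] at hk
    have h1 : P i ≤ t := not_lt.1 (hk' i (by omega))
    have h2 : 0 < P (i + 1) - P i := by linarith
    refine ⟨i + (t - P i) / (P (i + 1) - P i), ?_⟩
    have h3 : 0 ≤ (t - P i) / (P (i + 1) - P i) := div_nonneg (by linarith) h2.le
    have h4 : (t - P i) / (P (i + 1) - P i) < 1 := by rw [div_lt_one h2]; linarith
    rw [interp_of (i := i) (by linarith) (by linarith)]
    field_simp
    ring

theorem exists_interp (P : ℕ → ℝ) (hP : StrictMono P) (hu : ∀ t, ∃ k, t < P k) :
    ∃ g : ℝ ≃o ℝ, ∀ x, g x = interp P x :=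
  ⟨(interp_mono hP).orderIsoOfSurjective _ (interp_surj hP hu), fun _ => rfl⟩

theorem exists_iso (p q : ℕ → ℕ) (hp : StrictMono p) (hq : StrictMono q) (h0 : p 0 = q 0) :
    ∃ g : ℝ ≃o ℝ, (∀ i, g (p i) = q i) ∧ (∀ x : ℝ, x ≤ p 0 → g x = x) ∧
      (∀ i, p i = q i → p (i + 1) = q (i + 1) → ∀ x : ℝ, p i ≤ x → x ≤ p (i + 1) → g x = x) := by
  have key : ∀ r : ℕ → ℕ, StrictMono r → ∃ g : ℝ ≃o ℝ, ∀ x, g x = interp (fun i => (r i : ℝ)) x := by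
    intro r hr
    apply exists_interp
    · intro i j hij
      exact Nat.cast_lt.2 (hr hij)
    · intro t
      obtain ⟨k, hk⟩ := exists_nat_gt t
      exact ⟨k, lt_of_lt_of_le hk (Nat.cast_le.2 hr.le_apply)⟩
  obtain ⟨e, he⟩ := key p hp
  obtain ⟨e', he'⟩ := key q hq
  have sn : ∀ i, e.symm (p i) = i := by
    intro i
    rw [OrderIso.symm_apply_eq, he, interp_nat]
  refine ⟨e.symm.trans e', ?_, ?_, ?_⟩
  · intro i
    rw [OrderIso.trans_apply, sn, he', interp_nat]
  · intro x hx
    rw [OrderIso.trans_apply]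
    rcases eq_or_lt_of_le hx with h | h
    · rw [h, sn, he', interp_nat, h0]
    · have h1 : e.symm x < 0 := by
        have := e.symm.strictMono h
        rwa [sn, Nat.cast_zero] at this
      have h2 : e (e.symm x) = x := e.apply_symm_apply x
      rw [he'] 
      rw [he] at h2
      simp only [interp, if_pos h1] at h2 ⊢
      rw [← h0]; exact h2
  · intro i h1 h2 x hx hx'
    rw [OrderIso.trans_apply]
    rcases eq_or_lt_of_le hx' with h | h
    · rw [h, sn, he', interp_nat, h2]
    · have a1 : (i : ℝ) ≤ e.symm x := by
        have := e.symm.monotone hx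
        rwa [sn] at this
      have a2 : e.symm x < i + 1 := by
        have := e.symm.strictMono h
        rw [sn] at this; exact_mod_cast this
      have h3 : e (e.symm x) = x := e.apply_symm_apply x
      rw [he']
      rw [he] at h3
      rw [interp_of a1 a2] at h3 ⊢
      simp only [← h1, ← h2]
      exact h3

def supIso (e f : ℝ ≃o ℝ) : ℝ ≃o ℝ where
  toFun x := e x ⊔ f x
  invFun y := e.symm y ⊓ f.symm y
  left_inv x := by
    rcases le_total (e x) (f x) with h | h
    · simp only [sup_eq_right.2 h, OrderIso.symm_apply_apply]
      exact inf_eq_right.2 (by rw [e.le_symm_apply]; exact h)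
    · simp only [sup_eq_left.2 h, OrderIso.symm_apply_apply]
      exact inf_eq_left.2 (by rw [f.le_symm_apply]; exact h)
  right_inv y := by
    rcases le_total (e.symm y) (f.symm y) with h | h
    · simp only [inf_eq_left.2 h, OrderIso.apply_symm_apply]
      exact sup_eq_left.2 (by rw [← f.le_symm_apply]; exact h)
    · simp only [inf_eq_right.2 h, OrderIso.apply_symm_apply]
      exact sup_eq_right.2 (by rw [← e.le_symm_apply]; exact h)
  map_rel_iff' := by
    intro x y
    have : StrictMono fun x => e x ⊔ f x := by
      intro a b hab
      exact max_lt_max (e.strictMono hab) (f.strictMono hab)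
    exact this.le_iff_le

def infIso (e f : ℝ ≃o ℝ) : ℝ ≃o ℝ := (supIso e.symm f.symm).symm

theorem supIso_apply (e f : ℝ ≃o ℝ) (x : ℝ) : supIso e f x = e x ⊔ f x := rfl

theorem infIso_apply (e f : ℝ ≃o ℝ) (x : ℝ) : infIso e f x = e x ⊓ f x := rfl

noncomputable def affIso (p q : ℝ) (hp : 0 < p) : ℝ ≃o ℝ where
  toFun x := p * x + q
  invFun y := (y - q) / p
  left_inv x := by field_simp; ring
  right_inv x := by field_simp; ring
  map_rel_iff' := by
    intro x y
    simp only [Equiv.coe_fn_mk, add_le_add_iff_right]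
    exact mul_le_mul_iff_right₀ hp

theorem affIso_apply (p q : ℝ) (hp : 0 < p) (x : ℝ) : affIso p q hp x = p * x + q := rfl

def Per (l u : ℝ) : Set ℝ := {x | ∃ k : ℕ, 24 * k + l < x ∧ x < 24 * k + u}

theorem Per_disj {l u l' u' x : ℝ} (h1 : u ≤ l') (h2 : u' ≤ 24 + l) (hx : x ∈ Per l u)
    (hx' : x ∈ Per l' u') : False := by
  obtain ⟨k, a1, a2⟩ := hx
  obtain ⟨k', b1, b2⟩ := hx'
  rcases lt_or_ge k' k with h | h
  · have : (k' : ℝ) + 1 ≤ k := by exact_mod_cast h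
    linarith
  · have : (k : ℝ) ≤ k' := by exact_mod_cast h
    linarith

theorem Per_mono {l u l' u' x : ℝ} (h1 : l' ≤ l) (h2 : u ≤ u') (hx : x ∈ Per l u) :
    x ∈ Per l' u' := by
  obtain ⟨k, a1, a2⟩ := hx
  exact ⟨k, by linarith, by linarith⟩

theorem not_Per {l u x : ℝ} (hu : u ≤ l + 24) (hx : x ∉ Per l u) :
    x ≤ l ∨ ∃ k : ℕ, 24 * k + u ≤ x ∧ x ≤ 24 * (k + 1 : ℕ) + l := by
  by_cases h : x ≤ l
  · exact Or.inl h
  right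
  push Not at h
  have h0 : 0 ≤ (x - l) / 24 := by linarith
  have h1 := Nat.floor_le h0
  have h2 := Nat.lt_floor_add_one ((x - l) / 24)
  set k := ⌊(x - l) / 24⌋₊
  push_cast
  by_cases h3 : x = 24 * k + l
  · obtain ⟨j, hj⟩ : ∃ j, k = j + 1 := by
      refine ⟨k - 1, ?_⟩
      have : k ≠ 0 := by
        intro hk; rw [hk] at h3; simp at h3; linarith
      omega
    refine ⟨j, ?_, ?_⟩ <;> rw [h3, hj] <;> push_cast <;> linarith
  · have h4 : 24 * (k : ℝ) + l < x := lt_of_le_of_ne (by linarith) (Ne.symm h3)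
    refine ⟨k, ?_, by linarith⟩
    by_contra h5
    exact hx ⟨k, h4, by linarith⟩

theorem exists_a (c : ℕ) (hc : 1 ≤ c) (hc' : c ≤ 3) : ∃ g : ℝ ≃o ℝ, (∀ x : ℝ, x ≤ 0 → g x = x) ∧
    ∀ x ∈ Per 1 23, g x ∈ Per c (c + 1) := by
  obtain ⟨g, g1, g2, -⟩ := exists_iso
    (fun i => if i % 2 = 1 then 24 * (i / 2) + 1 else 24 * (i / 2) - 1)
    (fun i => if i % 2 = 1 then 24 * (i / 2) + c else 24 * (i / 2) - (23 - c))
    (strictMono_nat_of_lt_succ (fun n => by split_ifs <;> omega))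
    (strictMono_nat_of_lt_succ (fun n => by split_ifs <;> omega)) (by simp)
  refine ⟨g, by simpa using g2, ?_⟩
  rintro x ⟨k, h1, h2⟩
  refine ⟨k, ?_, ?_⟩
  · have := g1 (2 * k + 1)
    rw [if_pos (by omega), if_pos (by omega), show (2 * k + 1) / 2 = k by omega] at this
    push_cast at this
    rw [← this]
    exact g.strictMono h1
  · have := g1 (2 * k + 2)
    rw [if_neg (by omega), if_neg (by omega), show 24 * ((2 * k + 2) / 2) - 1 = 24 * k + 23 by omega,
      show 24 * ((2 * k + 2) / 2) - (23 - c) = 24 * k + (c + 1) by omega] at this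
    push_cast at this
    rw [← this]
    exact g.strictMono h2

theorem exists_s : ∃ g : ℝ ≃o ℝ, (∀ x, x ∉ Per 4 23 → g x = x) ∧
    ∀ k : ℕ, g (24 * k + 5) = 24 * k + 22 := by
  obtain ⟨g, g1, g2, g3⟩ := exists_iso
    (fun i => 24 * (i / 3) + (if i % 3 = 0 then 4 else if i % 3 = 1 then 5 else 23))
    (fun i => 24 * (i / 3) + (if i % 3 = 0 then 4 else if i % 3 = 1 then 22 else 23))
    (strictMono_nat_of_lt_succ (fun n => by split_ifs <;> omega))
    (strictMono_nat_of_lt_succ (fun n => by split_ifs <;> omega)) (by simp)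
  refine ⟨g, ?_, ?_⟩
  · intro x hx
    rcases not_Per (by norm_num) hx with h | ⟨k, h1, h2⟩
    · apply g2; simpa using h
    · have e1 : (3 * k + 2) / 3 = k := by omega
      have e2 : (3 * k + 2) % 3 = 2 := by omega
      have e3 : (3 * k + 2 + 1) / 3 = k + 1 := by omega
      have e4 : (3 * k + 2 + 1) % 3 = 0 := by omega
      refine g3 (3 * k + 2) ?_ ?_ x ?_ ?_
      · simp [e2]
      · simp [e4]
      · simp only [e1, e2]; push_cast; simpa using h1
      · simp only [e3, e4]; push_cast; push_cast at h2; simpa using h2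
  · intro k
    have e1 : (3 * k + 1) / 3 = k := by omega
    have e2 : (3 * k + 1) % 3 = 1 := by omega
    have := g1 (3 * k + 1)
    simp only [e1, e2] at this
    push_cast at this
    simpa using this

theorem exists_LU (c : ℕ) (hc : 6 ≤ c) (hc' : c ≤ 19) : ∃ g : ℝ ≃o ℝ,
    (∀ x, x ∉ Per 5 21 → g x = x) ∧
    ∀ k : ℕ, g (24 * k + 9) = 24 * k + c ∧ g (24 * k + 17) = 24 * k + (c + 1) := by
  obtain ⟨g, g1, g2, g3⟩ := exists_iso
    (fun i => 24 * (i / 4) + (if i % 4 = 0 then 5 else if i % 4 = 1 then 9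
      else if i % 4 = 2 then 17 else 21))
    (fun i => 24 * (i / 4) + (if i % 4 = 0 then 5 else if i % 4 = 1 then c
      else if i % 4 = 2 then c + 1 else 21))
    (strictMono_nat_of_lt_succ (fun n => by split_ifs <;> omega))
    (strictMono_nat_of_lt_succ (fun n => by split_ifs <;> omega)) (by simp)
  refine ⟨g, ?_, ?_⟩
  · intro x hx
    rcases not_Per (by norm_num) hx with h | ⟨k, h1, h2⟩
    · apply g2; simpa using h
    · have e1 : (4 * k + 3) / 4 = k := by omega
      have e2 : (4 * k + 3) % 4 = 3 := by omega
      have e3 : (4 * k + 3 + 1) / 4 = k + 1 := by omega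
      have e4 : (4 * k + 3 + 1) % 4 = 0 := by omega
      refine g3 (4 * k + 3) ?_ ?_ x ?_ ?_
      · simp [e2]
      · simp [e4]
      · simp only [e1, e2]; push_cast; simpa using h1
      · simp only [e3, e4]; push_cast; push_cast at h2; simpa using h2
  · intro k
    constructor
    · have e1 : (4 * k + 1) / 4 = k := by omega
      have e2 : (4 * k + 1) % 4 = 1 := by omega
      have := g1 (4 * k + 1)
      simp only [e1, e2] at this
      push_cast at this
      simpa using this
    · have e1 : (4 * k + 2) / 4 = k := by omega
      have e2 : (4 * k + 2) % 4 = 2 := by omega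
      have := g1 (4 * k + 2)
      simp only [e1, e2] at this
      push_cast at this
      simpa using this

theorem exists_T : ∃ T : ℝ ≃o ℝ, (∀ x, x ≤ 12 → T x = x) ∧ ∀ x, 13 ≤ x → T x = x + 12 := by
  refine ⟨supIso (affIso 1 0 one_pos) (infIso (affIso 13 (-144) (by norm_num))
    (affIso 1 12 one_pos)), ?_, ?_⟩
  · intro x hx
    simp only [supIso_apply, infIso_apply, affIso_apply]
    rw [inf_eq_left.2 (by linarith), sup_eq_left.2 (by linarith)]; ring
  · intro x hx
    simp only [supIso_apply, infIso_apply, affIso_apply]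
    rw [inf_eq_right.2 (by linarith), sup_eq_right.2 (by linarith)]; ring

theorem omul (f g : ℝ ≃o ℝ) (x : ℝ) : (f * g) x = f (g x) := rfl

theorem oinv_eq {f : ℝ ≃o ℝ} {x y : ℝ} : f⁻¹ x = y ↔ x = f y := f.symm_apply_eq

theorem oinv_self (f : ℝ ≃o ℝ) (x : ℝ) : f⁻¹ (f x) = x := f.symm_apply_apply x

theorem oself_inv (f : ℝ ≃o ℝ) (x : ℝ) : f (f⁻¹ x) = x := f.apply_symm_apply x

theorem ofix_inv {f : ℝ ≃o ℝ} {x : ℝ} (h : f x = x) : f⁻¹ x = x := oinv_eq.2 h.symm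

theorem decomp (T : ℝ ≃o ℝ) (hT : ∀ x, x ≤ 12 → T x = x) (hT' : ∀ x, 13 ≤ x → T x = x + 12)
    (f : ℝ ≃o ℝ) (hf : ∀ x, x ≤ 12 → f x = x) (hf1 : ∀ k : ℕ, f (24 * k + 17) ≤ 24 * k + 18)
    (hf2 : ∀ k : ℕ, 24 * k + 32 ≤ f (24 * k + 33)) :
    ∃ h g : ℝ ≃o ℝ, f = h * (T * g * T⁻¹) ∧ (∀ x, x ∉ Per 5 21 → h x = x) ∧
      (∀ x, x ∉ Per 5 21 → g x = x) := by
  obtain ⟨L, L1, L2⟩ := exists_LU 7 (by norm_num) (by norm_num)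
  obtain ⟨U, U1, U2⟩ := exists_LU 18 (by norm_num) (by norm_num)
  push_cast at L2 U2
  set h := supIso (infIso L 1) (infIso f (supIso U 1)) with hh
  have hx : ∀ x, h x = (L x ⊓ x) ⊔ (f x ⊓ (U x ⊔ x)) := fun x => rfl
  have hoff : ∀ x, x ∉ Per 5 21 → h x = x := by
    intro x hx'
    rw [hx, L1 x hx', U1 x hx']; simp
  have hon : ∀ k : ℕ, ∀ x : ℝ, 24 * k + 9 ≤ x → x ≤ 24 * k + 17 → h x = f x := by
    intro k x h1 h2
    have l1 : L x ≤ f x := by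
      have a1 := L.monotone h2
      rw [(L2 k).2] at a1
      have a2 := f.monotone h1
      have a3 : 24 * k + 8 ≤ f (24 * k + 9) := by
        cases k with
        | zero => rw [hf _ (by norm_num)]; norm_num
        | succ j =>
          have := hf2 j
          push_cast
          rw [show (24 * ((j : ℝ) + 1) + 9) = 24 * j + 33 by ring]; linarith
      linarith
    have l2 : f x ≤ U x := by
      have a1 := U.monotone h1
      rw [(U2 k).1] at a1
      have a2 := f.monotone h2
      have := hf1 k
      linarith
    rw [hx, inf_eq_left.2 (l2.trans le_sup_left), sup_eq_right.2 (inf_le_left.trans l1)]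
  have hon' : ∀ x : ℝ, x ≤ 17 → h x = f x := by
    intro x h1
    by_cases h2 : 9 ≤ x
    · exact hon 0 x (by simpa using h2) (by simpa using h1)
    · rw [hf x (by linarith)]
      rw [hx, hf x (by linarith)]; simp
  refine ⟨h, T⁻¹ * (h⁻¹ * f) * T, by group, hoff, ?_⟩
  intro x hx
  rw [omul, omul, oinv_eq, omul, oinv_eq]
  rcases not_Per (by norm_num) hx with h1 | ⟨k, h1, h2⟩
  · rw [hT x (by linarith), hon' x (by linarith)]
  · push_cast at h2
    have : (0 : ℝ) ≤ k := Nat.cast_nonneg k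
    rw [hT' x (by linarith), hon (k + 1) (x + 12) (by push_cast; linarith) (by push_cast; linarith)]

theorem order_norm (f : ℕ → ℝ ≃o ℝ) (hf : ∀ n x, x ≤ 12 → f n x = x)
    (hf1 : ∀ n j : ℕ, Nat.log 2 n / 16 ≤ j → f n j ≤ (j + 1 : ℕ))
    (hf2 : ∀ n j : ℕ, Nat.log 2 n / 16 ≤ j → j ≤ f n (j + 1 : ℕ)) :
    ∃ a b s F T : ℝ ≃o ℝ, (∀ g ∈ ({a, b, s, F, T} : Set (ℝ ≃o ℝ)), ∀ x, x ≤ 0 → g x = x) ∧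
      ∀ n, 1 ≤ n → WL {a, b, s, F, T}
        (4 * (Nat.log 2 (2 * n - 1) + Nat.log 2 (2 * n)) + 10 + 2 * (Nat.log 2 n / 16)) (f n) := by
  obtain ⟨T, T1, T2⟩ := exists_T
  obtain ⟨a, a1, a2⟩ := exists_a 2 (by norm_num) (by norm_num)
  obtain ⟨b, b1, b2⟩ := exists_a 3 (by norm_num) (by norm_num)
  obtain ⟨s, s1, s2⟩ := exists_s
  push_cast at a2 b2
  have Tp1 : ∀ (m : ℕ) x, x ≤ 12 → (T ^ m) x = x := by
    intro m
    induction m with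
    | zero => intro x _; rfl
    | succ k ih => intro x hx; rw [pow_succ, omul, T1 x hx, ih x hx]
  have Tp2 : ∀ (m : ℕ) x, 13 ≤ x → (T ^ m) x = x + 12 * m := by
    intro m
    induction m with
    | zero => intro x _; simp
    | succ k ih =>
      intro x hx
      rw [pow_succ, omul, T2 x hx, ih _ (by linarith)]; push_cast; ring
  have dec : ∀ n, ∃ h g : ℝ ≃o ℝ,
      (T ^ (Nat.log 2 n / 16))⁻¹ * f n * T ^ (Nat.log 2 n / 16) = h * (T * g * T⁻¹) ∧
      (∀ x, x ∉ Per 5 21 → h x = x) ∧ (∀ x, x ∉ Per 5 21 → g x = x) := by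
    intro n
    set m := Nat.log 2 n / 16 with hm
    apply decomp T T1 T2
    · intro x hx
      rw [omul, omul, Tp1 m x hx, hf n x hx]
      exact ofix_inv (Tp1 m x hx)
    · intro k
      have k0 : (0 : ℝ) ≤ k := Nat.cast_nonneg k
      rw [omul, omul]
      have h1 := hf1 n (24 * k + 17 + 12 * m) (by omega)
      have h2 : (T ^ m) (24 * k + 18) = 24 * k + 18 + 12 * m := Tp2 m _ (by linarith)
      rw [Tp2 m _ (by linarith)]
      push_cast at h1
      have h3 := (T ^ m)⁻¹.monotone (show f n (24 * k + 17 + 12 * m) ≤ (T ^ m) (24 * k + 18) by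
        rw [h2]; linarith)
      rwa [oinv_self] at h3
    · intro k
      have k0 : (0 : ℝ) ≤ k := Nat.cast_nonneg k
      rw [omul, omul]
      have h1 := hf2 n (24 * k + 32 + 12 * m) (by omega)
      have h2 : (T ^ m) (24 * k + 32) = 24 * k + 32 + 12 * m := Tp2 m _ (by linarith)
      rw [Tp2 m _ (by linarith)]
      push_cast at h1
      have h3 := (T ^ m)⁻¹.monotone (show (T ^ m) (24 * k + 32) ≤ f n (24 * k + 33 + 12 * m) by
        rw [h2, show (24 * (k : ℝ) + 33 + 12 * m) = 24 * k + 32 + 12 * m + 1 by ring]; linarith)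
      rwa [oinv_self] at h3
  choose h g hfg hB gB using dec
  obtain ⟨F, F1, F2⟩ := core rhoO rhoO_inj (fun _ => True)
    (fun K φ hK _ hφ => glue_order K φ hK hφ) a b s (Per 5 21) (Per 4 23) (Per 1 23)
    (fun x hx => Per_mono (by norm_num) (by norm_num) hx)
    (fun x hx => Per_mono (by norm_num) (by norm_num) hx)
    s1
    (fun x hx => ⟨Per_mono (by norm_num) (by norm_num) (a2 x hx),
      fun h' => Per_disj (by norm_num) (by norm_num) (a2 x hx) h'⟩)
    (fun x hx => ⟨Per_mono (by norm_num) (by norm_num) (b2 x hx),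
      fun h' => Per_disj (by norm_num) (by norm_num) (b2 x hx) h'⟩)
    (fun x hx y hy hxy => by
      have h1 := a2 x hx
      have h2 := b2 y hy
      rw [rhoO_apply, rhoO_apply] at hxy
      rw [hxy] at h1
      exact Per_disj (by norm_num) (by norm_num) h1 h2)
    (by
      intro j x hx
      suffices hsx : rhoO (s ^ (j + 1)) x ∈ Per 21 23 from
        fun h' => Per_disj (by norm_num) (by norm_num) h' hsx
      obtain ⟨k, k1, k2⟩ := hx
      have hfix : s (24 * k + 23) = 24 * k + 23 := by
        apply s1
        rintro ⟨i, i1, i2⟩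
        rcases lt_or_ge k i with hki | hki
        · have : (k : ℝ) + 1 ≤ i := by exact_mod_cast hki
          linarith
        · have : (i : ℝ) ≤ k := by exact_mod_cast hki
          linarith
      refine ⟨k, ?_⟩
      induction j with
      | zero =>
        simp only [zero_add, pow_one, rhoO_apply]
        constructor
        · have := s.strictMono k1
          rw [s2] at this; linarith
        · have := s.strictMono (show x < 24 * k + 23 by linarith)
          rwa [hfix] at this
      | succ i ih =>
        rw [pow_succ', rho_mul]
        generalize rhoO (s ^ (i + 1)) x = z at ih
        rw [rhoO_apply]
        constructor
        · have := s.strictMono (show 24 * (k : ℝ) + 5 < z by linarith)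
          rw [s2] at this; linarith
        · have := s.strictMono ih.2
          rwa [hfix] at this)
    trivial trivial
    (fun i => if i % 2 = 0 then h (i / 2 + 1) else g (i / 2 + 1))
    (by
      intro n x hx
      split_ifs
      · exact hB _ x hx
      · exact gB _ x hx)
  have Perneg : ∀ (l u : ℝ) x, 0 ≤ l → x ≤ 0 → x ∉ Per l u := by
    rintro l u x hl hx ⟨k, h1, -⟩
    have : (0 : ℝ) ≤ k := Nat.cast_nonneg k
    linarith
  refine ⟨a, b, s, F, T, ?_, ?_⟩
  · intro g' hg x hx
    simp only [Set.mem_insert_iff, Set.mem_singleton_iff] at hg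
    rcases hg with rfl | rfl | rfl | rfl | rfl
    · exact a1 x hx
    · exact b1 x hx
    · exact s1 x (Perneg _ _ x (by norm_num) hx)
    · exact F1 x (Perneg _ _ x (by norm_num) hx)
    · exact T1 x (by linarith)
  · intro n hn
    set S : Set (ℝ ≃o ℝ) := {a, b, s, F, T} with hS
    have aS : a ∈ S := by simp [hS]
    have bS : b ∈ S := by simp [hS]
    have sS : s ∈ S := by simp [hS]
    have FS : F ∈ S := by simp [hS]
    have TS : T ∈ S := by simp [hS]
    have cw : ∀ i, WL S (4 * Nat.log 2 (i + 1) + 4)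
        (if i % 2 = 0 then h (i / 2 + 1) else g (i / 2 + 1)) := by
      intro i
      rw [F2 i]
      have w := Wd_WL aS bS (i + 1)
      have u := (w.inv.mul (WL.gen FS)).mul w
      exact (((u.mul (WL.gen sS)).mul u.inv).mul (WL.gen sS).inv).mono (by omega)
    have c1 := cw (2 * (n - 1))
    have c2 := cw (2 * (n - 1) + 1)
    rw [if_pos (by omega), show 2 * (n - 1) / 2 + 1 = n by omega,
      show 2 * (n - 1) + 1 = 2 * n - 1 by omega] at c1
    rw [if_neg (by omega), show (2 * (n - 1) + 1) / 2 + 1 = n by omega,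
      show 2 * (n - 1) + 1 + 1 = 2 * n by omega] at c2
    set m := Nat.log 2 n / 16 with hm
    have hfn : f n = T ^ m * (h n * (T * g n * T⁻¹)) * (T ^ m)⁻¹ := by
      rw [← hfg n, ← hm]; group
    rw [hfn]
    have t := WL.pow TS m
    exact ((t.mul (c1.mul (((WL.gen TS).mul c2).mul (WL.gen TS).inv))).mul t.inv).mono (by omega)

theorem order_thm (f : ℕ → ℝ ≃o ℝ) (hf : ∀ n x, x ≤ 12 → f n x = x) :
    ∃ a b s F T : ℝ ≃o ℝ, (∀ g ∈ ({a, b, s, F, T} : Set (ℝ ≃o ℝ)), ∀ x, x ≤ 0 → g x = x) ∧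
      ∀ n, 1 ≤ n → WL {a, b, s, F, T}
        (4 * (Nat.log 2 (2 * n - 1) + Nat.log 2 (2 * n)) + 10 + 2 * (Nat.log 2 n / 16)) (f n) := by
  -- the interpolation nodes
  let st : ℕ → ℝ → ℝ := fun j t => ∑ n ∈ Finset.range (2 ^ (16 * (j + 1))),
    (|f n t - t| + |(f n)⁻¹ t - t|)
  let P : ℕ → ℝ := fun j => Nat.rec 0 (fun j t => t + 1 + st j t) j
  have P0 : P 0 = 0 := rfl
  have Ps : ∀ j, P (j + 1) = P j + 1 + st j (P j) := fun j => rfl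
  have st0 : ∀ j t, 0 ≤ st j t := fun j t => Finset.sum_nonneg fun _ _ => by positivity
  have stle : ∀ j t n, Nat.log 2 n / 16 ≤ j → |f n t - t| + |(f n)⁻¹ t - t| ≤ st j t := by
    intro j t n hn
    refine Finset.single_le_sum (f := fun n => |f n t - t| + |(f n)⁻¹ t - t|)
      (fun _ _ => by positivity) ?_
    rw [Finset.mem_range]
    exact Nat.lt_pow_of_log_lt (by norm_num) (by omega)
  have Pinc : ∀ j, P j + 1 ≤ P (j + 1) := by
    intro j; rw [Ps]; have := st0 j (P j); linarith
  have Pge : ∀ j : ℕ, (j : ℝ) ≤ P j := by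
    intro j
    induction j with
    | zero => simp [P0]
    | succ k ih => push_cast; have := Pinc k; linarith
  have P12 : ∀ j : ℕ, j ≤ 12 → P j = j := by
    intro j
    induction j with
    | zero => intro _; simp [P0]
    | succ k ih =>
      intro hk
      have e := ih (by omega)
      have hk' : (k : ℝ) ≤ 12 := by exact_mod_cast (by omega : k ≤ 12)
      rw [Ps, e]
      have : st k k = 0 := by
        apply Finset.sum_eq_zero
        intro n _
        rw [ofix_inv (hf n k hk'), hf n k hk']; simp
      rw [this]; push_cast; ring
  obtain ⟨φ, hφ⟩ := exists_interp P (strictMono_nat_of_lt_succ fun j => by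
    have := Pinc j; linarith) (fun t => by
    obtain ⟨k, hk⟩ := exists_nat_gt t
    exact ⟨k, lt_of_lt_of_le hk (Pge k)⟩)
  have φn : ∀ j : ℕ, φ j = P j := fun j => by rw [hφ, interp_nat]
  have φneg : ∀ x, x ≤ 0 → φ x = x := by
    intro x hx
    rcases eq_or_lt_of_le hx with h | h
    · subst h; have := φn 0; rwa [P0, Nat.cast_zero] at this
    · rw [hφ, interp, if_pos h, P0]; ring
  obtain ⟨a, b, s, F, T, h1, h2⟩ := order_norm (fun n => φ⁻¹ * f n * φ) (by
      intro n x hx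
      rw [omul, omul, hf, oinv_self]
      have := φ.monotone hx
      have e := φn 12
      rw [P12 12 le_rfl] at e
      push_cast at e
      rwa [e] at this) (by
      intro n j hj
      rw [omul, omul, φn]
      have h1 : f n (P j) ≤ φ (j + 1 : ℕ) := by
        rw [φn, Ps]
        have := stle j (P j) n hj
        have h2 := le_abs_self (f n (P j) - P j)
        have h3 := abs_nonneg ((f n)⁻¹ (P j) - P j)
        linarith
      have := φ⁻¹.monotone h1
      rwa [oinv_self] at this) (by
      intro n j hj
      rw [omul, omul, φn]
      have h1 : (f n)⁻¹ (P j) ≤ P (j + 1) := by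
        rw [Ps]
        have := stle j (P j) n hj
        have h2 := le_abs_self ((f n)⁻¹ (P j) - P j)
        have h3 := abs_nonneg (f n (P j) - P j)
        linarith
      have h2 := (f n).monotone h1
      rw [oself_inv, ← φn j] at h2
      have := φ⁻¹.monotone h2
      rwa [oinv_self] at this)
  let c : (ℝ ≃o ℝ) →* (ℝ ≃o ℝ) := (MulAut.conj φ).toMonoidHom
  have hc : ∀ g, c g = φ * g * φ⁻¹ := fun g => rfl
  have im : c '' {a, b, s, F, T} = {c a, c b, c s, c F, c T} := by
    simp [Set.image_insert_eq]
  refine ⟨c a, c b, c s, c F, c T, ?_, ?_⟩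
  · rw [← im]
    rintro _ ⟨g, hg, rfl⟩ x hx
    rw [hc, omul, omul, ofix_inv (φneg x hx), h1 g hg x hx, φneg x hx]
  · intro n hn
    rw [← im]
    have := (h2 n hn).map c
    rwa [hc, show φ * (φ⁻¹ * f n * φ) * φ⁻¹ = f n by group] at this

theorem log_ge_natlog (n : ℕ) (hn : 1 ≤ n) : (Nat.log 2 n : ℝ) * Real.log 2 ≤ Real.log n := by
  have h := Nat.pow_log_le_self 2 (show n ≠ 0 by omega)
  rw [← Real.log_pow]
  apply Real.log_le_log (by positivity)
  exact_mod_cast h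

theorem log_ge_natlog' (n : ℕ) (hn : 1 ≤ n) : (Nat.log 2 n : ℝ) * 0.6931471803 ≤ Real.log n := by
  refine le_trans ?_ (log_ge_natlog n hn)
  have := Real.log_two_gt_d9
  have h2 : (0 : ℝ) ≤ Nat.log 2 n := Nat.cast_nonneg _
  nlinarith

theorem natlog_succ_le (n : ℕ) (hn : 1 ≤ n) : Nat.log 2 (n + 1) ≤ Nat.log 2 n + 1 := by
  rw [← Nat.log_mul_base (by norm_num) (by omega)]
  exact Nat.log_mono_right (by omega)

theorem num_metric (n : ℕ) (hn : 1 ≤ n) :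
    ((4 * Nat.log 2 (n + 1) + 4 : ℕ) : ℝ) ≤ 14 * Real.log n + 14 := by
  have h1 := natlog_succ_le n hn
  have h2 := log_ge_natlog' n hn
  have h3 : (0 : ℝ) ≤ Nat.log 2 n := Nat.cast_nonneg _
  have h4 : ((4 * Nat.log 2 (n + 1) + 4 : ℕ) : ℝ) ≤ 4 * Nat.log 2 n + 8 := by
    exact_mod_cast (by omega)
  linarith

theorem num_one (n : ℕ) (hn : 1 ≤ n) :
    ((4 * (Nat.log 2 (2 * n - 1) + Nat.log 2 (2 * n)) + 10 + 2 * (Nat.log 2 n / 16) : ℕ) : ℝ)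
      ≤ 14 * Real.log n + 14 := by
  have h2 := log_ge_natlog' n hn
  have e1 : Nat.log 2 (2 * n) = Nat.log 2 n + 1 := by
    rw [mul_comm]; exact Nat.log_mul_base (by norm_num) (by omega)
  have e2 : Nat.log 2 (2 * n - 1) ≤ Nat.log 2 n + 1 := by
    rw [← e1]; exact Nat.log_mono_right (by omega)
  by_cases h8 : 8 ≤ n
  · have h3 : 3 ≤ Nat.log 2 n := by
      calc 3 = Nat.log 2 8 := by rw [show (8 : ℕ) = 2 ^ 3 by norm_num, Nat.log_pow (by norm_num)]
        _ ≤ _ := Nat.log_mono_right h8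
    have h4 : ((4 * (Nat.log 2 (2 * n - 1) + Nat.log 2 (2 * n)) + 10 + 2 * (Nat.log 2 n / 16) : ℕ)
        : ℝ) * 8 ≤ 65 * Nat.log 2 n + 18 * 8 := by
      exact_mod_cast (by omega)
    have h5 : (3 : ℝ) ≤ Nat.log 2 n := by exact_mod_cast h3
    linarith
  · have hl := Real.log_two_gt_d9
    have l3 : 3 * Real.log 2 ≤ 2 * Real.log 3 := by
      have : Real.log ((2 : ℝ) ^ 3) ≤ Real.log ((3 : ℝ) ^ 2) :=
        Real.log_le_log (by norm_num) (by norm_num)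
      simpa [Real.log_pow] using this
    have l5 : 9 * Real.log 2 ≤ 4 * Real.log 5 := by
      have : Real.log ((2 : ℝ) ^ 9) ≤ Real.log ((5 : ℝ) ^ 4) :=
        Real.log_le_log (by norm_num) (by norm_num)
      simpa [Real.log_pow] using this
    have l4 : Real.log 4 = 2 * Real.log 2 := by
      rw [show (4 : ℝ) = 2 ^ 2 by norm_num, Real.log_pow]; norm_num
    have l6 : Real.log 5 ≤ Real.log 6 := Real.log_le_log (by norm_num) (by norm_num)
    have l7 : Real.log 5 ≤ Real.log 7 := Real.log_le_log (by norm_num) (by norm_num)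
    interval_cases n <;> norm_num [Nat.log] at * <;> linarith

theorem num_two (n : ℕ) (hn : 1024 ≤ n) :
    ((4 * (Nat.log 2 (2 * (n + 1) - 1) + Nat.log 2 (2 * (n + 1))) + 10
      + 2 * (Nat.log 2 (n + 1) / 16) : ℕ) : ℝ) ≤ 14 * Real.log n + 14 := by
  have h2 := log_ge_natlog' n (by omega)
  have e0 := natlog_succ_le n (by omega)
  have e1 : Nat.log 2 (2 * (n + 1)) = Nat.log 2 (n + 1) + 1 := by
    rw [mul_comm]; exact Nat.log_mul_base (by norm_num) (by omega)
  have e2 : Nat.log 2 (2 * (n + 1) - 1) ≤ Nat.log 2 (n + 1) + 1 := by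
    rw [← e1]; exact Nat.log_mono_right (by omega)
  have h3 : 10 ≤ Nat.log 2 n := by
    calc 10 = Nat.log 2 1024 := by rw [show (1024 : ℕ) = 2 ^ 10 by norm_num, Nat.log_pow (by norm_num)]
      _ ≤ _ := Nat.log_mono_right hn
  have h4 : ((4 * (Nat.log 2 (2 * (n + 1) - 1) + Nat.log 2 (2 * (n + 1))) + 10
      + 2 * (Nat.log 2 (n + 1) / 16) : ℕ) : ℝ) * 8 ≤ 65 * Nat.log 2 n + 27 * 8 := by
    exact_mod_cast (by omega)
  have h5 : (10 : ℝ) ≤ Nat.log 2 n := by exact_mod_cast h3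
  linarith

section Metric

/-- permutation representation of homeomorphisms -/
def rhoH (X : Type*) [TopologicalSpace X] : (X ≃ₜ X) →* Equiv.Perm X where
  toFun g := g.toEquiv
  map_one' := rfl
  map_mul' _ _ := rfl

theorem rhoH_apply {X : Type*} [TopologicalSpace X] (g : X ≃ₜ X) (x : X) : rhoH X g x = g x := rfl

theorem rhoH_inj {X : Type*} [TopologicalSpace X] : Function.Injective (rhoH X) := by
  intro f g h
  ext x
  exact congrArg (fun e : Equiv.Perm X => e x) h

def SmM {X : Type*} [MetricSpace X] (K : ℕ → Set X) : Prop :=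
  ∀ ε > 0, ∃ N : ℕ, ∀ i ≥ N, ∀ x ∈ K i, ∀ y ∈ K i, dist x y < ε

def cmpN {X : Type*} (φ : ℕ → X → X) : ℕ → X → X
  | 0 => id
  | n + 1 => cmpN φ n ∘ φ n

theorem glue_cont {X : Type*} [MetricSpace X] (K : ℕ → Set X) (φ : ℕ → X → X) (F : X → X)
    (hK : ∀ i j x, x ∈ K i → x ∈ K j → i = j) (hS : SmM K)
    (hφ : ∀ i x, x ∉ K i → φ i x = x) (hp : ∀ i x, x ∈ K i → φ i x ∈ K i)
    (hc : ∀ i, Continuous (φ i)) (F1 : ∀ i, ∀ x ∈ K i, F x = φ i x)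
    (F2 : ∀ x, (∀ i, x ∉ K i) → F x = x) : Continuous F := by
  have c1 : ∀ N, Continuous (cmpN φ N) := by
    intro N
    induction N with
    | zero => exact continuous_id
    | succ n ih => exact ih.comp (hc n)
  have c2 : ∀ N x, (∀ i < N, x ∉ K i) → cmpN φ N x = x := by
    intro N
    induction N with
    | zero => intro x _; rfl
    | succ n ih =>
      intro x hx
      change cmpN φ n (φ n x) = x
      rw [hφ n x (hx n (by omega))]
      exact ih x fun i hi => hx i (by omega)
  have c3 : ∀ N x i, i < N → x ∈ K i → cmpN φ N x = φ i x := by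
    intro N
    induction N with
    | zero => intro x i hi; omega
    | succ n ih =>
      intro x i hi hx
      change cmpN φ n (φ n x) = φ i x
      by_cases hin : i = n
      · subst hin
        apply c2
        intro j hj hxj
        have := hK _ _ _ hxj (hp i x hx)
        omega
      · rw [hφ n x fun h => hin (hK _ _ _ hx h)]
        exact ih x i (by omega) hx
  have tu : TendstoUniformly (cmpN φ) F atTop := by
    rw [Metric.tendstoUniformly_iff]
    intro ε hε
    obtain ⟨N, hN⟩ := hS ε hε
    filter_upwards [eventually_ge_atTop N] with n hn x
    by_cases h : ∃ i, x ∈ K i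
    · obtain ⟨i, hi⟩ := h
      by_cases hin : i < n
      · rw [c3 n x i hin hi, F1 i x hi, dist_self]; exact hε
      · rw [F1 i x hi, c2 n x]
        · exact hN i (by omega) _ (hp i x hi) _ hi
        · intro j hj hxj
          have := hK _ _ _ hxj hi
          omega
    · push Not at h
      rw [c2 n x fun i _ => h i, F2 x h, dist_self]; exact hε
  exact tu.continuous (Frequently.of_forall c1)

theorem glue_homeo {X : Type*} [MetricSpace X] (K : ℕ → Set X) (φ : ℕ → X ≃ₜ X)
    (hK : ∀ i j x, x ∈ K i → x ∈ K j → i = j) (hS : SmM K)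
    (hφ : ∀ i x, x ∉ K i → rhoH X (φ i) x = x) :
    ∃ F : X ≃ₜ X, (∀ i, ∀ x ∈ K i, rhoH X F x = rhoH X (φ i) x) ∧
      (∀ x, (∀ i, x ∉ K i) → rhoH X F x = x) := by
  obtain ⟨F, F1, F2, F3, F4⟩ := glue_perm K (fun i => rhoH X (φ i)) hK hφ
  refine ⟨⟨F, ?_, ?_⟩, F1, F2⟩
  · exact glue_cont K (fun i => φ i) F hK hS hφ
      (fun i x hx => (rho_pres (rhoH X) (hφ i) x).2 hx) (fun i => (φ i).continuous) F1 F2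
  · have hφ' : ∀ i x, x ∉ K i → rhoH X (φ i)⁻¹ x = x := fun i x hx =>
      rho_fix_inv (rhoH X) (hφ i x hx)
    exact glue_cont K (fun i => (φ i).symm) F.symm hK hS hφ'
      (fun i x hx => (rho_pres (rhoH X) (hφ' i) x).2 hx) (fun i => (φ i).symm.continuous) F3 F4

variable {X V : Type*} [MetricSpace X] [NormedAddCommGroup V] [NormedSpace ℝ V]

theorem radial (ι : X → V) (hι : Isometry ι) (e : V)
    (hmv : ∀ (x : X) (t τ : ℝ), 0 < t → ∃ y, ι y = t • ι x + τ • e)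
    (τ c r : ℝ) (hc : 0 < c) (hr : 0 < r) (η : ℝ ≃o ℝ) (hη : ∀ t, t ≤ r → η t = c * t) :
    ∃ m : X → X, Continuous m ∧ ∀ x, ∃ k : ℝ, ι (m x) = τ • e + k • (ι x - τ • e) ∧
      k * ‖ι x - τ • e‖ = η ‖ι x - τ • e‖ ∧ 0 < k := by
  let k : ℝ → ℝ := fun t => η (max t r) / max t r
  have mpos : ∀ t, 0 < max t r := fun t => lt_of_lt_of_le hr (le_max_right _ _)
  have kpos : ∀ t, 0 < k t := by
    intro t
    refine div_pos ?_ (mpos t)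
    have := η.monotone (le_max_right t r)
    rw [hη r le_rfl] at this
    exact lt_of_lt_of_le (by positivity) this
  have kc : Continuous k := by
    refine Continuous.div ?_ (by fun_prop) fun t => (mpos t).ne'
    exact η.continuous.comp (by fun_prop)
  have kt : ∀ t, k t * t = η t := by
    intro t
    rcases le_total t r with h | h
    · simp only [k, max_eq_right h, hη r le_rfl, hη t h]
      field_simp
    · have : 0 < t := by linarith
      simp only [k, max_eq_left h]
      field_simp
  have ex : ∀ x, ∃ y, ι y = τ • e + k ‖ι x - τ • e‖ • (ι x - τ • e) := by
    intro x
    obtain ⟨y, hy⟩ := hmv x (k ‖ι x - τ • e‖) ((1 - k ‖ι x - τ • e‖) * τ) (kpos _)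
    refine ⟨y, ?_⟩
    rw [hy]; module
  choose m hm using ex
  refine ⟨m, ?_, fun x => ⟨_, hm x, kt _, kpos _⟩⟩
  rw [hι.isEmbedding.continuous_iff]
  have : ι ∘ m = fun x => τ • e + k ‖ι x - τ • e‖ • (ι x - τ • e) := funext hm
  rw [this]
  have hic := hι.continuous
  fun_prop

theorem radial_inv (ι : X → V) (hι : Isometry ι) (p : V) (η : ℝ ≃o ℝ) (m m' : X → X)
    (h : ∀ x, ∃ k : ℝ, ι (m x) = p + k • (ι x - p) ∧
      k * ‖ι x - p‖ = η ‖ι x - p‖ ∧ 0 < k)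
    (h' : ∀ x, ∃ k : ℝ, ι (m' x) = p + k • (ι x - p) ∧
      k * ‖ι x - p‖ = η.symm ‖ι x - p‖ ∧ 0 < k) (x : X) : m' (m x) = x := by
  apply hι.injective
  obtain ⟨k, h1, h2, h3⟩ := h x
  obtain ⟨l, h4, h5, h6⟩ := h' (m x)
  rw [h1, add_sub_cancel_left] at h4 h5
  rw [norm_smul, Real.norm_of_nonneg h3.le, h2, OrderIso.symm_apply_apply, ← h2, ← mul_assoc] at h5
  rw [h4, smul_smul]
  by_cases hv : ι x - p = 0
  · rw [hv, smul_zero, add_zero]; exact (sub_eq_zero.1 hv).symm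
  · have : l * k = 1 := by
      have hn : ‖ι x - p‖ ≠ 0 := norm_ne_zero_iff.2 hv
      exact mul_right_cancel₀ hn (by rw [h5, one_mul])
    rw [this, one_smul, add_sub_cancel]

theorem exists_contr (ι : X → V) (hι : Isometry ι) (e : V)
    (hmv : ∀ (x : X) (t τ : ℝ), 0 < t → ∃ y, ι y = t • ι x + τ • e)
    (τ r : ℝ) (hr : 0 < r) :
    ∃ g : X ≃ₜ X, (∀ x, ‖ι x - τ • e‖ ≤ r → ι (g x) = τ • e + (1 / 10 : ℝ) • (ι x - τ • e)) ∧
      ∀ x, 2 * r ≤ ‖ι x - τ • e‖ → g x = x := by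
  set η : ℝ ≃o ℝ := infIso (supIso (affIso (1 / 10) 0 (by norm_num))
    (affIso (19 / 10) (-(18 / 10) * r) (by norm_num))) (supIso (affIso 1 0 one_pos)
      (affIso (1/10) 0 (by norm_num))) with hη
  have η1 : ∀ t, t ≤ r → η t = 1 / 10 * t := by
    intro t ht
    simp only [hη, supIso_apply, infIso_apply, affIso_apply]
    rw [sup_eq_left.2 (by linarith), inf_eq_left.2]
    · ring
    · exact le_sup_right
  have η2 : ∀ t, 2 * r ≤ t → η t = t := by
    intro t ht
    simp only [hη, supIso_apply, infIso_apply, affIso_apply]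
    rw [sup_eq_right.2 (by linarith), sup_eq_left.2 (by linarith), inf_eq_right.2 (by linarith)]
    ring
  have η3 : ∀ t, t ≤ 1 / 10 * r → η.symm t = 10 * t := by
    intro t ht
    rw [OrderIso.symm_apply_eq, η1 _ (by linarith)]; ring
  obtain ⟨m, m1, m2⟩ := radial ι hι e hmv τ (1 / 10) r (by norm_num) hr η η1
  obtain ⟨m', m1', m2'⟩ := radial ι hι e hmv τ 10 (1 / 10 * r) (by norm_num) (by positivity)
    η.symm η3
  refine ⟨⟨⟨m, m', radial_inv ι hι _ η m m' m2 m2',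
    radial_inv ι hι _ η.symm m' m m2' m2⟩, m1, m1'⟩, ?_, ?_⟩
  · intro x hx
    obtain ⟨k, h1, h2, h3⟩ := m2 x
    change ι (m x) = _
    rw [h1]
    rw [η1 _ hx] at h2
    by_cases hv : ι x - τ • e = 0
    · rw [hv, smul_zero, smul_zero]
    · rw [mul_right_cancel₀ (norm_ne_zero_iff.2 hv) h2]
  · intro x hx
    obtain ⟨k, h1, h2, h3⟩ := m2 x
    change m x = x
    apply hι.injective
    rw [h1]
    rw [η2 _ hx] at h2
    have hn : ‖ι x - τ • e‖ ≠ 0 := by linarith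
    have : k = 1 := mul_right_cancel₀ hn (by rw [h2, one_mul])
    rw [this, one_smul, add_sub_cancel]

theorem metric_case (ι : X → V) (hι : Isometry ι) (e : V) (he : ‖e‖ = 1)
    (hmv : ∀ (x : X) (t τ : ℝ), 0 < t → ∃ y, ι y = t • ι x + τ • e)
    (f : ℕ → X ≃ₜ X) (hf : ∀ n x, 1 < ‖ι x‖ → f n x = x) :
    ∃ a b s F : X ≃ₜ X, (∀ g ∈ ({a, b, s, F} : Set (X ≃ₜ X)), ∀ x, 500 < ‖ι x‖ → g x = x) ∧
      ∀ n, WL {a, b, s, F} (4 * Nat.log 2 (n + 1) + 4) (f n) := by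
  obtain ⟨a, a1, a2⟩ := exists_contr ι hι e hmv (-50) 200 (by norm_num)
  obtain ⟨b, b1, b2⟩ := exists_contr ι hι e hmv 50 200 (by norm_num)
  obtain ⟨s, s1, s2⟩ := exists_contr ι hι e hmv 2 3 (by norm_num)
  have tri : ∀ (v : V) (σ τ : ℝ), ‖v - σ • e‖ ≤ ‖v - τ • e‖ + |τ - σ| := by
    intro v σ τ
    have h1 : v - σ • e = (v - τ • e) + (τ - σ) • e := by module
    rw [h1]
    refine (norm_add_le _ _).trans ?_
    rw [norm_smul, he, mul_one, Real.norm_eq_abs]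
  have z : ∀ v : V, ‖v‖ = ‖v - (0 : ℝ) • e‖ := by intro v; simp
  have sh : ∀ (v w : V), w = v → ‖w‖ = ‖v‖ := by intro v w h; rw [h]
  have a3 : ∀ x, ‖ι x‖ ≤ 100 → ‖ι (a x) - (-50 : ℝ) • e‖ ≤ 15 := by
    intro x hx
    have h := tri (ι x) (-50) 0
    rw [← z] at h
    norm_num at h
    rw [a1 x (by norm_num; linarith), add_sub_cancel_left, norm_smul]
    norm_num
    linarith
  have b3 : ∀ x, ‖ι x‖ ≤ 100 → ‖ι (b x) - (50 : ℝ) • e‖ ≤ 15 := by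
    intro x hx
    have h := tri (ι x) 50 0
    rw [← z] at h
    norm_num at h
    rw [b1 x (by linarith), add_sub_cancel_left, norm_smul]
    norm_num
    linarith
  have a4 : ∀ x y, ‖ι x‖ ≤ 100 → ‖ι y‖ ≤ 100 → dist (a x) (a y) = 1 / 10 * dist x y := by
    intro x y hx hy
    have h := tri (ι x) (-50) 0
    have h' := tri (ι y) (-50) 0
    rw [← z] at h h'
    norm_num at h h'
    rw [← hι.dist_eq, ← hι.dist_eq x y, a1 x (by norm_num; linarith),
      a1 y (by norm_num; linarith), dist_add_left, dist_smul₀, dist_sub_right]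
    norm_num
  have b4 : ∀ x y, ‖ι x‖ ≤ 100 → ‖ι y‖ ≤ 100 → dist (b x) (b y) = 1 / 10 * dist x y := by
    intro x y hx hy
    have h := tri (ι x) 50 0
    have h' := tri (ι y) 50 0
    rw [← z] at h h'
    norm_num at h h'
    rw [← hι.dist_eq, ← hι.dist_eq x y, b1 x (by linarith),
      b1 y (by linarith), dist_add_left, dist_smul₀, dist_sub_right]
    norm_num
  have s3 : ∀ (j : ℕ) x, ‖ι x‖ ≤ 1 → ι (rhoH X (s ^ j) x) = (2 : ℝ) • e +
      ((1 / 10 : ℝ) ^ j) • (ι x - (2 : ℝ) • e) := by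
    intro j x hx
    have h := tri (ι x) 2 0
    rw [← z] at h
    norm_num at h
    induction j with
    | zero => simp
    | succ i ih =>
      rw [pow_succ', rho_mul, rhoH_apply s, s1, ih, add_sub_cancel_left, smul_smul, pow_succ']
      rw [ih, add_sub_cancel_left, norm_smul, norm_pow]
      have : ‖(1 / 10 : ℝ)‖ ^ i ≤ 1 := pow_le_one₀ (norm_nonneg _) (by norm_num)
      calc _ ≤ 1 * ‖ι x - (2 : ℝ) • e‖ := by gcongr
        _ ≤ 3 := by linarith
  have hDE : {x | ‖ι x - (2 : ℝ) • e‖ ≤ 6} ⊆ {x | ‖ι x‖ ≤ 100} := by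
    intro x hx
    have h := tri (ι x) 0 2
    rw [← z] at h
    norm_num at h hx ⊢
    linarith
  have haE : ∀ x ∈ {x | ‖ι x‖ ≤ 100}, rhoH X a x ∈ {x | ‖ι x‖ ≤ 100} ∧
      rhoH X a x ∉ {x | ‖ι x - (2 : ℝ) • e‖ ≤ 6} := by
    intro x hx
    have h0 := a3 x hx
    rw [rhoH_apply]
    refine ⟨?_, fun h2 => ?_⟩
    · have h := tri (ι (a x)) 0 (-50)
      rw [← z] at h
      norm_num at h h0 ⊢
      linarith
    · have h := tri ((0 : V) + (2 : ℝ) • e) (-50) 2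
      have h := tri (0 : V) 0 0
      have h5 : ‖(2 - (-50) : ℝ) • e‖ ≤ ‖ι (a x) - (-50 : ℝ) • e‖ + ‖ι (a x) - (2 : ℝ) • e‖ := by
        rw [show (2 - (-50) : ℝ) • e = (ι (a x) - (-50 : ℝ) • e) - (ι (a x) - (2 : ℝ) • e) by module]
        exact norm_sub_le _ _
      rw [norm_smul, he] at h5
      norm_num at h5 h0 h2
      linarith
  have hbE : ∀ x ∈ {x | ‖ι x‖ ≤ 100}, rhoH X b x ∈ {x | ‖ι x‖ ≤ 100} ∧
      rhoH X b x ∉ {x | ‖ι x - (2 : ℝ) • e‖ ≤ 6} := by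
    intro x hx
    have h0 := b3 x hx
    rw [rhoH_apply]
    refine ⟨?_, fun h2 => ?_⟩
    · have h := tri (ι (b x)) 0 50
      rw [← z] at h
      norm_num at h h0 ⊢
      linarith
    · have h5 : ‖(2 - 50 : ℝ) • e‖ ≤ ‖ι (b x) - (50 : ℝ) • e‖ + ‖ι (b x) - (2 : ℝ) • e‖ := by
        rw [show (2 - 50 : ℝ) • e = (ι (b x) - (50 : ℝ) • e) - (ι (b x) - (2 : ℝ) • e) by module]
        exact norm_sub_le _ _
      rw [norm_smul, he] at h5
      norm_num at h5 h0 h2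
      linarith
  have hWd : ∀ n : ℕ, 1 ≤ n → ∀ x ∈ {x | ‖ι x - (2 : ℝ) • e‖ ≤ 6},
      ∀ y ∈ {x | ‖ι x - (2 : ℝ) • e‖ ≤ 6},
      n * dist (rhoH X (Wd a b n) x) (rhoH X (Wd a b n) y) ≤ 12 := by
    intro n
    induction n using Nat.strong_induction_on with
    | _ n ih =>
      intro hn x hx y hy
      by_cases h1 : n = 1
      · subst h1
        rw [Wd_one, rho_one, rho_one, Nat.cast_one, one_mul, ← hι.dist_eq]
        calc _ ≤ dist (ι x) ((2 : ℝ) • e) + dist (ι y) ((2 : ℝ) • e) := dist_triangle_right _ _ _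
          _ ≤ 6 + 6 := by
            rw [dist_eq_norm, dist_eq_norm]
            exact add_le_add hx hy
          _ = 12 := by norm_num
      · have i1 := ih (n / 2) (by omega) (by omega) x hx y hy
        have m1 := Wd_mem (rhoH X) hDE haE hbE (n / 2) hx
        have m2 := Wd_mem (rhoH X) hDE haE hbE (n / 2) hy
        rw [Wd_step a b (by omega), rho_mul, rho_mul]
        generalize rhoH X (Wd a b (n / 2)) x = u at *
        generalize rhoH X (Wd a b (n / 2)) y = v at *
        have hd : dist (rhoH X (if n % 2 = 0 then a else b) u)
            (rhoH X (if n % 2 = 0 then a else b) v) = 1 / 10 * dist u v := by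
          split_ifs
          · exact a4 u v m1 m2
          · exact b4 u v m1 m2
        rw [hd]
        have hn3 : (n : ℝ) ≤ 3 * (n / 2 : ℕ) := by exact_mod_cast (by omega)
        have hd0 := dist_nonneg (x := u) (y := v)
        nlinarith
  obtain ⟨F, F1, F2⟩ := core (rhoH X) rhoH_inj SmM glue_homeo a b s
    {x | ‖ι x‖ ≤ 1} {x | ‖ι x - (2 : ℝ) • e‖ ≤ 6} {x | ‖ι x‖ ≤ 100}
    (by
      intro x hx
      have h := tri (ι x) 2 0
      rw [← z] at h
      norm_num at h hx ⊢
      linarith) hDE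
    (by
      intro x hx
      apply s2
      simp only [Set.mem_ofPred_eq, not_le] at hx
      linarith) haE hbE
    (by
      intro x hx y hy hxy
      have h1 := a3 x hx
      have h2 := b3 y hy
      rw [rhoH_apply, rhoH_apply] at hxy
      rw [hxy] at h1
      have h5 : ‖(50 - (-50) : ℝ) • e‖ ≤ ‖ι (b y) - (-50 : ℝ) • e‖ + ‖ι (b y) - (50 : ℝ) • e‖ := by
        rw [show (50 - (-50) : ℝ) • e = (ι (b y) - (-50 : ℝ) • e) - (ι (b y) - (50 : ℝ) • e)
          by module]
        exact norm_sub_le _ _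
      rw [norm_smul, he] at h5
      norm_num at h5 h1 h2
      linarith)
    (by
      intro j x hx hx2
      have h := tri (ι x) 2 0
      rw [← z] at h
      simp only [Set.mem_ofPred_eq] at hx hx2
      norm_num at h
      rw [s3 _ x hx] at hx2
      set v := ι x - (2 : ℝ) • e with hv
      have h5 : ‖(2 : ℝ) • e‖ ≤ ‖(2 : ℝ) • e + (1 / 10 : ℝ) ^ (j + 1) • v‖ +
          ‖(1 / 10 : ℝ) ^ (j + 1) • v‖ := by
        conv_lhs => rw [show (2 : ℝ) • e = ((2 : ℝ) • e + (1 / 10 : ℝ) ^ (j + 1) • v) -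
          ((1 / 10 : ℝ) ^ (j + 1) • v) by module]
        exact norm_sub_le _ _
      rw [norm_smul, he, norm_smul ((1 / 10 : ℝ) ^ (j + 1)), norm_pow] at h5
      have : ‖(1 / 10 : ℝ)‖ ^ j ≤ 1 := pow_le_one₀ (norm_nonneg _) (by norm_num)
      have h6 : ‖(1 / 10 : ℝ)‖ ^ j * ‖(1 / 10 : ℝ)‖ * ‖v‖ ≤ 1 * (1 / 10) * 3 := by
        gcongr
        · norm_num
        · linarith
      rw [← pow_succ] at h6
      norm_num at h5 h6 hx2
      linarith)
    (by
      intro ε hε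
      have ht : Tendsto (fun j : ℕ => (1 / 10 : ℝ) ^ j * 2) atTop (𝓝 (0 * 2)) :=
        (tendsto_pow_atTop_nhds_zero_of_lt_one (by norm_num) (by norm_num)).mul_const 2
      rw [zero_mul] at ht
      obtain ⟨N, hN⟩ := eventually_atTop.1 (ht.eventually_lt_const hε)
      refine ⟨N, fun i hi x hx y hy => ?_⟩
      refine lt_of_le_of_lt ?_ (hN i hi)
      simp only [Set.mem_ofPred_eq] at hx hy
      have e1 := s3 i _ hx
      have e2 := s3 i _ hy
      rw [rho_self_inv] at e1 e2
      rw [← hι.dist_eq, e1, e2, dist_add_left, dist_smul₀, dist_sub_right, norm_pow]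
      gcongr
      · norm_num
      · rw [dist_eq_norm]
        refine (norm_sub_le _ _).trans ?_
        linarith)
    (by
      intro ε hε
      obtain ⟨N, hN⟩ := exists_nat_gt (12 / ε)
      refine ⟨N, fun i hi x hx y hy => ?_⟩
      have h := hWd (i + 1) (by omega) _ hx _ hy
      rw [rho_self_inv, rho_self_inv] at h
      rw [div_lt_iff₀ hε] at hN
      have hi' : (N : ℝ) ≤ (i + 1 : ℕ) := by exact_mod_cast (by omega)
      by_contra! hd
      have : (N : ℝ) * ε ≤ (i + 1 : ℕ) * dist x y := by gcongr
      linarith)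
    f (by
      intro n x hx
      exact hf n x (by simpa using hx))
  refine ⟨a, b, s, F, ?_, ?_⟩
  · intro g hg x hx
    simp only [Set.mem_insert_iff, Set.mem_singleton_iff] at hg
    rcases hg with rfl | rfl | rfl | rfl
    · apply a2
      have h := tri (ι x) 0 (-50)
      rw [← z] at h
      norm_num at h ⊢
      linarith
    · apply b2
      have h := tri (ι x) 0 50
      rw [← z] at h
      norm_num at h ⊢
      linarith
    · apply s2
      have h := tri (ι x) 0 2
      rw [← z] at h
      norm_num at h ⊢
      linarith
    · apply F1
      simp only [Set.mem_ofPred_eq, not_le]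
      linarith
  · intro n
    set S : Set (X ≃ₜ X) := {a, b, s, F} with hS
    have aS : a ∈ S := by simp [hS]
    have bS : b ∈ S := by simp [hS]
    have sS : s ∈ S := by simp [hS]
    have FS : F ∈ S := by simp [hS]
    rw [F2 n]
    have w := Wd_WL aS bS (n + 1)
    have u := (w.inv.mul (WL.gen FS)).mul w
    exact (((u.mul (WL.gen sS)).mul u.inv).mul (WL.gen sS).inv).mono (by omega)

end Metric

section HalfLine
open NNReal

noncomputable def psiF (g : ℝ ≃o ℝ) (x : ℝ≥0) : ℝ≥0 :=
  if x = 0 then 0 else Real.toNNReal (Real.exp (12 - g (12 - Real.log x)))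

theorem psiF_zero (g : ℝ ≃o ℝ) : psiF g 0 = 0 := if_pos rfl

theorem psiF_coe (g : ℝ ≃o ℝ) {x : ℝ≥0} (hx : x ≠ 0) :
    (psiF g x : ℝ) = Real.exp (12 - g (12 - Real.log x)) := by
  rw [psiF, if_neg hx, Real.coe_toNNReal _ (Real.exp_pos _).le]

theorem psiF_ne (g : ℝ ≃o ℝ) {x : ℝ≥0} (hx : x ≠ 0) : psiF g x ≠ 0 := by
  intro h
  have := psiF_coe g hx
  rw [h] at this
  exact (Real.exp_pos _).ne this

theorem psiF_comp (g g' : ℝ ≃o ℝ) (x : ℝ≥0) : psiF g (psiF g' x) = psiF (g * g') x := by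
  by_cases hx : x = 0
  · subst hx; simp [psiF_zero]
  · apply NNReal.coe_injective
    rw [psiF_coe g (psiF_ne g' hx), psiF_coe g' hx, psiF_coe _ hx, Real.log_exp, sub_sub_cancel]
    rfl

theorem psiF_one (x : ℝ≥0) : psiF 1 x = x := by
  by_cases hx : x = 0
  · subst hx; simp [psiF_zero]
  · apply NNReal.coe_injective
    have : (0 : ℝ) < x := by positivity
    rw [psiF_coe _ hx]
    change Real.exp (12 - (12 - Real.log x)) = x
    rw [sub_sub_cancel, Real.exp_log this]

theorem psiF_mono (g : ℝ ≃o ℝ) : Monotone (psiF g) := by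
  intro x y hxy
  by_cases hx : x = 0
  · subst hx; simp [psiF_zero]
  · have hx0 : (0 : ℝ) < x := by positivity
    have hy : y ≠ 0 := by
      rintro rfl
      exact hx (le_antisymm hxy bot_le)
    rw [← NNReal.coe_le_coe, psiF_coe _ hx, psiF_coe _ hy]
    have h1 : Real.log x ≤ Real.log y := Real.log_le_log hx0 hxy
    have h2 := g.monotone (show 12 - Real.log y ≤ 12 - Real.log x by linarith)
    exact Real.exp_le_exp.2 (by linarith)

noncomputable def psiE (g : ℝ ≃o ℝ) : ℝ≥0 ≃ ℝ≥0 where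
  toFun := psiF g
  invFun := psiF g⁻¹
  left_inv x := by rw [psiF_comp, inv_mul_cancel, psiF_one]
  right_inv x := by rw [psiF_comp, mul_inv_cancel, psiF_one]

noncomputable def Psi : (ℝ ≃o ℝ) →* (ℝ≥0 ≃ₜ ℝ≥0) where
  toFun g := ((psiE g).toOrderIso (psiF_mono g) (psiF_mono g⁻¹)).toHomeomorph
  map_one' := Homeomorph.ext fun x => psiF_one x
  map_mul' g g' := Homeomorph.ext fun x => (psiF_comp g g' x).symm

theorem Psi_apply (g : ℝ ≃o ℝ) (x : ℝ≥0) : Psi g x = psiF g x := rfl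

theorem homeo_strictMono (h : ℝ≥0 ≃ₜ ℝ≥0) : StrictMono h := by
  rcases h.continuous.strictMono_of_inj h.injective with h1 | h1
  · exact h1
  · exfalso
    obtain ⟨x, hx⟩ := h.surjective (h 0 + 1)
    have := h1.antitone (show 0 ≤ x from bot_le)
    rw [hx] at this
    have h2 : (h 0 : ℝ) + 1 ≤ h 0 := by exact_mod_cast this
    linarith

theorem homeo_zero (h : ℝ≥0 ≃ₜ ℝ≥0) : h 0 = 0 := by
  obtain ⟨x, hx⟩ := h.surjective 0
  have := (homeo_strictMono h).monotone (show 0 ≤ x from bot_le)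
  rw [hx] at this
  exact le_antisymm this bot_le

noncomputable def liftF (h : ℝ≥0 ≃ₜ ℝ≥0) (y : ℝ) : ℝ :=
  12 - Real.log (h (Real.toNNReal (Real.exp (12 - y))))

theorem lift_exp (h : ℝ≥0 ≃ₜ ℝ≥0) (y : ℝ) : Real.toNNReal (Real.exp (12 - liftF h y)) =
    h (Real.toNNReal (Real.exp (12 - y))) := by
  have h0 : 0 < Real.toNNReal (Real.exp (12 - y)) := Real.toNNReal_pos.2 (Real.exp_pos _)
  have h1 := homeo_strictMono h h0
  rw [homeo_zero] at h1
  have h2 : (0 : ℝ) < h (Real.toNNReal (Real.exp (12 - y))) := by exact_mod_cast h1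
  rw [liftF, sub_sub_cancel, Real.exp_log h2, Real.toNNReal_coe]

theorem liftF_symm (h : ℝ≥0 ≃ₜ ℝ≥0) (y : ℝ) : liftF h.symm (liftF h y) = y := by
  conv_lhs => rw [liftF, lift_exp, h.symm_apply_apply, Real.coe_toNNReal _ (Real.exp_pos _).le,
    Real.log_exp, sub_sub_cancel]

theorem liftF_mono (h : ℝ≥0 ≃ₜ ℝ≥0) : Monotone (liftF h) := by
  intro x y hxy
  have h1 : Real.toNNReal (Real.exp (12 - y)) ≤ Real.toNNReal (Real.exp (12 - x)) :=
    Real.toNNReal_le_toNNReal (Real.exp_le_exp.2 (by linarith))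
  have h2 := (homeo_strictMono h).monotone h1
  rw [← lift_exp, ← lift_exp] at h2
  rw [Real.toNNReal_le_toNNReal_iff (Real.exp_pos _).le, Real.exp_le_exp] at h2
  linarith

noncomputable def liftO (h : ℝ≥0 ≃ₜ ℝ≥0) : ℝ ≃o ℝ :=
  (Equiv.mk (liftF h) (liftF h.symm) (liftF_symm h) (liftF_symm h.symm)).toOrderIso
    (liftF_mono h) (liftF_mono h.symm)

theorem liftO_apply (h : ℝ≥0 ≃ₜ ℝ≥0) (y : ℝ) : liftO h y = liftF h y := rfl

theorem Psi_lift (h : ℝ≥0 ≃ₜ ℝ≥0) : Psi (liftO h) = h := by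
  ext x
  rw [Psi_apply]
  by_cases hx : x = 0
  · subst hx; rw [psiF_zero, homeo_zero]
  · have : (0 : ℝ) < x := by positivity
    rw [psiF, if_neg hx, liftO_apply, lift_exp, sub_sub_cancel, Real.exp_log this,
      Real.toNNReal_coe]

theorem half_line (f : ℕ → ℝ≥0 ≃ₜ ℝ≥0) (hf : ∀ n x, 1 < x → f n x = x) :
    ∃ a b s F T : ℝ≥0 ≃ₜ ℝ≥0, (∃ R : ℝ≥0, ∀ g ∈ ({a, b, s, F, T} : Set (ℝ≥0 ≃ₜ ℝ≥0)),
      ∀ x, R ≤ x → g x = x) ∧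
      ∀ n, 1 ≤ n → WL {a, b, s, F, T}
        (4 * (Nat.log 2 (2 * n - 1) + Nat.log 2 (2 * n)) + 10 + 2 * (Nat.log 2 n / 16)) (f n) := by
  obtain ⟨a, b, s, F, T, h1, h2⟩ := order_thm (fun n => liftO (f n)) (by
    intro n
    have key : ∀ x, x < 12 → liftO (f n) x = x := by
      intro x hx
      rw [liftO_apply, liftF, hf n _ (Real.one_lt_toNNReal.2 (Real.one_lt_exp_iff.2 (by linarith))),
        Real.coe_toNNReal _ (Real.exp_pos _).le, Real.log_exp, sub_sub_cancel]
    intro x hx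
    rcases hx.lt_or_eq with hx | rfl
    · exact key x hx
    · have hcl : IsClosed {x : ℝ | liftO (f n) x = x} :=
        isClosed_eq (liftO (f n)).continuous continuous_id
      have : closure (Set.Iio (12 : ℝ)) ⊆ {x : ℝ | liftO (f n) x = x} :=
        closure_minimal (fun x hx => key x hx) hcl
      rw [closure_Iio] at this
      exact this (le_refl (12 : ℝ)))
  have im : Psi '' {a, b, s, F, T} = {Psi a, Psi b, Psi s, Psi F, Psi T} := by
    simp [Set.image_insert_eq]
  refine ⟨Psi a, Psi b, Psi s, Psi F, Psi T, ⟨Real.toNNReal (Real.exp 12), ?_⟩, ?_⟩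
  · rw [← im]
    rintro _ ⟨g, hg, rfl⟩ x hx
    have hx' : Real.exp 12 ≤ x := Real.toNNReal_le_iff_le_coe.1 hx
    have hx0 : (0 : ℝ) < x := lt_of_lt_of_le (Real.exp_pos _) hx'
    have hl := (Real.le_log_iff_exp_le hx0).2 hx'
    apply NNReal.coe_injective
    rw [Psi_apply, psiF_coe _ (by exact_mod_cast hx0.ne'), h1 g hg _ (by linarith),
      sub_sub_cancel, Real.exp_log hx0]
  · intro n hn
    rw [← im]
    have := (h2 n hn).map Psi
    rwa [Psi_lift] at this

/-- identification of the one-dimensional half-space with the half-line -/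
noncomputable def kap (d : ℕ) [NeZero d] (hd : ∀ i : Fin d, i = 0) : HalfSpace d ≃ₜ ℝ≥0 where
  toFun x := ⟨x.1 0, x.2⟩
  invFun t := ⟨WithLp.toLp 2 fun _ => (t : ℝ), t.2⟩
  left_inv x := by
    apply Subtype.ext
    ext i
    rw [hd i]; rfl
  right_inv t := rfl
  continuous_toFun := by fun_prop
  continuous_invFun := by fun_prop

theorem kap_norm (d : ℕ) [NeZero d] (hd : ∀ i : Fin d, i = 0) (x : HalfSpace d) :
    ‖x.1‖ = kap d hd x := by
  rw [EuclideanSpace.norm_eq, Fintype.sum_eq_single 0 (fun i hi => absurd (hd i) hi),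
    Real.norm_eq_abs, sq_abs, Real.sqrt_sq x.2]
  rfl

def conjH {X Y : Type*} [TopologicalSpace X] [TopologicalSpace Y] (κ : X ≃ₜ Y) :
    (Y ≃ₜ Y) →* (X ≃ₜ X) where
  toFun g := (κ.trans g).trans κ.symm
  map_one' := Homeomorph.ext fun x => κ.symm_apply_apply x
  map_mul' g h := Homeomorph.ext fun x => by
    change κ.symm (g (h (κ x))) = κ.symm (g (κ (κ.symm (h (κ x)))))
    rw [κ.apply_symm_apply]

theorem off_support {X : Type*} [TopologicalSpace X] {g : X ≃ₜ X} {x : X}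
    (h : x ∉ homeoSupport g) : g x = x := by
  by_contra h2
  exact h (subset_closure h2)

theorem half_one (d : ℕ) [NeZero d] (hd : ∀ i : Fin d, i = 0)
    (f : ℕ → (HalfSpace d ≃ₜ HalfSpace d))
    (hf : ∀ n, homeoSupport (f n) ⊆ {x : HalfSpace d | ‖x.1‖ ≤ 1}) :
    ∃ 𝒢 : Finset (HalfSpace d ≃ₜ HalfSpace d),
        𝒢.card ≤ 5 ∧ (∀ g ∈ 𝒢, IsCompact (homeoSupport g)) ∧
        (∀ n, f n ∈ Subgroup.closure (𝒢 : Set _)) ∧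
        ∀ n : ℕ, 1 ≤ n →
          (wordLength (𝒢 : Set _) (f n) : ℝ) ≤ 14 * Real.log n + 14 := by
  classical
  set κ := kap d hd with hκ
  let f' : ℕ → HalfSpace d ≃ₜ HalfSpace d := fun n =>
    if n < 1024 then f n else if n = 1024 then f 0 else f (n - 1)
  obtain ⟨a, b, s, F, T, ⟨R, h1⟩, h2⟩ := half_line (fun n => conjH κ.symm (f' n)) (by
    have hf1 : ∀ n x, 1 < x → conjH κ.symm (f n) x = x := by
      intro n x hx
      change κ (f n (κ.symm x)) = x
      rw [off_support, κ.apply_symm_apply]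
      intro hs
      have := hf n hs
      simp only [Set.mem_ofPred_eq] at this
      rw [kap_norm d hd, ← hκ, κ.apply_symm_apply] at this
      exact absurd (by exact_mod_cast this) (not_le.2 hx)
    intro n x hx
    simp only [f']
    split_ifs
    · exact hf1 _ x hx
    · exact hf1 _ x hx
    · exact hf1 _ x hx)
  set c := conjH κ with hc
  have im : c '' {a, b, s, F, T} = {c a, c b, c s, c F, c T} := by
    simp [Set.image_insert_eq]
  have cc : ∀ g : HalfSpace d ≃ₜ HalfSpace d, c (conjH κ.symm g) = g := by
    intro g
    apply Homeomorph.ext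
    intro x
    change κ.symm (κ (g (κ.symm (κ x)))) = g x
    rw [κ.symm_apply_apply, κ.symm_apply_apply]
  have w : ∀ n, 1 ≤ n → WL {c a, c b, c s, c F, c T}
        (4 * (Nat.log 2 (2 * n - 1) + Nat.log 2 (2 * n)) + 10 + 2 * (Nat.log 2 n / 16)) (f' n) := by
    intro n hn
    have := (h2 n hn).map c
    rwa [im, cc] at this
  have hcoe : ((({c a, c b, c s, c F, c T} : Finset (HalfSpace d ≃ₜ HalfSpace d))) :
      Set (HalfSpace d ≃ₜ HalfSpace d)) = {c a, c b, c s, c F, c T} := by simp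
  have fsm : ∀ n, n < 1024 → f' n = f n := fun n hn => if_pos hn
  have flg : ∀ n, 1024 ≤ n → f' (n + 1) = f n := by
    intro n hn
    simp only [f']
    rw [if_neg (by omega), if_neg (by omega), Nat.add_sub_cancel]
  refine ⟨{c a, c b, c s, c F, c T}, Finset.card_le_five, ?_, ?_, ?_⟩
  · intro g hg
    rw [← Finset.mem_coe, hcoe, ← im] at hg
    obtain ⟨g, hg, rfl⟩ := hg
    have hK : IsCompact (κ.symm '' Set.Icc 0 R) := isCompact_Icc.image κ.symm.continuous
    refine hK.of_isClosed_subset isClosed_closure (closure_minimal ?_ hK.isClosed)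
    intro x hx
    refine ⟨κ x, ⟨bot_le, ?_⟩, κ.symm_apply_apply x⟩
    by_contra hR
    apply hx
    change κ.symm (g (κ x)) = x
    rw [h1 g hg _ (not_le.1 hR).le, κ.symm_apply_apply]
  · intro n
    rw [hcoe]
    by_cases h0 : n = 0
    · subst h0
      exact (w 1024 (by norm_num)).mem_closure
    by_cases hn : n < 1024
    · rw [← fsm n hn]; exact (w n (by omega)).mem_closure
    · rw [← flg n (by omega)]; exact (w (n + 1) (by omega)).mem_closure
  · intro n hn1
    rw [hcoe]
    by_cases hn : n < 1024
    · rw [← fsm n hn]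
      exact le_trans (by exact_mod_cast (w n hn1).wordLength_le) (num_one n hn1)
    · rw [← flg n (by omega)]
      exact le_trans (by exact_mod_cast (w (n + 1) (by omega)).wordLength_le)
        (num_two n (by omega))

end HalfLine

theorem metric_final {X V : Type*} [MetricSpace X] [ProperSpace X] [NormedAddCommGroup V]
    [NormedSpace ℝ V] (ι : X → V) (hι : Isometry ι) (e : V) (he : ‖e‖ = 1)
    (hmv : ∀ (x : X) (t τ : ℝ), 0 < t → ∃ y, ι y = t • ι x + τ • e)
    (f : ℕ → X ≃ₜ X) (hf : ∀ n, homeoSupport (f n) ⊆ {x | ‖ι x‖ ≤ 1}) :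
    ∃ 𝒢 : Finset (X ≃ₜ X),
        𝒢.card ≤ 5 ∧ (∀ g ∈ 𝒢, IsCompact (homeoSupport g)) ∧
        (∀ n, f n ∈ Subgroup.closure (𝒢 : Set _)) ∧
        ∀ n : ℕ, 1 ≤ n →
          (wordLength (𝒢 : Set _) (f n) : ℝ) ≤ 14 * Real.log n + 14 := by
  classical
  obtain ⟨a, b, s, F, h1, w⟩ := metric_case ι hι e he hmv f (fun n x hx => by
    apply off_support
    intro h
    exact absurd (hf n h) (not_le.2 hx))
  have hcoe : ((({a, b, s, F} : Finset (X ≃ₜ X))) : Set (X ≃ₜ X)) = {a, b, s, F} := by simp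
  refine ⟨{a, b, s, F}, Finset.card_le_four.trans (by norm_num), ?_, ?_, ?_⟩
  · intro g hg
    rw [← Finset.mem_coe, hcoe] at hg
    have hcl : IsClosed {x | ‖ι x‖ ≤ 500} :=
      isClosed_le (continuous_norm.comp hι.continuous) continuous_const
    have hK : IsCompact {x | ‖ι x‖ ≤ 500} := by
      apply Metric.isCompact_of_isClosed_isBounded hcl
      rw [Metric.isBounded_iff]
      refine ⟨1000, fun x hx y hy => ?_⟩
      simp only [Set.mem_ofPred_eq] at hx hy
      rw [← hι.dist_eq, dist_eq_norm]
      refine (norm_sub_le _ _).trans ?_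
      linarith
    refine hK.of_isClosed_subset isClosed_closure (closure_minimal ?_ hcl)
    intro x hx
    by_contra hR
    exact hx (h1 g hg x (not_le.1 hR))
  · intro n
    rw [hcoe]
    exact (w n).mem_closure
  · intro n hn
    rw [hcoe]
    exact le_trans (by exact_mod_cast (w n).wordLength_le) (num_metric n hn)

/-- **Lemma (after Avila).** For every sequence `(f_n)` of homeomorphisms of `ℝ^d`
supported in the closed unit ball, there is a finite set `𝒢` of compactly supported
homeomorphisms of `ℝ^d` with `#𝒢 ≤ 5`, such that every `f_n` lies in the group generated
by `𝒢` and `l_𝒢(f_n) ≤ 14·log n + 14` for every `n ≥ 1`; and the same statement holds for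
homeomorphisms of the half-space `H^d` supported in the unit half-ball. -/
theorem avila_lemma (d : ℕ) [NeZero d] :
    (∀ f : ℕ → (EuclideanSpace ℝ (Fin d) ≃ₜ EuclideanSpace ℝ (Fin d)),
      (∀ n, homeoSupport (f n) ⊆ Metric.closedBall 0 1) →
      ∃ 𝒢 : Finset (EuclideanSpace ℝ (Fin d) ≃ₜ EuclideanSpace ℝ (Fin d)),
        𝒢.card ≤ 5 ∧ (∀ g ∈ 𝒢, IsCompact (homeoSupport g)) ∧
        (∀ n, f n ∈ Subgroup.closure (𝒢 : Set _)) ∧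
        ∀ n : ℕ, 1 ≤ n →
          (wordLength (𝒢 : Set _) (f n) : ℝ) ≤ 14 * Real.log n + 14) ∧
    (∀ f : ℕ → (HalfSpace d ≃ₜ HalfSpace d),
      (∀ n, homeoSupport (f n) ⊆ {x : HalfSpace d | ‖x.1‖ ≤ 1}) →
      ∃ 𝒢 : Finset (HalfSpace d ≃ₜ HalfSpace d),
        𝒢.card ≤ 5 ∧ (∀ g ∈ 𝒢, IsCompact (homeoSupport g)) ∧
        (∀ n, f n ∈ Subgroup.closure (𝒢 : Set _)) ∧
        ∀ n : ℕ, 1 ≤ n →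
          (wordLength (𝒢 : Set _) (f n) : ℝ) ≤ 14 * Real.log n + 14) := by
  constructor
  · intro f hf
    refine metric_final (V := EuclideanSpace ℝ (Fin d)) id isometry_id
      (EuclideanSpace.single 0 1) (by simp) (fun x t τ _ => ⟨_, rfl⟩) f ?_
    intro n x hx
    simpa using hf n hx
  · intro f hf
    by_cases hd : ∀ i : Fin d, i = 0
    · exact half_one d hd f hf
    · push Not at hd
      obtain ⟨i, hi⟩ := hd
      have hcl : IsClosed {x : EuclideanSpace ℝ (Fin d) | 0 ≤ x 0} :=
        isClosed_le continuous_const (by fun_prop)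
      have : ProperSpace (HalfSpace d) := ProperSpace.of_isClosed hcl
      refine metric_final (X := HalfSpace d) (V := EuclideanSpace ℝ (Fin d)) Subtype.val
        isometry_subtype_coe (EuclideanSpace.single i 1) (by simp) ?_ f hf
      intro x t τ ht
      refine ⟨⟨t • x.1 + τ • EuclideanSpace.single i 1, ?_⟩, rfl⟩
      have h0 : (EuclideanSpace.single i (1 : ℝ)) 0 = 0 := by
        simp [hi.symm]
      simp only [PiLp.add_apply, PiLp.smul_apply, h0, smul_eq_mul, mul_zero, add_zero]
      exact mul_nonneg ht.le x.2
end

section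
/- Let f ∈ Homeo₀(𝔸) with a lift f̃ whose rotation set is the singleton {p/q}, where p, q are integers with either (q > 0, 0 < p < q, and p, q coprime) or (p = 0 and q = 1). Then for every integer n > 1 there exists a family (γ_i)_{i ∈ ℤ/nqℤ} of pairwise disjoint simple curves joining the two boundary components of 𝔸 such that for every index i: (1) γ_i lies strictly between γ_{i−1} and γ_{i+1}; (2) f(γ_i) lies strictly between γ_{i+np−1} and γ_{i+np+1}. -/
open Filter Topology Set

/-- The closed annulus `𝔸 = (ℝ/ℤ) × [0,1]`. -/
noncomputable abbrev Annulus : Type := AddCircle (1 : ℝ) × unitInterval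

/-- The strip `ℝ × [0,1]`, universal cover of the annulus. -/
abbrev Strip : Type := ℝ × unitInterval

/-- The covering map `π : ℝ × [0,1] → 𝔸`. -/
noncomputable def pA : Strip → Annulus := fun x => ((x.1 : AddCircle (1 : ℝ)), x.2)

/-- `ft` is a lift of `f` to the strip. -/
def IsLiftA (f : Annulus ≃ₜ Annulus) (ft : Strip ≃ₜ Strip) : Prop :=
  pA ∘ ft = f ∘ pA

/-- The rotation set of a homeomorphism `ft` of the strip: the set of limits of sequences
`(p₁(ftⁿᵏ(x̃ₖ)) − p₁(x̃ₖ))/nₖ` with `nₖ → +∞`. -/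
def rotSet (ft : Strip ≃ₜ Strip) : Set ℝ :=
  {r | ∃ (nk : ℕ → ℕ) (xk : ℕ → Strip), Tendsto nk atTop atTop ∧
    Tendsto (fun k => (((⇑ft)^[nk k] (xk k)).1 - (xk k).1) / nk k) atTop (nhds r)}

/-- A simple curve in the annulus joining the two boundary components. -/
def JoinsBoundaryA (γ : unitInterval → Annulus) : Prop :=
  Continuous γ ∧ Function.Injective γ ∧
    ((γ 0).2 : ℝ) = 0 ∧ ((γ 1).2 : ℝ) = 1 ∧
    ∀ t : unitInterval, t ≠ 0 → t ≠ 1 → ((γ t).2 : ℝ) ∈ Set.Ioo (0 : ℝ) 1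

/-- A simple curve in the strip joining the two boundary components. -/
def JoinsBoundaryS (γ : unitInterval → Strip) : Prop :=
  Continuous γ ∧ Function.Injective γ ∧
    ((γ 0).2 : ℝ) = 0 ∧ ((γ 1).2 : ℝ) = 1 ∧
    ∀ t : unitInterval, t ≠ 0 → t ≠ 1 → ((γ t).2 : ℝ) ∈ Set.Ioo (0 : ℝ) 1

/-- `γt` is a (continuous) lift to the strip of the curve `γ` in the annulus. -/
def IsCurveLift (γ : unitInterval → Annulus) (γt : unitInterval → Strip) : Prop :=
  Continuous γt ∧ pA ∘ γt = γ

/-- The point `x` lies strictly on the right of the curve `γt` of the strip: it belongs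
to the connected component of the complement of `γt` containing all the far-right points
(for a curve oriented from the bottom boundary to the top boundary of the strip, the
right-hand side is towards `x₁ = +∞`). -/
def OnRightS (γt : unitInterval → Strip) (x : Strip) : Prop :=
  ∃ q : Strip, (∀ t, (γt t).1 < q.1) ∧ x ∈ connectedComponentIn (Set.range γt)ᶜ q

/-- The point `x` lies strictly on the left of the curve `γt` of the strip. -/
def OnLeftS (γt : unitInterval → Strip) (x : Strip) : Prop :=
  ∃ q : Strip, (∀ t, q.1 < (γt t).1) ∧ x ∈ connectedComponentIn (Set.range γt)ᶜ q

/-- The set `A` lies strictly on the right of the curve `γt` of the strip. -/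
def StrictlyRightS (γt : unitInterval → Strip) (A : Set Strip) : Prop :=
  ∀ x ∈ A, OnRightS γt x

/-- The set `A` lies strictly on the left of the curve `γt` of the strip. -/
def StrictlyLeftS (γt : unitInterval → Strip) (A : Set Strip) : Prop :=
  ∀ x ∈ A, OnLeftS γt x

/-- The curve `γ₂` lies strictly between the curves `γ₁` and `γ₃` (three pairwise
disjoint simple curves joining the two boundary components of the annulus): there are
lifts `γt₁`, `γt₂` of `γ₁`, `γ₂` such that `γt₂` lies strictly on the right of `γt₁`
and, for every lift `γt₃` of `γ₃` lying strictly on the right of `γt₁`, the curve `γt₂`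
lies strictly on the left of `γt₃`. -/
def StrictlyBetween (γ₁ γ₂ γ₃ : unitInterval → Annulus) : Prop :=
  ∃ γt₁ γt₂ : unitInterval → Strip, IsCurveLift γ₁ γt₁ ∧ IsCurveLift γ₂ γt₂ ∧
    StrictlyRightS γt₁ (Set.range γt₂) ∧
    ∀ γt₃ : unitInterval → Strip, IsCurveLift γ₃ γt₃ →
      StrictlyRightS γt₁ (Set.range γt₃) → StrictlyLeftS γt₃ (Set.range γt₂)

lemma const_of_int {X : Type*} [TopologicalSpace X] [PreconnectedSpace X] (f : X → ℝ)
    (hf : Continuous f) (hi : ∀ x, ∃ k : ℤ, f x = k) (x y : X) : f x = f y := by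
  choose k hk using hi
  have hkc : Continuous k := by
    have h1 : Continuous (fun x => (k x : ℝ)) := by
      have : (fun x => (k x : ℝ)) = f := by funext x; exact (hk x).symm
      rw [this]; exact hf
    exact Int.isClosedEmbedding_coe_real.isEmbedding.continuous_iff.mpr h1
  have := PreconnectedSpace.constant (inferInstance : PreconnectedSpace X) hkc (x := x) (y := y)
  rw [hk x, hk y, this]

def Reach (U : Set Strip) (y : Strip) : Prop :=
  ∃ (a b : ℝ) (γ : ℝ → Strip), a ≤ b ∧ ContinuousOn γ (Icc a b) ∧ InjOn γ (Icc a b) ∧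
    (∀ t ∈ Icc a b, γ t ∈ U) ∧ ((γ a).2 : ℝ) = 0 ∧ γ b = y

lemma reach_extend {U : Set Strip} (σ : ℝ → Strip) (hσc : ContinuousOn σ (Icc 0 1))
    (hσi : InjOn σ (Icc 0 1)) (hσU : ∀ t ∈ Icc (0:ℝ) 1, σ t ∈ U) (h : Reach U (σ 0)) :
    Reach U (σ 1) := by
  obtain ⟨a, b, γ, hab, hc, hi, hU, h0, hb⟩ := h
  have hcl : IsClosed (σ '' Icc 0 1) := (isCompact_Icc.image_of_continuousOn hσc).isClosed
  have hA : IsClosed (Icc a b ∩ γ ⁻¹' (σ '' Icc 0 1)) :=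
    hc.preimage_isClosed_of_isClosed isClosed_Icc hcl
  have hAc : IsCompact (Icc a b ∩ γ ⁻¹' (σ '' Icc 0 1)) :=
    isCompact_Icc.of_isClosed_subset hA inter_subset_left
  obtain ⟨s, ⟨hs, τ, hτ, hτs⟩, hmin⟩ := hAc.exists_isLeast
    ⟨b, right_mem_Icc.mpr hab, 0, left_mem_Icc.mpr zero_le_one, hb.symm⟩
  have e1 : ∀ t, s ≤ t → (if t ≤ s then γ t else σ (τ + (t - s))) = σ (τ + (t - s)) := by
    intro t ht
    split_ifs with h
    · have : t = s := le_antisymm h ht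
      subst this; simp [hτs]
    · rfl
  refine ⟨a, s + (1 - τ), fun t => if t ≤ s then γ t else σ (τ + (t - s)), ?_, ?_, ?_, ?_, ?_, ?_⟩
  · linarith [hs.1, hτ.2]
  · have : Icc a (s + (1 - τ)) = Icc a s ∪ Icc s (s + (1 - τ)) := by
      rw [Icc_union_Icc_eq_Icc hs.1]; linarith [hτ.2]
    rw [this]
    apply ContinuousOn.union_of_isClosed _ _ isClosed_Icc isClosed_Icc
    · apply (hc.mono (Icc_subset_Icc_right hs.2)).congr
      intro t ht; simp [ht.2]
    · have : ContinuousOn (fun t => σ (τ + (t - s))) (Icc s (s + (1 - τ))) := by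
        apply hσc.comp (by fun_prop)
        intro t ht; exact ⟨by linarith [ht.1, hτ.1], by linarith [ht.2]⟩
      exact this.congr (fun t ht => e1 t ht.1)
  · have key : ∀ t ∈ Icc a (s + (1 - τ)), ∀ t' ∈ Icc a (s + (1 - τ)), t ≤ s → s < t' →
        γ t = σ (τ + (t' - s)) → False := by
      intro t ht t' ht' h1 h2 he
      have m : τ + (t' - s) ∈ Icc (0:ℝ) 1 := ⟨by linarith [hτ.1], by linarith [ht'.2]⟩
      have : s ≤ t := hmin ⟨⟨ht.1, h1.trans hs.2⟩, _, m, he.symm⟩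
      have : t = s := le_antisymm h1 this
      subst this
      have := hσi hτ m (hτs.trans he)
      linarith
    intro t ht t' ht' he
    simp only at he
    split_ifs at he with h1 h2 h2
    · exact hi ⟨ht.1, h1.trans hs.2⟩ ⟨ht'.1, h2.trans hs.2⟩ he
    · exact (key t ht t' ht' h1 (not_le.mp h2) he).elim
    · exact (key t' ht' t ht h2 (not_le.mp h1) he.symm).elim
    · push Not at h1 h2
      have := hσi (x₁ := τ + (t - s)) (x₂ := τ + (t' - s))
        ⟨by linarith [hτ.1], by linarith [ht.2]⟩ ⟨by linarith [hτ.1], by linarith [ht'.2]⟩ he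
      linarith
  · intro t ht
    simp only
    split_ifs with h1
    · exact hU t ⟨ht.1, h1.trans hs.2⟩
    · push Not at h1
      exact hσU _ ⟨by linarith [hτ.1], by linarith [ht.2]⟩
  · simp [hs.1, h0]
  · have := e1 (s + (1 - τ)) (by linarith [hτ.2])
    simp only [this]
    congr 1; ring

lemma reach_ball {U : Set Strip} (hU : IsOpen U) (y : Strip) (hy : y ∈ U) :
    ∃ r > 0, ∀ z ∈ Metric.ball y r, ∀ w ∈ Metric.ball y r, Reach U z → Reach U w := by
  obtain ⟨r, hr, hb⟩ := Metric.isOpen_iff.mp hU y hy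
  refine ⟨r, hr, fun z hz w hw h => ?_⟩
  by_cases hzw : z = w
  · exact hzw ▸ h
  have hmem : ∀ t ∈ Icc (0:ℝ) 1, (1 - t) * (z.2:ℝ) + t * w.2 ∈ Icc (0:ℝ) 1 := by
    intro t ht
    have := z.2.2; have := w.2.2
    have h := (convex_Icc (0:ℝ) 1) z.2.2 w.2.2 (sub_nonneg.mpr ht.2) ht.1 (by ring)
    simpa using h
  let σ : ℝ → Strip := fun t => ((1 - t) * z.1 + t * w.1,
    projIcc 0 1 zero_le_one ((1 - t) * (z.2:ℝ) + t * w.2))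
  have hσ2 : ∀ t ∈ Icc (0:ℝ) 1, ((σ t).2 : ℝ) = (1 - t) * (z.2:ℝ) + t * w.2 := by
    intro t ht
    simp only [σ]
    rw [projIcc_of_mem _ (hmem t ht)]
  have s0 : σ 0 = z := by
    apply Prod.ext
    · simp [σ]
    · apply Subtype.ext; rw [hσ2 0 (by simp)]; simp
  have s1 : σ 1 = w := by
    apply Prod.ext
    · simp [σ]
    · apply Subtype.ext; rw [hσ2 1 (by simp)]; simp
  rw [← s1]
  apply reach_extend σ
  · apply Continuous.continuousOn
    apply Continuous.prodMk (by fun_prop)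
    exact continuous_projIcc.comp (by fun_prop)
  · intro t ht t' ht' he
    by_contra hne
    apply hzw
    have hne' : t - t' ≠ 0 := sub_ne_zero.mpr hne
    have h1 : (1 - t) * z.1 + t * w.1 = (1 - t') * z.1 + t' * w.1 := congrArg Prod.fst he
    have h2 : (1 - t) * (z.2:ℝ) + t * w.2 = (1 - t') * (z.2:ℝ) + t' * w.2 := by
      rw [← hσ2 t ht, ← hσ2 t' ht', he]
    apply Prod.ext
    · have : (t - t') * (z.1 - w.1) = 0 := by linarith
      have := (mul_eq_zero.mp this).resolve_left hne'
      linarith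
    · apply Subtype.ext
      have : (t - t') * ((z.2:ℝ) - w.2) = 0 := by linarith
      have := (mul_eq_zero.mp this).resolve_left hne'
      linarith
  · intro t ht
    apply hb
    rw [Metric.mem_ball, Prod.dist_eq, max_lt_iff] at hz hw ⊢
    constructor
    · have := (convex_ball y.1 r) (Metric.mem_ball.mpr hz.1) (Metric.mem_ball.mpr hw.1)
        (sub_nonneg.mpr ht.2) ht.1 (by ring)
      simpa using this
    · rw [Subtype.dist_eq, hσ2 t ht]
      have := (convex_ball (y.2:ℝ) r) (Metric.mem_ball.mpr hz.2) (Metric.mem_ball.mpr hw.2)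
        (sub_nonneg.mpr ht.2) ht.1 (by ring)
      simpa using this
  · rw [s0]; exact h

lemma reach_trim {U : Set Strip} {y : Strip} (h : Reach U y) (hy : (y.2 : ℝ) = 1) :
    ∃ γ : unitInterval → Strip, JoinsBoundaryS γ ∧ ∀ t, γ t ∈ U := by
  obtain ⟨a, b, γ, hab, hc, hi, hU, h0, hb⟩ := h
  have hc2 : ContinuousOn (fun t => ((γ t).2 : ℝ)) (Icc a b) :=
    (continuous_subtype_val.comp continuous_snd).comp_continuousOn hc
  have hA : IsCompact (Icc a b ∩ (fun t => ((γ t).2 : ℝ)) ⁻¹' {1}) :=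
    isCompact_Icc.of_isClosed_subset
      (hc2.preimage_isClosed_of_isClosed isClosed_Icc isClosed_singleton) inter_subset_left
  obtain ⟨b1, ⟨hb1, hb1'⟩, hmin⟩ := hA.exists_isLeast ⟨b, right_mem_Icc.mpr hab, by simp [hb, hy]⟩
  have hsub : Icc a b1 ⊆ Icc a b := Icc_subset_Icc_right hb1.2
  have hB : IsCompact (Icc a b1 ∩ (fun t => ((γ t).2 : ℝ)) ⁻¹' {0}) :=
    isCompact_Icc.of_isClosed_subset
      ((hc2.mono hsub).preimage_isClosed_of_isClosed isClosed_Icc isClosed_singleton)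
      inter_subset_left
  obtain ⟨a1, ⟨ha1, ha1'⟩, hmax⟩ := hB.exists_isGreatest ⟨a, left_mem_Icc.mpr hb1.1, by simp [h0]⟩
  simp only [mem_preimage, mem_singleton_iff] at hb1' ha1'
  have hlt : a1 < b1 := by
    rcases ha1.2.lt_or_eq with h | h
    · exact h
    · rw [h, hb1'] at ha1'; norm_num at ha1'
  have hd : 0 < b1 - a1 := sub_pos.mpr hlt
  have hm1 : ∀ t : unitInterval, a1 + t * (b1 - a1) ∈ Icc a1 b1 := by
    intro t
    have h1 := t.2.1; have h2 := t.2.2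
    constructor <;> nlinarith
  have hm : ∀ t : unitInterval, a1 + t * (b1 - a1) ∈ Icc a b := fun t =>
    hsub ⟨ha1.1.trans (hm1 t).1, (hm1 t).2⟩
  refine ⟨fun t => γ (a1 + t * (b1 - a1)), ⟨?_, ?_, ?_, ?_, ?_⟩, fun t => hU _ (hm t)⟩
  · exact hc.comp_continuous (by fun_prop) hm
  · intro t t' he
    have := hi (hm t) (hm t') he
    apply Subtype.ext
    have : ((t:ℝ) - t') * (b1 - a1) = 0 := by linarith
    have := (mul_eq_zero.mp this).resolve_right hd.ne'
    linarith
  · simpa using ha1'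
  · simpa using hb1'
  · intro t ht0 ht1
    have t0 : (0:ℝ) < t := unitInterval.pos_iff_ne_zero.mpr ht0
    have t1 : (t:ℝ) < 1 := unitInterval.lt_one_iff_ne_one.mpr ht1
    have hb' := (γ (a1 + t * (b1 - a1))).2.2
    refine ⟨lt_of_le_of_ne hb'.1 ?_, lt_of_le_of_ne hb'.2 ?_⟩
    · intro he
      have := hmax ⟨⟨ha1.1.trans (hm1 t).1, (hm1 t).2⟩, he.symm⟩
      nlinarith
    · intro he
      have := hmin ⟨hm t, he⟩
      nlinarith

lemma exists_curve (u : Strip → ℝ) (hu : Continuous u) (K : ℝ) (hK : ∀ x, |u x - x.1| ≤ K)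
    (δ : ℝ) (hδ : 0 < δ) :
    ∃ γ : unitInterval → Strip, JoinsBoundaryS γ ∧ ∀ t, |u (γ t)| < δ := by
  classical
  set U : Set Strip := {x | |u x| < δ} with hUdef
  have hU : IsOpen U := isOpen_lt hu.abs continuous_const
  by_contra hno
  have htop : ∀ y : Strip, (y.2 : ℝ) = 1 → ¬ Reach U y := fun y hy h => hno (reach_trim h hy)
  have hVU : ∀ y, Reach U y → y ∈ U := by
    rintro y ⟨a, b, γ, hab, hc, hi, hU, h0, hb⟩
    exact hb ▸ hU b (right_mem_Icc.mpr hab)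
  have hbot : ∀ y : Strip, (y.2 : ℝ) = 0 → y ∈ U → Reach U y := by
    intro y hy hyU
    exact ⟨0, 0, fun _ => y, le_rfl, continuousOn_const, by simp, fun _ _ => hyU, hy, rfl⟩
  let w : Strip → ℝ := fun x => max 0 (min 1 (u x / (2 * δ) + 1 / 2))
  have hw : Continuous w := by fun_prop
  let ψ : Strip → AddCircle (1:ℝ) := fun x => (w x : AddCircle (1:ℝ))
  have hψ : Continuous ψ := (AddCircle.continuous_mk' 1).comp hw
  have hw1 : ∀ x, δ ≤ u x → w x = 1 := by
    intro x hx
    have : 1 ≤ u x / (2 * δ) + 1 / 2 := by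
      have : 1 / 2 ≤ u x / (2 * δ) := by rw [div_le_div_iff₀ (by norm_num) (by positivity)]; linarith
      linarith
    simp only [w]; rw [min_eq_left this]; norm_num
  have hw0 : ∀ x, u x ≤ -δ → w x = 0 := by
    intro x hx
    have : u x / (2 * δ) + 1 / 2 ≤ 0 := by
      have : u x / (2 * δ) ≤ -1 / 2 := by
        rw [div_le_div_iff₀ (by positivity) (by norm_num)]; linarith
      linarith
    simp only [w]
    rw [min_eq_right (by linarith), max_eq_left this]
  have hψ0 : ∀ x, x ∉ U → ψ x = 0 := by
    intro x hx
    simp only [hUdef, mem_ofPred_eq, not_lt, le_abs] at hx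
    rcases hx with h | h
    · simp only [ψ]; rw [hw1 x h]; exact AddCircle.coe_period 1
    · simp only [ψ]; rw [hw0 x (by linarith)]; simp
  let G : Strip → AddCircle (1:ℝ) := fun x => if Reach U x then ψ x else 0
  have hG : Continuous G := by
    apply continuous_if _ hψ.continuousOn continuousOn_const
    intro x hx
    apply hψ0
    intro hxU
    obtain ⟨r, hr, hball⟩ := reach_ball hU x hxU
    have hxm := Metric.mem_ball_self (x := x) hr
    rw [frontier_eq_closure_inter_closure] at hx
    obtain ⟨z, hz, hzb⟩ := Metric.mem_closure_iff.mp hx.1 r hr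
    obtain ⟨z', hz', hzb'⟩ := Metric.mem_closure_iff.mp hx.2 r hr
    exact hz' (hball z (by rwa [Metric.mem_ball, dist_comm]) z'
      (by rwa [Metric.mem_ball, dist_comm]) hz)
  have hGbot : ∀ x : ℝ, G (x, 0) = ((w (x, 0) : ℝ) : AddCircle (1:ℝ)) := by
    intro x
    by_cases h : (x, (0:unitInterval)) ∈ U
    · simp [G, hbot (x, 0) rfl h, ψ]
    · have := hψ0 _ h
      have h' : ¬ Reach U (x, 0) := fun hh => h (hVU _ hh)
      simp only [G, h', if_false]
      exact this.symm
  have hGtop : ∀ x : ℝ, G (x, 1) = 0 := by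
    intro x; simp [G, htop (x, 1) rfl]
  have hGout : ∀ x, x ∉ U → G x = 0 := by
    intro x hx
    have h' : ¬ Reach U x := fun hh => hx (hVU _ hh)
    simp [G, h']
  let H : C(unitInterval × ℝ, AddCircle (1:ℝ)) := ⟨fun z => G (z.2, z.1), by fun_prop⟩
  let f0 : C(ℝ, ℝ) := ⟨fun x => w (x, 0), by fun_prop⟩
  have cov : IsCoveringMap ((↑) : ℝ → AddCircle (1:ℝ)) := AddCircle.isCoveringMap_coe 1
  let L := cov.liftHomotopy H f0 (fun a => hGbot a)
  have hL : ∀ z, ((L z : ℝ) : AddCircle (1:ℝ)) = H z := fun z =>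
    congrFun (cov.liftHomotopy_lifts H f0 (fun a => hGbot a)) z
  have hL0 : ∀ a, L (0, a) = w (a, 0) := fun a => cov.liftHomotopy_zero H f0 (fun a => hGbot a) a
  have hint : ∀ z, H z = 0 → ∃ k : ℤ, L z = k := by
    intro z hz
    have := hL z
    rw [hz] at this
    obtain ⟨k, hk⟩ := (AddCircle.coe_eq_zero_iff (1:ℝ)).mp this
    exact ⟨k, by simpa using hk.symm⟩
  let M := K + δ
  have hMr : ∀ t : unitInterval, δ ≤ u (M, t) := by
    intro t; have := (abs_le.mp (hK (M, t))).1; simp only [M] at *; linarith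
  have hMl : ∀ t : unitInterval, u (-M, t) ≤ -δ := by
    intro t; have := (abs_le.mp (hK (-M, t))).2; simp only [M] at *; linarith
  have hr : L (0, M) = L (1, M) := const_of_int (fun t : unitInterval => L (t, M)) (by fun_prop)
    (fun t => hint _ (hGout _ (by
      simp only [hUdef, mem_ofPred_eq, not_lt]; exact (hMr t).trans (le_abs_self _)))) 0 1
  have hl : L (0, -M) = L (1, -M) := const_of_int (fun t : unitInterval => L (t, -M)) (by fun_prop)
    (fun t => hint _ (hGout _ (by
      simp only [hUdef, mem_ofPred_eq, not_lt]
      have := hMl t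
      exact le_trans (by linarith) (neg_le_abs _)))) 0 1
  have ht : L (1, -M) = L (1, M) := const_of_int (fun x : ℝ => L (1, x)) (by fun_prop)
    (fun x => hint _ (hGtop x)) (-M) M
  rw [hL0, hw1 _ (hMr 0)] at hr
  rw [hL0, hw0 _ (hMl 0)] at hl
  linarith

lemma crossing (α γ : unitInterval → Strip) (hα : Continuous α) (hγ : Continuous γ)
    (h0 : ((γ 0).2 : ℝ) = 0) (h1 : ((γ 1).2 : ℝ) = 1)
    (hl : ∀ t, (α 0).1 < (γ t).1) (hr : ∀ t, (γ t).1 < (α 1).1) : ∃ s t, α s = γ t := by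
  by_contra hne
  push Not at hne
  obtain ⟨⟨s0, t0⟩, -, hmin⟩ := isCompact_univ.exists_isMinOn
    (s := (univ : Set (unitInterval × unitInterval))) univ_nonempty
    (f := fun z => dist (α z.1) (γ z.2)) (by fun_prop)
  have hpos : 0 < dist (α s0) (γ t0) := dist_pos.mpr (hne s0 t0)
  have hε : ∀ s t, dist (α s0) (γ t0) ≤ dist (α s) (γ t) := fun s t => hmin (mem_univ (s, t))
  generalize dist (α s0) (γ t0) = ε at hpos hε
  let pr : ℝ → unitInterval := projIcc 0 1 zero_le_one
  have hpr : Continuous pr := continuous_projIcc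
  let u : Strip → ℝ := fun z => (α (pr z.1)).1 - (γ z.2).1 + (z.1 - pr z.1)
  have hu : Continuous u := by fun_prop
  obtain ⟨K, hK⟩ := isCompact_univ.exists_bound_of_continuousOn
    (s := (univ : Set (unitInterval × unitInterval)))
    (f := fun z => (α z.1).1 - (γ z.2).1 - z.1) (by fun_prop)
  obtain ⟨η, hη, hηu⟩ := exists_curve u hu K (by
    intro x
    have := hK (pr x.1, x.2) (mem_univ _)
    rw [Real.norm_eq_abs] at this
    convert this using 2
    simp only [u]; ring) ε hpos
  have hηc := hη.1
  obtain ⟨r, hr0⟩ := mem_range_of_exists_le_of_exists_ge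
    (f := fun r : unitInterval => ((α (pr (η r).1)).2 : ℝ) - ((γ (η r).2).2 : ℝ)) (c := 0)
    (by fun_prop)
    ⟨1, by
      have : (η 1).2 = 1 := Subtype.ext hη.2.2.2.1
      have h2 := (α (pr (η 1).1)).2.2.2
      simp only [this, h1]; linarith⟩
    ⟨0, by
      have : (η 0).2 = 0 := Subtype.ext hη.2.2.1
      have h2 := (α (pr (η 0).1)).2.2.1
      simp only [this, h0]; linarith⟩
  have hur := hηu r
  have hd := hε (pr (η r).1) (η r).2
  simp only at hr0
  rw [Prod.dist_eq, Subtype.dist_eq, Real.dist_eq, Real.dist_eq, hr0, abs_zero,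
    max_eq_left (abs_nonneg _)] at hd
  simp only [u] at hur
  rcases le_total (η r).1 0 with hx | hx
  · have e : pr (η r).1 = 0 := projIcc_of_le_left _ hx
    rw [e] at hur hd
    have := hl (η r).2
    rw [abs_of_neg (by linarith)] at hd
    simp only [Set.Icc.coe_zero] at hur
    have := (abs_lt.mp hur).1
    linarith
  rcases le_total 1 (η r).1 with hx' | hx'
  · have e : pr (η r).1 = 1 := projIcc_of_right_le _ hx'
    rw [e] at hur hd
    have := hr (η r).2
    rw [abs_of_pos (by linarith)] at hd
    simp only [Set.Icc.coe_one] at hur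
    have := (abs_lt.mp hur).2
    linarith
  · have e : ((pr (η r).1 : unitInterval) : ℝ) = (η r).1 := by
      simp only [pr]; rw [projIcc_of_mem zero_le_one ⟨hx, hx'⟩]
    rw [e] at hur
    simp only [sub_self, add_zero] at hur
    linarith

lemma not_right_left (γ : unitInterval → Strip) (hγ : JoinsBoundaryS γ) (x : Strip)
    (h1 : OnRightS γ x) (h2 : OnLeftS γ x) : False := by
  obtain ⟨q, hq, hx⟩ := h1
  obtain ⟨q', hq', hx'⟩ := h2
  have : LocallyPathConnectedSpace unitInterval := (convex_Icc (0:ℝ) 1).locallyPathConnectedSpace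
  have hop : IsOpen (range γ)ᶜ := (isCompact_range hγ.1).isClosed.isOpen_compl
  have hqm : q ∈ (range γ)ᶜ := by rintro ⟨t, rfl⟩; exact (lt_irrefl _ (hq t))
  have hqm' : q' ∈ (range γ)ᶜ := by rintro ⟨t, rfl⟩; exact (lt_irrefl _ (hq' t))
  have e := (connectedComponentIn_eq hx).trans (connectedComponentIn_eq hx').symm
  have hconn : IsConnected (connectedComponentIn (range γ)ᶜ q) :=
    isConnected_connectedComponentIn_iff.mpr hqm
  have hpc := (hop.connectedComponentIn.isConnected_iff_isPathConnected).mp hconn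
  have hj := hpc.joinedIn q' (by rw [e]; exact mem_connectedComponentIn hqm') q
    (mem_connectedComponentIn hqm)
  obtain ⟨α, hα⟩ := hj
  obtain ⟨s, t, hst⟩ := crossing α γ α.continuous hγ.1 hγ.2.2.1 hγ.2.2.2.1
    (by simpa using hq') (by simpa using hq)
  exact connectedComponentIn_subset _ _ (hα s) ⟨t, hst.symm⟩

def RU (S : Set Strip) : Prop := ∀ M : ℝ, ∃ y ∈ S, M < y.1
def LU (S : Set Strip) : Prop := ∀ M : ℝ, ∃ y ∈ S, y.1 < M

lemma onRight_of_set (γ : unitInterval → Strip) (hγ : Continuous γ) (S : Set Strip)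
    (hS : IsPreconnected S) (x : Strip) (hx : x ∈ S) (hR : RU S) (hd : ∀ t, γ t ∉ S) :
    OnRightS γ x := by
  obtain ⟨K, hK⟩ := isCompact_univ.exists_bound_of_continuousOn
    (s := (univ : Set (unitInterval))) (f := fun z => (γ z).1) (by fun_prop)
  obtain ⟨q, hq, hqK⟩ := hR K
  refine ⟨q, fun t => ?_, ?_⟩
  · have := (abs_le.mp (hK t (mem_univ _))).2
    linarith
  · exact hS.subset_connectedComponentIn hq (by rintro y hy ⟨t, rfl⟩; exact hd t hy) hx

lemma onLeft_of_set (γ : unitInterval → Strip) (hγ : Continuous γ) (S : Set Strip)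
    (hS : IsPreconnected S) (x : Strip) (hx : x ∈ S) (hR : LU S) (hd : ∀ t, γ t ∉ S) :
    OnLeftS γ x := by
  obtain ⟨K, hK⟩ := isCompact_univ.exists_bound_of_continuousOn
    (s := (univ : Set (unitInterval))) (f := fun z => (γ z).1) (by fun_prop)
  obtain ⟨q, hq, hqK⟩ := hR (-K)
  refine ⟨q, fun t => ?_, ?_⟩
  · have := (abs_le.mp (hK t (mem_univ _))).1
    linarith
  · exact hS.subset_connectedComponentIn hq (by rintro y hy ⟨t, rfl⟩; exact hd t hy) hx

def PS (h : Strip → ℝ) (x : Strip) : Set ℝ :=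
  {c | ∃ S, IsPreconnected S ∧ x ∈ S ∧ RU S ∧ ∀ y ∈ S, c ≤ h y}
noncomputable def PP (h : Strip → ℝ) (x : Strip) : ℝ := sSup (PS h x)

def SupConn (g : Strip → ℝ) : Prop :=
  ∀ c x, c < g x → ∃ S, IsPreconnected S ∧ x ∈ S ∧ RU S ∧ ∀ y ∈ S, c < g y
def SubConn (g : Strip → ℝ) : Prop :=
  ∀ c x, g x < c → ∃ S, IsPreconnected S ∧ x ∈ S ∧ LU S ∧ ∀ y ∈ S, g y < c

def iot (x : Strip) : Strip := (-x.1, x.2)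
lemma iot_iot (x : Strip) : iot (iot x) = x := by simp [iot]
lemma iot_cont : Continuous iot := by unfold iot; fun_prop
def flp (h : Strip → ℝ) : Strip → ℝ := fun x => - h (iot x)

lemma flp_sub {g : Strip → ℝ} (hg : SupConn g) : SubConn (flp g) := by
  intro c x hx
  obtain ⟨S, hS, hxS, hR, hc⟩ := hg (-c) (iot x) (by simp only [flp] at hx; linarith)
  refine ⟨iot '' S, hS.image _ iot_cont.continuousOn, ⟨_, hxS, iot_iot x⟩, ?_, ?_⟩
  · intro M
    obtain ⟨y, hy, hyM⟩ := hR (-M)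
    exact ⟨iot y, ⟨y, hy, rfl⟩, by simp only [iot]; linarith⟩
  · rintro _ ⟨y, hy, rfl⟩
    have := hc y hy
    simp only [flp, iot_iot]; linarith

lemma flp_sup {g : Strip → ℝ} (hg : SubConn g) : SupConn (flp g) := by
  intro c x hx
  obtain ⟨S, hS, hxS, hR, hc⟩ := hg (-c) (iot x) (by simp only [flp] at hx; linarith)
  refine ⟨iot '' S, hS.image _ iot_cont.continuousOn, ⟨_, hxS, iot_iot x⟩, ?_, ?_⟩
  · intro M
    obtain ⟨y, hy, hyM⟩ := hR (-M)
    exact ⟨iot y, ⟨y, hy, rfl⟩, by simp only [iot]; linarith⟩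
  · rintro _ ⟨y, hy, rfl⟩
    have := hc y hy
    simp only [flp, iot_iot]; linarith

lemma ray_preconn (a : ℝ) : IsPreconnected {y : Strip | a ≤ y.1} := by
  have : {y : Strip | a ≤ y.1} = Ici a ×ˢ (univ : Set unitInterval) := by ext y; simp
  rw [this]
  exact isPreconnected_Ici.prod isPreconnected_univ

section
variable {h : Strip → ℝ} {K : ℝ}

lemma PS_bdd (x : Strip) : BddAbove (PS h x) := ⟨h x, by
  rintro c ⟨S, -, hx, -, hc⟩; exact hc x hx⟩

lemma PS_low (hK : ∀ x, |h x - x.1| ≤ K) (x : Strip) : x.1 - K ∈ PS h x := by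
  refine ⟨{y : Strip | x.1 ≤ y.1}, ray_preconn _, le_refl x.1, ?_, ?_⟩
  · intro M
    exact ⟨(max x.1 (M + 1), 0), le_max_left x.1 _, lt_of_lt_of_le (lt_add_one M) (le_max_right _ _)⟩
  · intro y hy
    have := (abs_le.mp (hK y)).1
    have hy' : x.1 ≤ y.1 := hy
    linarith

lemma PP_le (hK : ∀ x, |h x - x.1| ≤ K) (x : Strip) : PP h x ≤ h x :=
  csSup_le ⟨_, PS_low hK x⟩ (by rintro c ⟨S, -, hx, -, hc⟩; exact hc x hx)

lemma le_PP {x : Strip} {c : ℝ} (hc : c ∈ PS h x) : c ≤ PP h x := le_csSup (PS_bdd x) hc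

lemma exists_of_lt_PP (hK : ∀ x, |h x - x.1| ≤ K) {x : Strip} {c : ℝ} (hc : c < PP h x) :
    ∃ d ∈ PS h x, c < d := exists_lt_of_lt_csSup ⟨_, PS_low hK x⟩ hc

lemma PP_bound (hK : ∀ x, |h x - x.1| ≤ K) (x : Strip) : |PP h x - x.1| ≤ K := by
  have h1 := le_PP (PS_low hK x)
  have h2 := PP_le hK x
  have h3 := (abs_le.mp (hK x)).2
  exact abs_le.mpr ⟨by linarith, by linarith⟩

lemma PP_sup (hK : ∀ x, |h x - x.1| ≤ K) : SupConn (PP h) := by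
  intro c x hx
  obtain ⟨d, ⟨S, hS, hxS, hR, hd⟩, hcd⟩ := exists_of_lt_PP hK hx
  exact ⟨S, hS, hxS, hR, fun y hy => hcd.trans_le (le_PP ⟨S, hS, hy, hR, hd⟩)⟩

lemma PP_sub (hc : Continuous h) (hK : ∀ x, |h x - x.1| ≤ K) (hs : SubConn h) :
    SubConn (PP h) := by
  intro c x hx
  by_cases hxc : h x < c
  · obtain ⟨S, hS, hxS, hR, hd⟩ := hs c x hxc
    exact ⟨S, hS, hxS, hR, fun y hy => (PP_le hK y).trans_lt (hd y hy)⟩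
  push Not at hxc
  obtain ⟨c', h1, h2⟩ := exists_between hx
  let ray : ℝ → Strip := fun t => (t, x.2)
  have hray : Continuous ray := by fun_prop
  have hex : ∃ t, x.1 ≤ t ∧ h (ray t) ≤ c' := by
    by_contra hno
    push Not at hno
    have : c' ≤ PP h x := by
      apply le_PP
      refine ⟨ray '' Ici x.1, isPreconnected_Ici.image _ hray.continuousOn,
        ⟨x.1, self_mem_Ici, rfl⟩, ?_, ?_⟩
      · intro M
        exact ⟨_, ⟨max x.1 (M + 1), le_max_left x.1 _, rfl⟩,
          lt_of_lt_of_le (lt_add_one M) (le_max_right _ _)⟩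
      · rintro _ ⟨t, ht, rfl⟩
        exact (hno t ht).le
    linarith
  obtain ⟨t1, ht1, hht1⟩ := hex
  have hA : IsCompact (Icc x.1 t1 ∩ (fun t => h (ray t)) ⁻¹' (Iic c')) :=
    isCompact_Icc.inter_right (isClosed_Iic.preimage (hc.comp hray))
  obtain ⟨t0, ⟨ht0, ht0'⟩, hmin⟩ := hA.exists_isLeast ⟨t1, ⟨ht1, le_rfl⟩, hht1⟩
  have hge : ∀ t ∈ Icc x.1 t0, c' ≤ h (ray t) := by
    intro t ht
    by_contra hlt
    push Not at hlt
    have : t0 ≤ t := hmin ⟨⟨ht.1, ht.2.trans ht0.2⟩, hlt.le⟩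
    have e : t = t0 := le_antisymm ht.2 this
    subst e
    -- by the intermediate value theorem there is an earlier point
    have hx0 : c' ≤ h (ray x.1) := by
      have : ray x.1 = x := rfl
      rw [this]; linarith
    obtain ⟨t', ht', he⟩ := intermediate_value_Icc' ht.1 (hc.comp hray).continuousOn
      (show c' ∈ Icc _ _ from ⟨hlt.le, hx0⟩)
    have he' : h (ray t') = c' := he
    have : t ≤ t' := hmin ⟨⟨ht'.1, ht'.2.trans ht0.2⟩, he'.le⟩
    have : t' = t := le_antisymm ht'.2 this
    rw [this] at he'
    linarith
  have hseg : IsPreconnected (ray '' Icc x.1 t0) := isPreconnected_Icc.image _ hray.continuousOn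
  have hxseg : x ∈ ray '' Icc x.1 t0 := ⟨x.1, left_mem_Icc.mpr ht0.1, rfl⟩
  have hsegc : ∀ z ∈ ray '' Icc x.1 t0, PP h z < c := by
    intro z hz
    by_contra hge'
    push Not at hge'
    obtain ⟨d, ⟨S, hS, hzS, hR, hd⟩, hcd⟩ := exists_of_lt_PP hK (hx.trans_le hge')
    have : min d c' ≤ PP h x := by
      apply le_PP
      refine ⟨S ∪ ray '' Icc x.1 t0, hS.union z hzS hz hseg, Or.inr hxseg, ?_, ?_⟩
      · intro M
        obtain ⟨y, hy, hyM⟩ := hR M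
        exact ⟨y, Or.inl hy, hyM⟩
      · rintro y (hy | ⟨t, ht, rfl⟩)
        · exact (min_le_left _ _).trans (hd y hy)
        · exact (min_le_right _ _).trans (hge t ht)
    have := lt_min hcd h1
    linarith
  have ht0c : h (ray t0) < c := lt_of_le_of_lt ht0' h2
  obtain ⟨S, hS, hyS, hR, hd⟩ := hs c _ ht0c
  refine ⟨S ∪ ray '' Icc x.1 t0, hS.union _ hyS ⟨t0, right_mem_Icc.mpr ht0.1, rfl⟩ hseg,
    Or.inr hxseg, ?_, ?_⟩
  · intro M
    obtain ⟨y, hy, hyM⟩ := hR M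
    exact ⟨y, Or.inl hy, hyM⟩
  · rintro y (hy | hy)
    · exact (PP_le hK y).trans_lt (hd y hy)
    · exact hsegc y hy

lemma ball_preconn (x : Strip) (r : ℝ) : IsPreconnected (Metric.ball x r) := by
  rw [← ball_prod_same]
  apply IsPreconnected.prod
  · exact (convex_ball _ _).isPreconnected
  · have : Metric.ball x.2 r = (Subtype.val ⁻¹' Metric.ball (x.2:ℝ) r) := by
      ext y; simp [Subtype.dist_eq]
    rw [this, Real.ball_eq_Ioo]
    exact (ordConnected_Ioo.preimage_mono (Subtype.mono_coe _)).isPreconnected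

lemma PP_cont (hc : Continuous h) (hK : ∀ x, |h x - x.1| ≤ K) : Continuous (PP h) := by
  rw [Metric.continuous_iff]
  intro x ε hε
  obtain ⟨r, hr, hb⟩ := Metric.continuous_iff.mp hc x (ε / 4) (by positivity)
  have key : ∀ y ∈ Metric.ball x r, ∀ z ∈ Metric.ball x r, PP h y - ε / 2 ≤ PP h z := by
    intro y hy z hz
    apply le_of_forall_lt
    intro c hcl
    obtain ⟨d, ⟨S, hS, hyS, hR, hd⟩, hcd⟩ := exists_of_lt_PP hK (x := y) (c := c + ε / 2)
      (by linarith)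
    refine lt_of_lt_of_le (b := d - ε / 2) (by linarith) ?_
    apply le_PP
    refine ⟨S ∪ Metric.ball x r, hS.union y hyS hy (ball_preconn x r), Or.inr hz, ?_, ?_⟩
    · intro M
      obtain ⟨y, hy, hyM⟩ := hR M
      exact ⟨y, Or.inl hy, hyM⟩
    · rintro w (hw | hw)
      · linarith [hd w hw]
      · have h1 := hd y hyS
        have h2 := abs_lt.mp (hb y hy)
        have h3 := abs_lt.mp (hb w hw)
        linarith [h2.1, h2.2, h3.1, h3.2]
  refine ⟨r, hr, fun y hy => ?_⟩
  have h1 := key y hy x (Metric.mem_ball_self hr)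
  have h2 := key x (Metric.mem_ball_self hr) y hy
  rw [Real.dist_eq, abs_lt]
  constructor <;> linarith

lemma PP_mono (hK : ∀ x, |h x - x.1| ≤ K) (φ : Strip → Strip) (hφ : Continuous φ) (B : ℝ)
    (hB : ∀ x, |(φ x).1 - x.1| ≤ B) (a : ℝ) (ha : ∀ x, h x + a ≤ h (φ x)) (x : Strip) :
    PP h x + a ≤ PP h (φ x) := by
  apply le_of_forall_lt
  intro c hcl
  obtain ⟨d, ⟨S, hS, hyS, hR, hd⟩, hcd⟩ := exists_of_lt_PP hK (x := x) (c := c - a)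
    (by linarith)
  refine lt_of_lt_of_le (b := d + a) (by linarith) ?_
  apply le_PP
  refine ⟨φ '' S, hS.image _ hφ.continuousOn, ⟨x, hyS, rfl⟩, ?_, ?_⟩
  · intro M
    obtain ⟨y, hy, hyM⟩ := hR (M + B)
    exact ⟨φ y, ⟨y, hy, rfl⟩, by linarith [(abs_le.mp (hB y)).1]⟩
  · rintro _ ⟨y, hy, rfl⟩
    linarith [hd y hy, ha y]

structure Shift (φ : Strip → Strip) : Prop where
  hc : Continuous φ
  hi : ∃ ψ : Strip → Strip, Continuous ψ ∧ (∀ x, φ (ψ x) = x) ∧ (∀ x, ψ (φ x) = x)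
  hb : ∃ B : ℝ, ∀ x, |(φ x).1 - x.1| ≤ B

lemma PP_shift (hK : ∀ x, |h x - x.1| ≤ K) (φ : Strip → Strip) (hφ : Shift φ) (a ε : ℝ)
    (ha : ∀ x, |h (φ x) - h x - a| ≤ ε) (x : Strip) :
    |PP h (φ x) - PP h x - a| ≤ ε := by
  obtain ⟨hc, ⟨ψ, hψ, hi1, hi2⟩, B, hB⟩ := hφ
  have h1 := PP_mono hK φ hc B hB (a - ε) (fun x => by linarith [(abs_le.mp (ha x)).1]) x
  have h2 := PP_mono hK ψ hψ B (fun x => by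
    have := hB (ψ x)
    rw [hi1] at this
    rwa [abs_sub_comm]) (-a - ε) (fun x => by
      have := (abs_le.mp (ha (ψ x))).2
      rw [hi1] at this
      linarith) (φ x)
  rw [hi2] at h2
  exact abs_le.mpr ⟨by linarith, by linarith⟩

lemma shift_conj (φ : Strip → Strip) (hφ : Shift φ) : Shift (fun x => iot (φ (iot x))) := by
  obtain ⟨hc, ⟨ψ, hψ, hi1, hi2⟩, B, hB⟩ := hφ
  refine ⟨iot_cont.comp (hc.comp iot_cont), ⟨fun x => iot (ψ (iot x)),
    iot_cont.comp (hψ.comp iot_cont), fun x => ?_, fun x => ?_⟩, B, fun x => ?_⟩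
  · simp [iot_iot, hi1]
  · simp [iot_iot, hi2]
  · have := hB (iot x)
    rw [abs_sub_comm] at this
    convert this using 2
    simp only [iot]; ring

lemma flp_bound (hK : ∀ x, |h x - x.1| ≤ K) (x : Strip) : |flp h x - x.1| ≤ K := by
  have := hK (iot x)
  rw [abs_sub_comm] at this
  convert this using 2
  simp only [flp, iot]; ring

lemma flp_shift (φ : Strip → Strip) (a ε : ℝ)
    (ha : ∀ x, |h (φ x) - h x - a| ≤ ε) (x : Strip) :
    |flp h (iot (φ (iot x))) - flp h x - (-a)| ≤ ε := by
  have := ha (iot x)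
  rw [← abs_neg] at this
  convert this using 2
  simp only [flp, iot_iot]; ring

lemma flp_cont (hc : Continuous h) : Continuous (flp h) := (hc.comp iot_cont).neg

lemma regularize (hc : Continuous h) (hK : ∀ x, |h x - x.1| ≤ K) :
    ∃ g : Strip → ℝ, Continuous g ∧ (∀ x, |g x - x.1| ≤ K) ∧ SupConn g ∧ SubConn g ∧
      ∀ φ, Shift φ → ∀ a ε, (∀ x, |h (φ x) - h x - a| ≤ ε) → ∀ x, |g (φ x) - g x - a| ≤ ε := by
  have c1 := PP_cont hc hK
  have k1 := PP_bound hK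
  have k2 := flp_bound k1
  have c2 := flp_cont c1
  have s2 := flp_sub (PP_sup hK)
  refine ⟨flp (PP (flp (PP h))), flp_cont (PP_cont c2 k2), flp_bound (PP_bound k2),
    flp_sup (PP_sub c2 k2 s2), flp_sub (PP_sup k2), ?_⟩
  intro φ hφ a ε ha x
  have := flp_shift _ _ _ (PP_shift k2 _ (shift_conj φ hφ) _ _
    (flp_shift φ a ε (PP_shift hK φ hφ a ε ha))) x
  simpa [iot_iot] using this

end

def tr (m : ℝ) (x : Strip) : Strip := (x.1 + m, x.2)
lemma tr_cont (m : ℝ) : Continuous (tr m) := by unfold tr; fun_prop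
lemma tr_tr (a b : ℝ) (x : Strip) : tr a (tr b x) = tr (b + a) x := by simp [tr, add_assoc]
lemma tr_zero (x : Strip) : tr 0 x = x := by simp [tr]

lemma pA_cont : Continuous pA := by
  unfold pA
  exact ((AddCircle.continuous_mk' 1).comp continuous_fst).prodMk continuous_snd

lemma pA_tr (k : ℤ) (x : Strip) : pA (tr k x) = pA x := by
  simp only [pA, tr, Prod.mk.injEq, and_true]
  rw [AddCircle.coe_add]
  have : ((k : ℝ) : AddCircle (1:ℝ)) = 0 := (AddCircle.coe_eq_zero_iff (1:ℝ)).mpr ⟨k, by simp⟩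
  rw [this, add_zero]

lemma pA_eq {x y : Strip} (h : pA x = pA y) : ∃ k : ℤ, y = tr k x := by
  have h1 : ((x.1 : ℝ) : AddCircle (1:ℝ)) = (y.1 : ℝ) := congrArg (fun z : Annulus => z.1) h
  have h2 : x.2 = y.2 := congrArg (fun z : Annulus => z.2) h
  have h3 : ((y.1 - x.1 : ℝ) : AddCircle (1:ℝ)) = 0 := by rw [AddCircle.coe_sub, h1, sub_self]
  obtain ⟨k, hk⟩ := (AddCircle.coe_eq_zero_iff (1:ℝ)).mp h3
  refine ⟨k, Prod.ext ?_ h2.symm⟩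
  simp only [zsmul_eq_mul, mul_one] at hk
  simp only [tr]; linarith

lemma lift_unique {X : Type*} [TopologicalSpace X] [PreconnectedSpace X] [Nonempty X]
    (c c' : X → Strip) (hc : Continuous c)
    (hc' : Continuous c') (h : ∀ t, pA (c t) = pA (c' t)) : ∃ k : ℤ, ∀ t, c' t = tr k (c t) := by
  choose k hk using fun t => pA_eq (h t)
  obtain ⟨t0⟩ := ‹Nonempty X›
  refine ⟨k t0, fun t => ?_⟩
  have e : ∀ t, (c' t).1 - (c t).1 = k t := by
    intro t
    have := congrArg Prod.fst (hk t)
    simp only [tr] at this; linarith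
  have := const_of_int (fun t => (c' t).1 - (c t).1) (by fun_prop) (fun t => ⟨k t, e t⟩) t t0
  simp only [e] at this
  rw [hk t, this]

lemma lift_tr (f : Annulus → Annulus) (F : Strip → Strip) (hF : Continuous F)
    (h : ∀ x, pA (F x) = f (pA x)) : ∃ k : ℤ, ∀ (m : ℤ) (x : Strip), F (tr m x) = tr (k * m) (F x) := by
  obtain ⟨k, hk⟩ := lift_unique F (fun x => F (tr ((1:ℤ):ℝ) x)) hF (hF.comp (tr_cont _))
    (fun x => by rw [h, h, pA_tr])
  refine ⟨k, fun m => ?_⟩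
  simp only [Int.cast_one] at hk
  induction m using Int.induction_on with
  | zero => intro x; simp [tr_zero]
  | succ i ih =>
    intro x
    push_cast
    rw [← tr_tr, hk, show ((i:ℝ)) = (((i:ℤ)):ℝ) by simp, ih, tr_tr]
    congr 1; ring
  | pred i ih =>
    intro x
    have h1 := hk (tr ((-(i:ℤ) - 1 : ℤ) : ℝ) x)
    rw [tr_tr] at h1
    have h2 := ih x
    have e : (((-(i:ℤ) - 1 : ℤ) : ℝ) + 1) = ((-(i:ℤ) : ℤ) : ℝ) := by push_cast; ring
    rw [e, h2] at h1
    have h3 := congrArg (tr (-k)) h1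
    rw [tr_tr, tr_tr, add_neg_cancel, tr_zero] at h3
    rw [← h3]
    congr 1; push_cast; ring

lemma lift_commutes (f : Annulus ≃ₜ Annulus) (ft : Strip ≃ₜ Strip) (hlift : IsLiftA f ft) (ρ : ℝ)
    (hrot : rotSet ft = {ρ}) : ∀ (m : ℤ) (x : Strip), ft (tr m x) = tr m (ft x) := by
  have hl : ∀ x, pA (ft x) = f (pA x) := fun x => congrFun hlift x
  obtain ⟨k, hk⟩ := lift_tr f ft ft.continuous hl
  obtain ⟨j, hj⟩ := lift_tr f.symm ft.symm ft.symm.continuous (fun x => by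
    have := hl (ft.symm x)
    rw [ft.apply_symm_apply] at this
    rw [this, f.symm_apply_apply])
  have hkj : k * j = 1 := by
    have h1 := hj 1 (0, 0)
    have h2 := congrArg ft h1
    rw [ft.apply_symm_apply] at h2
    have h3 := hk j (ft.symm (0, 0))
    rw [Int.cast_one, mul_one] at h2
    rw [← h2, ft.apply_symm_apply] at h3
    have h4 := congrArg Prod.fst h3
    simp only [tr, zero_add] at h4
    exact_mod_cast h4.symm
  rcases Int.eq_one_or_neg_one_of_mul_eq_one hkj with h1 | h1
  · intro m x; rw [hk, h1]; simp
  exfalso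
  subst h1
  have hit : ∀ (i : ℕ) (m : ℤ) (x : Strip),
      (⇑ft)^[2 * i + 1] (tr m x) = tr (-m) ((⇑ft)^[2 * i + 1] x) := by
    intro i
    induction i with
    | zero => intro m x; simp [hk]
    | succ i ih =>
      intro m x
      rw [show 2 * (i + 1) + 1 = (2 * i + 1) + 1 + 1 by ring, Function.iterate_succ_apply,
        Function.iterate_succ_apply, hk]
      have e : ((-1 : ℤ) : ℝ) * m = ((-m : ℤ) : ℝ) := by push_cast; ring
      rw [e, hk]
      have e : ((-1 : ℤ) : ℝ) * ((-m : ℤ) : ℝ) = (m : ℤ) := by push_cast; ring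
      rw [e, ih, Function.iterate_succ_apply (⇑ft) (2 * i + 1 + 1) x,
        Function.iterate_succ_apply (⇑ft) (2 * i + 1) (ft x)]
  have hall : ∀ r : ℝ, r ∈ rotSet ft := by
    intro r
    let c : ℕ → ℝ := fun i => ((⇑ft)^[2 * i + 1] ((0:ℝ), (0:unitInterval))).1
    let m : ℕ → ℤ := fun i => round ((c i - r * (2 * i + 1 : ℕ)) / 2)
    refine ⟨fun i => 2 * i + 1, fun i => tr (m i) (0, 0), ?_, ?_⟩
    · apply tendsto_atTop_mono (f := fun i => i) _ tendsto_id
      intro i; omega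
    · have hb : ∀ i : ℕ, |(((⇑ft)^[2 * i + 1] (tr (m i) (0, 0))).1 - (tr (m i) (0, 0)).1) /
          ((2 * i + 1 : ℕ) : ℝ) - r| ≤ 1 / ((i : ℝ) + 1) := by
        intro i
        have hpos : (0:ℝ) < ((2 * i + 1 : ℕ) : ℝ) := by positivity
        have e : (((⇑ft)^[2 * i + 1] (tr (m i) (0, 0))).1 - (tr (m i) (0, 0)).1) /
          ((2 * i + 1 : ℕ) : ℝ) - r = (c i - 2 * m i - r * (2 * i + 1 : ℕ)) / ((2 * i + 1 : ℕ) : ℝ) := by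
          rw [hit]
          simp only [tr, c]
          field_simp
          ring
        rw [e, abs_div, abs_of_pos hpos]
        have h1 : |c i - 2 * m i - r * (2 * i + 1 : ℕ)| ≤ 1 := by
          have := abs_sub_round ((c i - r * (2 * i + 1 : ℕ)) / 2)
          rw [abs_le] at this ⊢
          simp only [m]
          constructor <;> linarith [this.1, this.2]
        apply div_le_div₀ zero_le_one h1 (by positivity)
        push_cast; linarith [(Nat.cast_nonneg i : (0:ℝ) ≤ i)]
      rw [tendsto_iff_dist_tendsto_zero]
      exact squeeze_zero (fun _ => dist_nonneg) hb tendsto_one_div_add_atTop_nhds_zero_nat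
  have := hall (ρ + 1)
  rw [hrot, mem_singleton_iff] at this
  linarith

section
variable (ft : Strip ≃ₜ Strip) (htr : ∀ (m : ℤ) (x : Strip), ft (tr m x) = tr m (ft x))
include htr

lemma disp_bound : ∃ B : ℝ, ∀ x, |(ft x).1 - x.1| ≤ B := by
  obtain ⟨B, hB⟩ := (isCompact_Icc.prod isCompact_univ).exists_bound_of_continuousOn
    (s := Icc (0:ℝ) 1 ×ˢ (univ : Set unitInterval))
    (f := fun x => (ft x).1 - x.1) (by fun_prop)
  refine ⟨B, fun x => ?_⟩
  have h1 := hB (Int.fract x.1, x.2) ⟨⟨Int.fract_nonneg _, (Int.fract_lt_one _).le⟩, mem_univ _⟩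
  have h2 := htr ⌊x.1⌋ (Int.fract x.1, x.2)
  have e : tr ⌊x.1⌋ (Int.fract x.1, x.2) = x := by
    simp [tr, Int.fract_add_floor]
  rw [e] at h2
  rw [Real.norm_eq_abs] at h1
  convert h1 using 2
  rw [h2]
  simp only [tr]
  have := Int.fract_add_floor x.1
  linarith

lemma iter_bound {B : ℝ} (hB : ∀ x, |(ft x).1 - x.1| ≤ B) (n : ℕ) (x : Strip) :
    |((⇑ft)^[n] x).1 - x.1| ≤ n * B := by
  induction n with
  | zero => simp
  | succ n ih =>
    rw [Function.iterate_succ_apply']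
    have h1 := abs_le.mp (hB ((⇑ft)^[n] x))
    have h2 := abs_le.mp ih
    push_cast
    rw [abs_le]; constructor <;> linarith [h1.1, h1.2, h2.1, h2.2]

lemma uniform_rot (ρ : ℝ) (hrot : rotSet ft = {ρ}) (ε : ℝ) (hε : 0 < ε) :
    ∃ N : ℕ, 0 < N ∧ ∀ x, |(((⇑ft)^[N] x).1 - x.1) / N - ρ| ≤ ε := by
  by_contra hno
  push Not at hno
  obtain ⟨B, hB⟩ := disp_bound ft htr
  choose x hx using fun k : ℕ => hno (k + 1) (Nat.succ_pos k)
  have hmem : ∀ k : ℕ, (((⇑ft)^[k + 1] (x k)).1 - (x k).1) / ((k + 1 : ℕ) : ℝ) ∈ Icc (-B) B := by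
    intro k
    have hpos : (0:ℝ) < ((k + 1 : ℕ) : ℝ) := by positivity
    rw [mem_Icc, ← abs_le, abs_div, abs_of_pos hpos, div_le_iff₀ hpos, mul_comm]
    exact iter_bound ft htr hB _ _
  obtain ⟨r, -, φ, hφ, hlim⟩ := isCompact_Icc.tendsto_subseq hmem
  have hr : r ∈ rotSet ft := by
    refine ⟨fun k => φ k + 1, fun k => x (φ k), ?_, hlim⟩
    exact tendsto_atTop_mono (fun k => Nat.le_succ _) hφ.tendsto_atTop
  rw [hrot, mem_singleton_iff] at hr
  subst hr
  have h2 := Metric.tendsto_atTop.mp hlim ε hε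
  obtain ⟨k, hk⟩ := h2
  have h3 := hk k le_rfl
  rw [Real.dist_eq] at h3
  have := hx (φ k)
  simp only [Function.comp] at h3
  linarith

lemma exists_h (ρ : ℝ) (hrot : rotSet ft = {ρ}) (ε : ℝ) (hε : 0 < ε) :
    ∃ (h : Strip → ℝ) (K : ℝ), Continuous h ∧ (∀ x, |h x - x.1| ≤ K) ∧
      (∀ x, |h (ft x) - h x - ρ| ≤ ε) ∧ ∀ x, h (tr 1 x) = h x + 1 := by
  obtain ⟨N, hN, hNe⟩ := uniform_rot ft htr ρ hrot ε hε
  obtain ⟨B, hB⟩ := disp_bound ft htr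
  have hNpos : (0:ℝ) < N := Nat.cast_pos.mpr hN
  have hit : ∀ k : ℕ, Continuous ((⇑ft)^[k]) := fun k => ft.continuous.iterate k
  have hitr : ∀ (k : ℕ) x, (⇑ft)^[k] (tr 1 x) = tr 1 ((⇑ft)^[k] x) := by
    intro k
    induction k with
    | zero => intro x; rfl
    | succ k ih =>
      intro x
      have := htr 1 x
      rw [Int.cast_one] at this
      rw [Function.iterate_succ_apply, this, ih, Function.iterate_succ_apply]
  refine ⟨fun x => (∑ k ∈ Finset.range N, ((⇑ft)^[k] x).1) / N,
    (∑ k ∈ Finset.range N, k * B) / N, ?_, ?_, ?_, ?_⟩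
  · apply Continuous.div_const
    exact continuous_finsetSum _ (fun k _ => continuous_fst.comp (hit k))
  · intro x
    have e : (∑ k ∈ Finset.range N, ((⇑ft)^[k] x).1) / N - x.1 =
        (∑ k ∈ Finset.range N, (((⇑ft)^[k] x).1 - x.1)) / N := by
      rw [Finset.sum_sub_distrib]; simp; field_simp
    simp only [e]
    rw [abs_div, abs_of_pos hNpos]
    gcongr
    refine (Finset.abs_sum_le_sum_abs _ _).trans ?_
    exact Finset.sum_le_sum (fun k _ => iter_bound ft htr hB k x)
  · intro x
    have e : (∑ k ∈ Finset.range N, ((⇑ft)^[k] (ft x)).1) / N -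
        (∑ k ∈ Finset.range N, ((⇑ft)^[k] x).1) / N = (((⇑ft)^[N] x).1 - x.1) / N := by
      rw [← sub_div, ← Finset.sum_sub_distrib]
      congr 1
      have := Finset.sum_range_sub (fun k => ((⇑ft)^[k] x).1) N
      simpa using this
    simp only [e]
    exact hNe x
  · intro x
    simp only [hitr]
    simp only [tr]
    rw [Finset.sum_add_distrib]
    simp
    field_simp

lemma exists_g (ρ : ℝ) (hrot : rotSet ft = {ρ}) (ε : ℝ) (hε : 0 < ε) :
    ∃ (g : Strip → ℝ) (K : ℝ), Continuous g ∧ (∀ x, |g x - x.1| ≤ K) ∧ SupConn g ∧ SubConn g ∧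
      (∀ x, |g (ft x) - g x - ρ| ≤ ε) ∧ ∀ x, g (tr 1 x) = g x + 1 := by
  obtain ⟨h, K, hc, hK, hft, h1⟩ := exists_h ft htr ρ hrot ε hε
  obtain ⟨g, gc, gK, gsup, gsub, gs⟩ := regularize hc hK
  refine ⟨g, K, gc, gK, gsup, gsub, ?_, ?_⟩
  · exact gs ft ⟨ft.continuous, ⟨ft.symm, ft.symm.continuous, ft.apply_symm_apply,
      ft.symm_apply_apply⟩, disp_bound ft htr⟩ ρ ε hft
  · intro x
    have := gs (tr 1) ⟨tr_cont 1, ⟨tr (-1), tr_cont _, fun x => by rw [tr_tr]; simp [tr_zero],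
      fun x => by rw [tr_tr]; simp [tr_zero]⟩, 1, fun x => by simp [tr]⟩ 1 0
      (fun x => by rw [h1]; simp) x
    have := abs_nonpos_iff.mp this
    linarith

end

lemma between_core (G : Strip → ℝ) (hsup : SupConn G) (hsub : SubConn G) (m : ℕ) (hm : 2 ≤ m)
    (hT : ∀ (k : ℤ) x, G (tr k x) = G x + m * k) (j : ℤ) (c1 c2 c3 : unitInterval → Strip)
    (hc1 : JoinsBoundaryS c1) (hc2 : Continuous c2) (hc3 : JoinsBoundaryS c3)
    (h1 : ∀ t, |G (c1 t) - (j - 1)| < 1 / 4) (h2 : ∀ t, |G (c2 t) - j| < 1 / 2)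
    (h3 : ∀ t, |G (c3 t) - (j + 1)| < 1 / 4) (h13 : m = 2 → pA ∘ c1 = pA ∘ c3) :
    StrictlyBetween (pA ∘ c1) (pA ∘ c2) (pA ∘ c3) := by
  refine ⟨c1, c2, ⟨hc1.1, rfl⟩, ⟨hc2, rfl⟩, ?_, ?_⟩
  · rintro _ ⟨t, rfl⟩
    obtain ⟨S, hS, hx, hR, hG⟩ := hsup (j - 1 / 2) (c2 t) (by linarith [(abs_lt.mp (h2 t)).1])
    exact onRight_of_set c1 hc1.1 S hS _ hx hR (fun t' ht' => by
      linarith [hG _ ht', (abs_lt.mp (h1 t')).2])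
  · intro c3' ⟨hc3', hl⟩ hright
    obtain ⟨k, hk⟩ := lift_unique c3 c3' hc3.1 hc3' (fun t => (congrFun hl t).symm)
    have hG3 : ∀ t, |G (c3' t) - (j + 1 + m * k)| < 1 / 4 := by
      intro t
      rw [hk, hT]
      convert h3 t using 2
      ring
    have hmR : (2:ℝ) ≤ m := by exact_mod_cast hm
    rcases le_or_gt 0 k with hk0 | hk0
    · have hmk : (0:ℝ) ≤ m * k := mul_nonneg (by linarith) (by exact_mod_cast hk0)
      rintro _ ⟨t, rfl⟩
      obtain ⟨S, hS, hx, hR, hG⟩ := hsub (j + 1 / 2) (c2 t) (by linarith [(abs_lt.mp (h2 t)).2])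
      exact onLeft_of_set c3' hc3' S hS _ hx hR (fun t' ht' => by
        linarith [hG _ ht', (abs_lt.mp (hG3 t')).1])
    · exfalso
      have hr := hright (c3' 0) ⟨0, rfl⟩
      rcases eq_or_ne ((m:ℤ) * k) (-2) with he | he
      · have hm2 : m = 2 := by
          have : (m:ℤ) ≤ 2 := by nlinarith
          omega
        have heR : (m:ℝ) * k = -2 := by exact_mod_cast he
        have e13 := h13 hm2
        obtain ⟨k', hk'⟩ := lift_unique c1 c3' hc1.1 hc3' (fun t => by
          have a := congrFun hl t
          have b := congrFun e13 t
          simp only [Function.comp] at a b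
          rw [a, b])
        have a1 := abs_lt.mp (hG3 0)
        have a2 := abs_lt.mp (h1 0)
        rw [hk', hT] at a1
        have hk'0 : k' = 0 := by
          have b1 : (m:ℝ) * k' < 1 := by linarith [a1.2, a2.1]
          have b2 : -1 < (m:ℝ) * k' := by linarith [a1.1, a2.2]
          have b1' : (m:ℤ) * k' < 1 := by exact_mod_cast b1
          have b2' : -1 < (m:ℤ) * k' := by exact_mod_cast b2
          have : (m:ℤ) * k' = 0 := by omega
          rcases mul_eq_zero.mp this with h | h
          · omega
          · exact h
        obtain ⟨q, hq, hcc⟩ := hr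
        apply connectedComponentIn_subset _ _ hcc
        refine ⟨0, ?_⟩
        rw [hk', hk'0, Int.cast_zero, tr_zero]
      · have hlt : (m:ℤ) * k ≤ -3 := by
          have : (m:ℤ) * k ≤ -2 := by nlinarith
          omega
        have hltR : (m:ℝ) * k ≤ -3 := by exact_mod_cast hlt
        obtain ⟨S, hS, hx, hR, hG⟩ := hsub (j - 3 / 2) (c3' 0)
          (by linarith [(abs_lt.mp (hG3 0)).2])
        exact not_right_left c1 hc1 _ hr (onLeft_of_set c1 hc1.1 S hS _ hx hR (fun t' ht' => by
          linarith [hG _ ht', (abs_lt.mp (h1 t')).1]))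

/-- **Proposition.** Let `f ∈ Homeo₀(𝔸)` have a lift with rotation set `{p/q}`, where
either `q > 0`, `0 < p < q` and `p, q` are coprime, or `p = 0` and `q = 1`. Then for
every integer `n > 1` there is a family `(γ_i)_{i ∈ ℤ/nqℤ}` of pairwise disjoint simple
curves joining the two boundary components of the annulus such that, for every `i`, the
curve `γ_i` lies strictly between `γ_{i-1}` and `γ_{i+1}`, and the curve `f(γ_i)` lies
strictly between `γ_{i+np-1}` and `γ_{i+np+1}`. -/
theorem vertical_curves_of_rational_pseudoRotation
    (f : Annulus ≃ₜ Annulus) (hf : IsotopicToId f)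
    (ft : Strip ≃ₜ Strip) (hlift : IsLiftA f ft)
    (p q : ℕ) (hpq : (0 < p ∧ p < q ∧ Nat.Coprime p q) ∨ (p = 0 ∧ q = 1))
    (hrot : rotSet ft = {(p : ℝ) / (q : ℝ)})
    (n : ℕ) (hn : 1 < n) :
    ∃ γ : ZMod (n * q) → unitInterval → Annulus,
      (∀ i, JoinsBoundaryA (γ i)) ∧
      (∀ i j, i ≠ j → Disjoint (Set.range (γ i)) (Set.range (γ j))) ∧
      ∀ i : ZMod (n * q),
        StrictlyBetween (γ (i - 1)) (γ i) (γ (i + 1)) ∧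
        StrictlyBetween (γ (i + (n * p : ℕ) - 1)) (fun t => f (γ i t))
          (γ (i + (n * p : ℕ) + 1)) := by
  have hq : 0 < q := by omega
  have hm : 2 ≤ n * q := by nlinarith
  have htr := lift_commutes f ft hlift _ hrot
  set m := n * q with hmdef
  have hmR : (0:ℝ) < m := by exact_mod_cast (by omega : 0 < m)
  have : NeZero m := ⟨by omega⟩
  obtain ⟨g, K, gc, gK, gsup, gsub, gft, g1⟩ := exists_g ft htr _ hrot (1 / (4 * m)) (by positivity)
  have gT : ∀ (k : ℤ) x, g (tr k x) = g x + k := by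
    intro k
    induction k using Int.induction_on with
    | zero => intro x; simp [tr_zero]
    | succ i ih =>
      intro x
      push_cast
      rw [← tr_tr, g1]
      have := ih x
      push_cast at this
      rw [this]; ring
    | pred i ih =>
      intro x
      have h1 := g1 (tr ((-(i:ℤ) - 1 : ℤ) : ℝ) x)
      rw [tr_tr] at h1
      have h2 := ih x
      have e : (((-(i:ℤ) - 1 : ℤ) : ℝ) + 1) = ((-(i:ℤ) : ℤ) : ℝ) := by push_cast; ring
      rw [e, h2] at h1
      push_cast at h1 ⊢
      linarith
  let G : Strip → ℝ := fun x => m * g x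
  have hT : ∀ (k : ℤ) x, G (tr k x) = G x + m * k := by
    intro k x; simp only [G, gT]; ring
  have hsup : SupConn G := by
    intro c x hx
    obtain ⟨S, hS, hx, hR, hG⟩ := gsup (c / m) x (by
      rw [div_lt_iff₀ hmR, mul_comm]; exact hx)
    refine ⟨S, hS, hx, hR, fun y hy => ?_⟩
    have := hG y hy
    rw [div_lt_iff₀ hmR, mul_comm] at this; exact this
  have hsub : SubConn G := by
    intro c x hx
    obtain ⟨S, hS, hx, hR, hG⟩ := gsub (c / m) x (by
      rw [lt_div_iff₀ hmR, mul_comm]; exact hx)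
    refine ⟨S, hS, hx, hR, fun y hy => ?_⟩
    have := hG y hy
    rw [lt_div_iff₀ hmR, mul_comm] at this; exact this
  have hGf : ∀ x, |G (ft x) - G x - (n * p : ℕ)| ≤ 1 / 4 := by
    intro x
    have h1 := gft x
    have e : G (ft x) - G x - (n * p : ℕ) = m * (g (ft x) - g x - p / q) := by
      have hqR : (q:ℝ) ≠ 0 := by exact_mod_cast hq.ne'
      simp only [G, hmdef]; push_cast; field_simp
    rw [e, abs_mul, abs_of_pos hmR]
    calc (m:ℝ) * |g (ft x) - g x - p / q| ≤ m * (1 / (4 * m)) := by gcongr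
      _ = 1 / 4 := by field_simp
  have hex : ∀ i : ZMod m, ∃ c : unitInterval → Strip, JoinsBoundaryS c ∧
      ∀ t, |G (c t) - i.val| < 1 / 4 := by
    intro i
    obtain ⟨c, hc, hcu⟩ := exists_curve (fun x => g x - i.val / m) (by fun_prop)
      (K + |(i.val : ℝ) / m|) (fun x => by
        have : g x - i.val / m - x.1 = (g x - x.1) - i.val / m := by ring
        rw [this]
        exact (abs_sub _ _).trans (by gcongr; exact gK x)) (1 / (4 * m)) (by positivity)
    refine ⟨c, hc, fun t => ?_⟩
    have e : G (c t) - i.val = m * (g (c t) - i.val / m) := by simp only [G]; field_simp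
    rw [e, abs_mul, abs_of_pos hmR]
    calc (m:ℝ) * |g (c t) - i.val / m| < m * (1 / (4 * m)) := by gcongr; exact hcu t
      _ = 1 / 4 := by field_simp
  choose c hcJ hcG using hex
  have hlev : ∀ (i j : ZMod m) (s t : unitInterval), pA (c i s) = pA (c j t) →
      i = j ∧ c i s = c j t := by
    intro i j s t h
    obtain ⟨k, hk⟩ := pA_eq h
    have h1 := abs_lt.mp (hcG i s)
    have h2 := abs_lt.mp (hcG j t)
    rw [hk, hT] at h2
    have b1 : ((j.val:ℝ)) - i.val - m * k < 1 := by linarith [h1.1, h1.2, h2.1, h2.2]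
    have b2 : -1 < ((j.val:ℝ)) - i.val - m * k := by linarith [h1.1, h1.2, h2.1, h2.2]
    have b1' : ((j.val:ℤ)) - i.val - m * k < 1 := by exact_mod_cast b1
    have b2' : -1 < ((j.val:ℤ)) - i.val - m * k := by exact_mod_cast b2
    have e : (j.val:ℤ) - i.val = m * k := by omega
    have l1 := ZMod.val_lt i
    have l2 := ZMod.val_lt j
    have hk0 : k = 0 := by
      by_contra hne
      rcases lt_or_gt_of_ne hne with h | h
      · have : (m:ℤ) * k ≤ -m := by nlinarith
        omega
      · have : (m:ℤ) ≤ m * k := by nlinarith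
        omega
    subst hk0
    refine ⟨ZMod.val_injective m (by omega), ?_⟩
    rw [hk, Int.cast_zero, tr_zero]
  let γ : ZMod m → unitInterval → Annulus := fun i => pA ∘ c i
  have hct : ∀ z : ℤ, ∃ ct : unitInterval → Strip, JoinsBoundaryS ct ∧ pA ∘ ct = γ (z : ZMod m) ∧
      ∀ t, |G (ct t) - z| < 1 / 4 := by
    intro z
    have hz : ((z : ZMod m).val : ℤ) = z % m := ZMod.val_intCast z
    have hz2 : z = ((z : ZMod m).val : ℤ) + m * (z / m) := by
      rw [hz]; exact (Int.emod_add_mul_ediv z m).symm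
    obtain ⟨a1, a2, a3, a4, a5⟩ := hcJ (z : ZMod m)
    refine ⟨fun t => tr ((z / m : ℤ) : ℝ) (c z t), ⟨(tr_cont _).comp a1, ?_, a3, a4, a5⟩, ?_, ?_⟩
    · intro s t h
      apply a2
      have h := congrArg (tr (-((z / m : ℤ) : ℝ))) h
      simpa only [tr_tr, add_neg_cancel, tr_zero] using h
    · funext t; exact pA_tr _ _
    · intro t
      have := hcG (z : ZMod m) t
      rw [hT]
      convert this using 2
      have hz3 : (z:ℝ) = ((z : ZMod m).val : ℝ) + m * ((z / m : ℤ) : ℝ) := by exact_mod_cast hz2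
      linarith
  have h2eq : ∀ z : ℤ, m = 2 → γ ((z - 1 : ℤ) : ZMod m) = γ ((z + 1 : ℤ) : ZMod m) := by
    intro z h
    congr 1
    rw [ZMod.intCast_eq_intCast_iff_dvd_sub, h]
    exact ⟨1, by push_cast; ring⟩
  refine ⟨γ, ?_, ?_, ?_⟩
  · intro i
    obtain ⟨a1, a2, a3, a4, a5⟩ := hcJ i
    exact ⟨pA_cont.comp a1, fun s t h => a2 (hlev i i s t h).2, a3, a4, a5⟩
  · intro i j hij
    rw [Set.disjoint_left]
    rintro _ ⟨s, rfl⟩ ⟨t, ht⟩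
    exact hij (hlev i j s t ht.symm).1
  · intro i
    have hi : i = (((i.val : ℤ)) : ZMod m) := by simp
    constructor
    · obtain ⟨c1, J1, e1, l1⟩ := hct ((i.val : ℤ) - 1)
      obtain ⟨c2, J2, e2, l2⟩ := hct (i.val : ℤ)
      obtain ⟨c3, J3, e3, l3⟩ := hct ((i.val : ℤ) + 1)
      have := between_core G hsup hsub m hm hT (i.val : ℤ) c1 c2 c3 J1 J2.1 J3
        (by intro t; have := l1 t; push_cast at this ⊢; exact this)
        (by intro t; exact (l2 t).trans (by norm_num))
        (by intro t; have := l3 t; push_cast at this ⊢; exact this)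
        (fun h => by rw [e1, e3]; exact h2eq _ h)
      rw [e1, e2, e3] at this
      push_cast at this
      simpa using this
    · obtain ⟨c1, J1, e1, l1⟩ := hct ((i.val : ℤ) + (n * p : ℕ) - 1)
      obtain ⟨c3, J3, e3, l3⟩ := hct ((i.val : ℤ) + (n * p : ℕ) + 1)
      have := between_core G hsup hsub m hm hT ((i.val : ℤ) + (n * p : ℕ)) c1 (fun t => ft (c i t))
        c3 J1 (ft.continuous.comp (hcJ i).1) J3
        (by intro t; have := l1 t; push_cast at this ⊢; exact this)
        (by
          intro t
          have a := abs_le.mp (hGf (c i t))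
          have b := abs_lt.mp (hcG i t)
          push_cast at a ⊢
          rw [abs_lt]; constructor <;> linarith [a.1, a.2, b.1, b.2])
        (by intro t; have := l3 t; push_cast at this ⊢; exact this)
        (fun h => by rw [e1, e3]; exact h2eq _ h)
      have e2 : (pA ∘ fun t => ft (c i t)) = fun t => f (γ i t) := by
        funext t; exact congrFun hlift (c i t)
      rw [e1, e2, e3] at this
      push_cast at this ⊢
      simpa using this
end
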